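/- Every continuous self-map of the 2-sphere is realizable in ℝ⁴: for every continuous map f : S² → S² and every ε > 0 there exists a continuous injective map g : S² → ℝ³ × ℝ such that dist(g(x), ι(f(x))) < ε for all x ∈ S², where ι : S² → ℝ³ × ℝ is given by ι(y) = (y, 0). (Since S² is compact, such a g is automatically a topological embedding.) -/

import Mathlib

/-!
Perturb `f` to a map `K` to the sphere whose third coordinate `c` is a height function on a fine
subdivision of the surface: affine on the barycentric triangles (flags), high on the faces, low on
the vertices, with one saddle on each edge and all saddles at different heights. A regular level set
of `c` is a union of circles, the cycles of a permutation of the flags, and at each saddle this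
permutation changes by a transposition, which merges two cycles or splits one.

The level sets can therefore be drawn in the plane, continuously in the level. Every set of flags
gets a home in the plane, and far from saddles each level circle is the unit circle around the home
of its cycle, filled in by a disc near the extrema of `c`. Near a saddle, the circles involved move
from their homes to a figure eight and from there to the homes of the new cycles; the homes are in
such convex position that this motion avoids all other circles.

This gives a map `H` to `ℂ` for which `(c, H)`, and hence `(K, H)`, is injective. As `K` has values
in the unit sphere, `g = ((1 + η Re H) K, η Im H)` is injective for small `η`, and close to
`(f, 0)`.
-/

open Function Set Relation
open scoped Real

/-! ### Homes for circles in the plane -/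

section Homes

variable {ι : Type*}

/-- Points of the plane, each at distance more than three from the convex hull of the others: they
serve as homes of round unit circles. A curve which stays within distance two of the hull of some
homes then avoids the unit discs around the remaining homes. -/
def WidelySeparated (h : ι → ℂ) : Prop :=
  ∀ i, ∀ z ∈ convexHull ℝ (h '' {i}ᶜ), 3 < ‖z - h i‖

lemma WidelySeparated.lt_norm_sub {h : ι → ℂ} (H : WidelySeparated h) {i j : ι} (hij : i ≠ j) :
    3 < ‖h i - h j‖ :=
  H j _ (subset_convexHull ℝ _ (mem_image_of_mem h hij))

lemma WidelySeparated.one_lt_norm_add_sub {h : ι → ℂ} (H : WidelySeparated h) {i : ι} {z p : ℂ}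
    (hz : z ∈ convexHull ℝ (h '' {i}ᶜ)) (hp : ‖p‖ ≤ 2) : 1 < ‖z + p - h i‖ := by
  have htriangle := norm_sub_le (z + p - h i) p
  rw [show z + p - h i - p = z - h i by ring] at htriangle
  linarith [H i z hz]

-- The points `(k, k²)`, suitably rescaled: the tangent of the parabola at one of them separates it
-- from the others.
lemma exists_widelySeparated (ι : Type*) [Finite ι] : ∃ h : ι → ℂ, WidelySeparated h := by
  obtain ⟨n, ⟨e⟩⟩ := Finite.exists_equiv_fin ι
  let k : ι → ℝ := fun i => (e i : ℕ)
  let K : ℝ := 3 * (2 * n + 1) + 1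
  have hK : 0 < K := by positivity
  refine ⟨fun i => ⟨K * k i, K * k i ^ 2⟩, fun i z hz => ?_⟩
  let φ : ℂ → ℝ := fun z => z.im - 2 * k i * z.re
  have hφ : IsLinearMap ℝ φ :=
    ⟨fun x y => by simp only [φ, Complex.add_im, Complex.add_re]; ring,
      fun c x => by simp only [φ, Complex.smul_im, Complex.smul_re, smul_eq_mul]; ring⟩
  have hsep : K ≤ φ z + K * k i ^ 2 := by
    suffices z ∈ {z | K - K * k i ^ 2 ≤ φ z} by linarith [this.out]
    refine convexHull_min ?_ (convex_halfSpace_ge hφ _) hz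
    rintro _ ⟨j, hj, rfl⟩
    have hne : (1 : ℝ) ≤ (k j - k i) ^ 2 := by
      have hji : ((e j : ℕ) : ℤ) - (e i : ℕ) ≠ 0 := fun h => hj (e.injective (Fin.ext (by lia)))
      have hsq : (0 : ℤ) < (((e j : ℕ) : ℤ) - (e i : ℕ)) ^ 2 := sq_pos_of_ne_zero hji
      simpa [k] using (Int.cast_le (R := ℝ)).2 (Int.add_one_le_iff.2 hsq)
    simp only [φ, mem_ofPred_eq]
    nlinarith
  have hi : |k i| ≤ n := by
    rw [abs_of_nonneg (Nat.cast_nonneg _)]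
    exact Nat.cast_le.2 (e i).2.le
  have hlip : φ z + K * k i ^ 2 ≤ (2 * n + 1) * ‖z - ⟨K * k i, K * k i ^ 2⟩‖ := by
    have hre := Complex.abs_re_le_norm (z - ⟨K * k i, K * k i ^ 2⟩)
    have him := Complex.abs_im_le_norm (z - ⟨K * k i, K * k i ^ 2⟩)
    have hmul : |k i * (z.re - K * k i)| ≤ n * ‖z - ⟨K * k i, K * k i ^ 2⟩‖ := by
      rw [abs_mul]
      exact mul_le_mul hi hre (abs_nonneg _) (Nat.cast_nonneg _)
    rw [Complex.sub_im] at him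
    calc φ z + K * k i ^ 2 = (z.im - K * k i ^ 2) - 2 * (k i * (z.re - K * k i)) := by
          simp only [φ]; ring
      _ ≤ (2 * n + 1) * ‖z - ⟨K * k i, K * k i ^ 2⟩‖ := by
          linarith [le_abs_self (z.im - K * k i ^ 2), neg_abs_le (k i * (z.re - K * k i))]
  by_contra! hle
  nlinarith [mul_le_mul_of_nonneg_left hle (by positivity : (0 : ℝ) ≤ 2 * n + 1)]

end Homes

section Loops

variable {α : Type*}

/-- The curve `c` does not meet itself on `[0, L]`, except possibly at the two ends. -/
def IsInjectiveLoop (c : ℝ → α) (L : ℝ) : Prop :=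
  ∀ t ∈ Icc 0 L, ∀ t' ∈ Icc 0 L, t < t' → c t = c t' → t = 0 ∧ t' = L

lemma isInjectiveLoop_polar {r Θ : ℝ → ℝ} {L : ℝ} (hr : ∀ t, 0 < r t) (hΘ : StrictMono Θ)
    (hL : Θ L = Θ 0 + 2 * π) : IsInjectiveLoop (fun t => (r t : ℂ) * Circle.exp (Θ t)) L := by
  intro t ht t' ht' htt h
  have hnorm : r t = r t' := by
    simpa only [norm_mul, Complex.norm_real, Circle.norm_coe, mul_one, Real.norm_eq_abs,
      abs_of_pos (hr _)] using congrArg norm h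
  have hexp : Circle.exp (Θ t') = Circle.exp (Θ t) := by
    simp only [hnorm] at h
    exact Circle.ext (mul_left_cancel₀ (by exact_mod_cast (hr t').ne') h).symm
  obtain ⟨n, hn⟩ := Circle.exp_eq_exp.1 hexp
  have hpos := hΘ htt
  have h0 := hΘ.monotone ht.1
  have h1 := hΘ.monotone ht'.2
  have hn0 : 0 < n := by
    have : (0 : ℝ) < n := by nlinarith [Real.pi_pos]
    exact_mod_cast this
  have hn1 : (1 : ℝ) ≤ n := by exact_mod_cast hn0
  have hwind : 2 * π ≤ n * (2 * π) := le_mul_of_one_le_left Real.two_pi_pos.le hn1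
  exact ⟨hΘ.injective (by linarith), hΘ.injective (by linarith)⟩

end Loops

/-! ### Cycles of a permutation as glued circles -/

section Cycles

variable {Φ : Type*} {γ δ : Equiv.Perm Φ} {ω ω' : Φ}

/-- A circle for every cycle of a permutation is obtained from one copy of the unit interval for
every `ω` by gluing the end of the interval of `ω` to the beginning of that of `γ ω`. -/
def CircleGlue (γ : Equiv.Perm Φ) (p p' : Φ × ℝ) : Prop :=
  p.2 = 1 ∧ p'.2 = 0 ∧ p'.1 = γ p.1

lemma eqvGen_circleGlue_of_isInjectiveLoop {α : Type*} {c : ℝ → α} {L : ℕ}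
    (hc : IsInjectiveLoop c L) {a : Φ} (hL : γ^[L] a = a) {j j' : ℕ} (hj : j < L) (hj' : j' < L)
    {v v' : ℝ} (hv : v ∈ Icc (0 : ℝ) 1) (hv' : v' ∈ Icc (0 : ℝ) 1) (h : c (j + v) = c (j' + v')) :
    EqvGen (CircleGlue γ) (γ^[j] a, v) (γ^[j'] a, v') := by
  wlog hle : j + v ≤ j' + v' generalizing j j' v v'
  · exact (this hj' hj hv' hv h.symm (le_of_not_ge hle)).symm
  have hglue (i : ℕ) : EqvGen (CircleGlue γ) (γ^[i] a, 1) (γ^[i + 1] a, 0) :=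
    .rel _ _ ⟨rfl, rfl, iterate_succ_apply' _ _ _⟩
  have hmem {i : ℕ} (hi : i < L) {u : ℝ} (hu : u ∈ Icc (0 : ℝ) 1) :
      (i : ℝ) + u ∈ Icc 0 (L : ℝ) := by
    have : (i : ℝ) + 1 ≤ L := by exact_mod_cast hi
    exact ⟨add_nonneg (Nat.cast_nonneg _) hu.1, by linarith [hu.2]⟩
  have hnext {i i' : ℕ} (hii : i < i') {u u' : ℝ} (hu : u ≤ 1) (hu' : 0 ≤ u')
      (heq : (i' : ℝ) + u' ≤ i + u) : i' = i + 1 ∧ u = 1 ∧ u' = 0 := by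
    have hcast : (i : ℝ) + 1 ≤ i' := by exact_mod_cast hii
    have : (i' : ℝ) = i + 1 := by linarith
    exact ⟨by exact_mod_cast this, by linarith, by linarith⟩
  rcases hle.lt_or_eq with hlt | heq
  · obtain ⟨h0, h1⟩ := hc _ (hmem hj hv) _ (hmem hj' hv') hlt h
    have hj0 : (j : ℝ) = 0 := by linarith [hv.1, (Nat.cast_nonneg j : (0 : ℝ) ≤ j)]
    obtain ⟨hLj, rfl, -⟩ := hnext hj' hv'.2 le_rfl (by rw [h1, add_zero])
    obtain rfl : j = 0 := by exact_mod_cast hj0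
    obtain rfl : v = 0 := by simpa using h0
    simpa only [iterate_zero, id_eq, ← hLj, hL] using (hglue j').symm
  · rcases lt_trichotomy j j' with hlt | rfl | hlt
    · obtain ⟨rfl, rfl, rfl⟩ := hnext hlt hv.2 hv'.1 heq.ge
      exact hglue j
    · obtain rfl : v = v' := by linarith
      exact .refl _
    · obtain ⟨rfl, rfl, rfl⟩ := hnext hlt hv'.2 hv.1 heq.le
      exact (hglue j').symm

/-- The cycle of a permutation through a point, as a set, so that cycles of different permutations
can be compared. -/
def cycleSet (γ : Equiv.Perm Φ) (ω : Φ) : Set Φ := {x | γ.SameCycle ω x}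

lemma cycleSet_nonempty (γ : Equiv.Perm Φ) (ω : Φ) : (cycleSet γ ω).Nonempty :=
  ⟨ω, .refl γ ω⟩

lemma cycleSet_eq_iff : cycleSet γ ω = cycleSet γ ω' ↔ γ.SameCycle ω ω' :=
  ⟨fun h => (h ▸ Equiv.Perm.SameCycle.refl γ ω' : ω' ∈ cycleSet γ ω),
    fun h => ext fun _ => ⟨h.symm.trans, h.trans⟩⟩

/-- A point of the cycle which depends only on the cycle as a set. -/
noncomputable def cycleBase (γ : Equiv.Perm Φ) (ω : Φ) : Φ := (cycleSet_nonempty γ ω).some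

lemma cycleBase_congr (h : cycleSet γ ω = cycleSet δ ω') : cycleBase γ ω = cycleBase δ ω' := by
  unfold cycleBase
  congr!

lemma sameCycle_cycleBase (γ : Equiv.Perm Φ) (ω : Φ) : γ.SameCycle ω (cycleBase γ ω) :=
  (cycleSet_nonempty γ ω).some_mem

/-- The number of steps which a permutation takes from `a` to `ω`; zero if `ω` is not reached. -/
noncomputable def stepsFrom (γ : Equiv.Perm Φ) (a ω : Φ) : ℕ := sInf {n | γ^[n] a = ω}

/-- The parametrization of a cycle, made into a circle by gluing intervals, by the unit circle. -/
noncomputable def homeDir (γ : Equiv.Perm Φ) (ω : Φ) (v : ℝ) : Circle :=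
  Circle.exp (2 * π * (stepsFrom γ (cycleBase γ ω) ω + v) / minimalPeriod γ ω)

variable [Finite Φ]

lemma sameCycle_iff_exists_iterate : γ.SameCycle ω ω' ↔ ∃ n, γ^[n] ω = ω' := by
  refine ⟨fun h => ?_, ?_⟩
  · simpa only [Equiv.Perm.iterate_eq_pow] using h.exists_nat_pow_eq
  · rintro ⟨n, rfl⟩
    rw [Equiv.Perm.iterate_eq_pow]
    exact Equiv.Perm.sameCycle_pow_right.2 (.refl _ _)

lemma sameCycle_iterate (γ : Equiv.Perm Φ) (ω : Φ) (n : ℕ) : γ.SameCycle ω (γ^[n] ω) :=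
  sameCycle_iff_exists_iterate.2 ⟨n, rfl⟩

lemma minimalPeriod_perm_pos (γ : Equiv.Perm Φ) (ω : Φ) : 0 < minimalPeriod γ ω :=
  minimalPeriod_pos_of_mem_periodicPts (γ.injective.mem_periodicPts ω)

lemma minimalPeriod_eq_of_sameCycle (h : γ.SameCycle ω ω') :
    minimalPeriod γ ω' = minimalPeriod γ ω := by
  obtain ⟨n, rfl⟩ := sameCycle_iff_exists_iterate.1 h
  exact minimalPeriod_apply_iterate (γ.injective.mem_periodicPts ω) n

lemma exists_lt_minimalPeriod_iterate_eq (h : γ.SameCycle ω ω') :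
    ∃ j < minimalPeriod γ ω, γ^[j] ω = ω' := by
  obtain ⟨n, rfl⟩ := sameCycle_iff_exists_iterate.1 h
  exact ⟨_, Nat.mod_lt _ (minimalPeriod_perm_pos γ ω), iterate_mod_minimalPeriod_eq⟩

lemma modEq_of_iterate_eq {m n : ℕ} (h : γ^[m] ω = γ^[n] ω) : m ≡ n [MOD minimalPeriod γ ω] := by
  have hpos := minimalPeriod_perm_pos γ ω
  refine iterate_injOn_Iio_minimalPeriod (Nat.mod_lt _ hpos) (Nat.mod_lt _ hpos) ?_
  simpa only [iterate_mod_minimalPeriod_eq] using h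

lemma iterate_stepsFrom (h : γ.SameCycle ω ω') : γ^[stepsFrom γ ω ω'] ω = ω' :=
  Nat.sInf_mem (s := {n | γ^[n] ω = ω'}) (sameCycle_iff_exists_iterate.1 h)

lemma stepsFrom_lt (h : γ.SameCycle ω ω') : stepsFrom γ ω ω' < minimalPeriod γ ω := by
  obtain ⟨j, hj, hjω⟩ := exists_lt_minimalPeriod_iterate_eq h
  exact (Nat.sInf_le hjω).trans_lt hj

lemma stepsFrom_iterate {j : ℕ} (hj : j < minimalPeriod γ ω) : stepsFrom γ ω (γ^[j] ω) = j := by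
  have h := sameCycle_iterate γ ω j
  exact (iterate_eq_iterate_iff_of_lt_minimalPeriod (stepsFrom_lt h) hj).1 (iterate_stepsFrom h)

lemma homeDir_iterate (γ : Equiv.Perm Φ) (ω : Φ) (j : ℕ) (v : ℝ) :
    homeDir γ (γ^[j] ω) v
      = homeDir γ ω 0 * Circle.exp (2 * π * (j + v) / minimalPeriod γ ω) := by
  have hs := sameCycle_iterate γ ω j
  have hbase : cycleBase γ (γ^[j] ω) = cycleBase γ ω := cycleBase_congr (cycleSet_eq_iff.2 hs.symm)
  have hiter : γ^[stepsFrom γ (cycleBase γ ω) (γ^[j] ω)] (cycleBase γ ω)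
      = γ^[j + stepsFrom γ (cycleBase γ ω) ω] (cycleBase γ ω) := by
    have hω := (sameCycle_cycleBase γ ω).symm
    rw [iterate_add_apply, iterate_stepsFrom hω, iterate_stepsFrom (hω.trans hs)]
  have hmod := modEq_of_iterate_eq hiter
  rw [minimalPeriod_eq_of_sameCycle (sameCycle_cycleBase γ ω)] at hmod
  obtain ⟨z, hz⟩ := Nat.modEq_iff_dvd.1 hmod.symm
  have hL : (minimalPeriod γ ω : ℝ) ≠ 0 := by exact_mod_cast (minimalPeriod_perm_pos γ ω).ne'
  have hz' : (stepsFrom γ (cycleBase γ ω) (γ^[j] ω) : ℝ)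
      = j + stepsFrom γ (cycleBase γ ω) ω + minimalPeriod γ ω * z := by
    have : (stepsFrom γ (cycleBase γ ω) (γ^[j] ω) : ℤ)
        = (j + stepsFrom γ (cycleBase γ ω) ω : ℕ) + minimalPeriod γ ω * z := by linarith
    exact_mod_cast this
  unfold homeDir
  rw [minimalPeriod_eq_of_sameCycle hs, ← Circle.exp_add, Circle.exp_eq_exp, hbase, hz']
  exact ⟨z, by field_simp; ring⟩

lemma homeDir_glue (γ : Equiv.Perm Φ) (ω : Φ) : homeDir γ ω 1 = homeDir γ (γ ω) 0 := by
  have h0 := homeDir_iterate γ ω 0 1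
  have h1 := homeDir_iterate γ ω 1 0
  simp only [iterate_zero, id_eq, iterate_one, Nat.cast_zero, zero_add, Nat.cast_one,
    add_zero] at h0 h1
  rw [h0, h1]

lemma eqvGen_circleGlue_of_homeDir_eq (hs : γ.SameCycle ω ω') {v v' : ℝ}
    (hv : v ∈ Icc (0 : ℝ) 1) (hv' : v' ∈ Icc (0 : ℝ) 1) (h : homeDir γ ω v = homeDir γ ω' v') :
    EqvGen (CircleGlue γ) (ω, v) (ω', v') := by
  obtain ⟨j, hj, rfl⟩ := exists_lt_minimalPeriod_iterate_eq hs
  have hpos := minimalPeriod_perm_pos γ ω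
  have hLpos : (0 : ℝ) < minimalPeriod γ ω := by exact_mod_cast hpos
  have hloop : IsInjectiveLoop
      (fun t => ((1 : ℝ) : ℂ) * Circle.exp (2 * π * t / minimalPeriod γ ω))
        (minimalPeriod γ ω) := by
    refine isInjectiveLoop_polar (r := fun _ => 1) (fun _ => one_pos) (fun t t' htt => ?_) ?_
    · gcongr
    · field_simp
      simp
  refine eqvGen_circleGlue_of_isInjectiveLoop hloop (a := ω) (j := 0) iterate_minimalPeriod hpos hj
    hv hv' ?_
  have h0 := homeDir_iterate γ ω 0 v
  rw [iterate_zero, id_eq] at h0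
  rw [homeDir_iterate, h0] at h
  simp only [mul_left_cancel h]

lemma cycleSet_congr (h : ∀ n, γ^[n] ω = δ^[n] ω) : cycleSet γ ω = cycleSet δ ω := by
  ext x
  simp only [cycleSet, mem_ofPred_eq, sameCycle_iff_exists_iterate, h]

lemma homeDir_congr (h : ∀ n, γ^[n] ω = δ^[n] ω) : homeDir γ ω = homeDir δ ω := by
  have hbase := cycleBase_congr (cycleSet_congr h)
  have hiter (n : ℕ) : γ^[n] (cycleBase γ ω) = δ^[n] (cycleBase γ ω) := by
    obtain ⟨m, hm⟩ := sameCycle_iff_exists_iterate.1 (sameCycle_cycleBase γ ω)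
    rw [← hm, ← iterate_add_apply, h, iterate_add_apply, h]
  have hindex : stepsFrom γ (cycleBase γ ω) ω = stepsFrom δ (cycleBase δ ω) ω := by
    simp only [stepsFrom, hiter, ← hbase]
  have hperiod : minimalPeriod γ ω = minimalPeriod δ ω :=
    minimalPeriod_eq_minimalPeriod_iff.2 fun n => by
      simp only [IsPeriodicPt, IsFixedPt, h]
  unfold homeDir
  rw [hindex, hperiod]

end Cycles

/-! ### Passing a saddle: from a figure eight to one or two round circles -/

section StarCurves

lemma eq_of_sub_eq_two_mul {u u' w : ℂ} (hu : ‖u‖ = 1) (hu' : ‖u'‖ = 1) (hw : ‖w‖ = 1)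
    (h : u' - u = 2 * w) : u' = w ∧ u = -w := by
  have hpar := parallelogram_law_with_norm ℝ w (u' - w)
  rw [add_sub_cancel, show w - (u' - w) = -u by linear_combination -h, norm_neg, hu, hu', hw]
    at hpar
  have hnorm : ‖u' - w‖ = 0 := by nlinarith
  obtain rfl : u' = w := sub_eq_zero.1 (norm_eq_zero.1 hnorm)
  exact ⟨rfl, by linear_combination -h⟩

/-- The polar angle along a figure eight, two tangent unit circles traversed one after the other in
times `L₁` and `L₂`, seen from the point of tangency. -/
noncomputable def eightAngle (L₁ L₂ t : ℝ) : ℝ :=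
  -(π / 2) + π * min t L₁ / L₁ + π * max (t - L₁) 0 / L₂

variable {L₁ L₂ : ℝ}

lemma eightAngle_of_le {t : ℝ} (h : t ≤ L₁) : eightAngle L₁ L₂ t = -(π / 2) + π * t / L₁ := by
  rw [eightAngle, min_eq_left h, max_eq_right (by linarith)]
  ring

lemma eightAngle_of_ge (hL : 0 < L₁) {t : ℝ} (h : L₁ ≤ t) :
    eightAngle L₁ L₂ t = π / 2 + π * (t - L₁) / L₂ := by
  rw [eightAngle, min_eq_right h, max_eq_left (by linarith)]
  field_simp
  ring

lemma eightAngle_add (h₁ : 0 < L₁) (h₂ : 0 < L₂) :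
    eightAngle L₁ L₂ (L₁ + L₂) = eightAngle L₁ L₂ 0 + 2 * π := by
  rw [eightAngle_of_ge h₁ (by linarith), eightAngle_of_le h₁.le]
  field_simp
  ring

lemma strictMono_eightAngle (h₁ : 0 < L₁) (h₂ : 0 < L₂) : StrictMono (eightAngle L₁ L₂) := by
  have hle : StrictMonoOn (eightAngle L₁ L₂) (Iic L₁) := fun t _ t' ht' htt => by
    rw [eightAngle_of_le ht', eightAngle_of_le (htt.le.trans ht')]
    gcongr
  have hge : StrictMonoOn (eightAngle L₁ L₂) (Ici L₁) := fun t ht t' _ htt => by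
    rw [eightAngle_of_ge h₁ ht, eightAngle_of_ge h₁ (le_trans ht htt.le)]
    gcongr
  exact hle.Iic_union_Ici hge

lemma two_cos_mul_exp (x : ℝ) :
    ((2 * Real.cos x : ℝ) : ℂ) * Circle.exp x = 1 + Circle.exp (2 * x) := by
  rw [two_mul x, Circle.exp_add, Circle.coe_mul, Circle.coe_exp]
  push_cast
  rw [Complex.two_cos, add_mul, ← Complex.exp_add, ← Complex.exp_add]
  rw [neg_mul, neg_add_cancel, Complex.exp_zero, add_comm]

lemma coe_exp_add_pi (x : ℝ) : (Circle.exp (x + π) : ℂ) = -Circle.exp x := by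
  simp only [Circle.coe_exp, Complex.ofReal_add, add_mul, Complex.exp_add, Complex.exp_pi_mul_I]
  ring

lemma abs_cos_eightAngle_of_le (h₁ : 0 < L₁) {t : ℝ} (h0 : 0 ≤ t) (h : t ≤ L₁) :
    |Real.cos (eightAngle L₁ L₂ t)| = Real.cos (eightAngle L₁ L₂ t) := by
  have hle : π * t / L₁ ≤ π := by
    rw [div_le_iff₀ h₁]
    gcongr
  have hnonneg : 0 ≤ π * t / L₁ := by positivity
  rw [eightAngle_of_le h]
  exact abs_of_nonneg (Real.cos_nonneg_of_mem_Icc ⟨by linarith, by linarith⟩)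

lemma abs_cos_eightAngle_of_ge (h₁ : 0 < L₁) (h₂ : 0 < L₂) {t : ℝ} (h0 : L₁ ≤ t)
    (h : t ≤ L₁ + L₂) : |Real.cos (eightAngle L₁ L₂ t)| = -Real.cos (eightAngle L₁ L₂ t) := by
  have hle : π * (t - L₁) / L₂ ≤ π := by
    rw [div_le_iff₀ h₂]
    gcongr
    linarith
  have hnonneg : 0 ≤ π * (t - L₁) / L₂ := by
    have := sub_nonneg.2 h0
    positivity
  rw [eightAngle_of_ge h₁ h0]
  exact abs_of_nonpos (Real.cos_nonpos_of_pi_div_two_le_of_le (by linarith) (by linarith))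

/-- The polar angle of `starCurve`. -/
noncomputable def starAngle (L₁ L₂ θ α s t : ℝ) : ℝ :=
  s * (θ + 2 * π * t / (L₁ + L₂)) + (1 - s) * (α + eightAngle L₁ L₂ t)

/-- A star-shaped closed curve of length `L₁ + L₂` interpolating between a figure eight with axis in
direction `α` (`s = 0`) and the unit circle starting in direction `θ` (`s = 1`). -/
noncomputable def starCurve (L₁ L₂ θ α s t : ℝ) : ℂ :=
  ((s + (1 - s) * (2 * |Real.cos (eightAngle L₁ L₂ t)|) : ℝ) : ℂ)
    * Circle.exp (starAngle L₁ L₂ θ α s t)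

variable {θ α s t : ℝ}

lemma continuous_starCurve (L₁ L₂ θ α : ℝ) :
    Continuous fun p : ℝ × ℝ => starCurve L₁ L₂ θ α p.1 p.2 := by
  unfold starCurve starAngle eightAngle
  fun_prop

lemma norm_starCurve_le (hs : s ∈ Icc (0 : ℝ) 1) : ‖starCurve L₁ L₂ θ α s t‖ ≤ 2 := by
  have hcos := Real.abs_cos_le_one (eightAngle L₁ L₂ t)
  have hnonneg := abs_nonneg (Real.cos (eightAngle L₁ L₂ t))
  rw [starCurve, norm_mul, Circle.norm_coe, mul_one, Complex.norm_real, Real.norm_eq_abs, abs_le]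
  constructor <;> nlinarith [hs.1, hs.2]

lemma starAngle_add (h₁ : 0 < L₁) (h₂ : 0 < L₂) :
    starAngle L₁ L₂ θ α s (L₁ + L₂) = starAngle L₁ L₂ θ α s 0 + 2 * π := by
  rw [starAngle, starAngle, eightAngle_add h₁ h₂]
  field_simp
  ring

lemma starCurve_add (h₁ : 0 < L₁) (h₂ : 0 < L₂) :
    starCurve L₁ L₂ θ α s (L₁ + L₂) = starCurve L₁ L₂ θ α s 0 := by
  rw [starCurve, starCurve, starAngle_add h₁ h₂, eightAngle_add h₁ h₂, Real.cos_add_two_pi,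
    Circle.exp_add_two_pi]

lemma isInjectiveLoop_starCurve (h₁ : 0 < L₁) (h₂ : 0 < L₂) (hs : s ∈ Ioc (0 : ℝ) 1) :
    IsInjectiveLoop (starCurve L₁ L₂ θ α s) (L₁ + L₂) := by
  refine isInjectiveLoop_polar (fun t => ?_) (fun t t' htt => ?_) (starAngle_add h₁ h₂)
  · nlinarith [hs.1, mul_nonneg (sub_nonneg.2 hs.2) (abs_nonneg (Real.cos (eightAngle L₁ L₂ t)))]
  · have hround : 2 * π * t / (L₁ + L₂) < 2 * π * t' / (L₁ + L₂) := by gcongr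
    have hangle := strictMono_eightAngle h₁ h₂ htt
    unfold starAngle
    nlinarith [hs.1, hs.2]

lemma starCurve_one : starCurve L₁ L₂ θ α 1 t
    = (Circle.exp θ * Circle.exp (2 * π * t / (L₁ + L₂)) : Circle) := by
  simp [starCurve, starAngle, Circle.exp_add]

lemma starCurve_zero_of_le (h₁ : 0 < L₁) (h0 : 0 ≤ t) (h : t ≤ L₁) :
    starCurve L₁ L₂ θ α 0 t = Circle.exp α * (1 - Circle.exp (2 * π * t / L₁)) := by
  have hangle : Circle.exp (2 * π * t / L₁) = (-Circle.exp (2 * eightAngle L₁ L₂ t) : ℂ) := by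
    rw [← coe_exp_add_pi, eightAngle_of_le h]
    ring_nf
  rw [hangle, sub_neg_eq_add, ← two_cos_mul_exp, starCurve, abs_cos_eightAngle_of_le h₁ h0 h]
  simp only [starAngle, zero_add, zero_mul, sub_zero, one_mul, Circle.exp_add, Circle.coe_mul]
  ring

lemma starCurve_zero_of_ge (h₁ : 0 < L₁) (h₂ : 0 < L₂) (h0 : L₁ ≤ t) (h : t ≤ L₁ + L₂) :
    starCurve L₁ L₂ θ α 0 t = Circle.exp α * (Circle.exp (2 * π * (t - L₁) / L₂) - 1) := by
  have hangle :
      Circle.exp (2 * π * (t - L₁) / L₂) = (-Circle.exp (2 * eightAngle L₁ L₂ t) : ℂ) := by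
    rw [← coe_exp_add_pi, ← Circle.exp_add_two_pi, eightAngle_of_ge h₁ h0]
    ring_nf
  rw [hangle, ← neg_add', add_comm, ← two_cos_mul_exp, starCurve,
    abs_cos_eightAngle_of_ge h₁ h₂ h0 h]
  simp only [starAngle, zero_add, zero_mul, sub_zero, one_mul, Circle.exp_add, Circle.coe_mul]
  push_cast
  ring

end StarCurves

section Transpositions

variable {Φ : Type*} [Finite Φ] [DecidableEq Φ] {γ δ : Equiv.Perm Φ} {d e ω : Φ}

lemma iterate_mul_swap (h : ¬ δ.SameCycle d e) {j : ℕ} (hj : j < minimalPeriod δ (δ d)) :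
    (δ * Equiv.swap d e)^[j] (δ d) = δ^[j] (δ d) := by
  induction j with
  | zero => rfl
  | succ j ih =>
    have hd : δ^[j] (δ d) ≠ d := fun hc =>
      not_isPeriodicPt_of_pos_of_lt_minimalPeriod j.succ_ne_zero hj
        (by rw [IsPeriodicPt, IsFixedPt, iterate_succ_apply', hc])
    have he : δ^[j] (δ d) ≠ e := fun hc =>
      h (Equiv.Perm.sameCycle_apply_left.1 (sameCycle_iff_exists_iterate.2 ⟨j, hc⟩))
    rw [iterate_succ_apply', ih (by lia), Equiv.Perm.mul_apply,
      Equiv.swap_apply_of_ne_of_ne hd he, iterate_succ_apply']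

lemma iterate_minimalPeriod_mul_swap (h : ¬ δ.SameCycle d e) :
    (δ * Equiv.swap d e)^[minimalPeriod δ (δ d)] (δ d) = δ e := by
  obtain ⟨k, hk⟩ := Nat.exists_eq_succ_of_ne_zero (minimalPeriod_perm_pos δ (δ d)).ne'
  have hd : δ^[k] (δ d) = d := by
    apply δ.injective
    rw [← iterate_succ_apply' δ, ← hk, iterate_minimalPeriod]
  rw [hk, iterate_succ_apply', iterate_mul_swap h (by lia), hd, Equiv.Perm.mul_apply,
    Equiv.swap_apply_left]

lemma iterate_mul_swap_add (h : ¬ δ.SameCycle d e) {j : ℕ} (hj : j < minimalPeriod δ (δ e)) :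
    (δ * Equiv.swap d e)^[minimalPeriod δ (δ d) + j] (δ d) = δ^[j] (δ e) := by
  rw [add_comm, iterate_add_apply, iterate_minimalPeriod_mul_swap h, Equiv.swap_comm,
    iterate_mul_swap (fun h' => h h'.symm) hj]

lemma minimalPeriod_mul_swap (h : ¬ δ.SameCycle d e) :
    minimalPeriod (δ * Equiv.swap d e) (δ d) = minimalPeriod δ (δ d) + minimalPeriod δ (δ e) := by
  have hposd := minimalPeriod_perm_pos δ (δ d)
  have hpos := minimalPeriod_perm_pos (δ * Equiv.swap d e) (δ d)
  have hreturn : IsPeriodicPt (δ * Equiv.swap d e)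
      (minimalPeriod δ (δ d) + minimalPeriod δ (δ e)) (δ d) := by
    rw [IsPeriodicPt, IsFixedPt, add_comm, iterate_add_apply, iterate_minimalPeriod_mul_swap h,
      Equiv.swap_comm, iterate_minimalPeriod_mul_swap fun h' => h h'.symm]
  refine (hreturn.minimalPeriod_le (by lia)).antisymm (not_lt.1 fun hlt => ?_)
  have hfix := iterate_minimalPeriod (f := ⇑(δ * Equiv.swap d e)) (x := δ d)
  rcases lt_or_ge (minimalPeriod (δ * Equiv.swap d e) (δ d)) (minimalPeriod δ (δ d)) with hL | hL
  · rw [iterate_mul_swap h hL] at hfix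
    exact not_isPeriodicPt_of_pos_of_lt_minimalPeriod hpos.ne' hL hfix
  · obtain ⟨i, hi⟩ := Nat.exists_eq_add_of_le hL
    rw [hi, iterate_mul_swap_add h (by lia)] at hfix
    have := sameCycle_iff_exists_iterate.2 ⟨i, hfix⟩
    exact h (by simpa using this.symm)

lemma iterate_mul_swap_of_not_sameCycle (hd : ¬ δ.SameCycle d ω) (he : ¬ δ.SameCycle e ω) (n : ℕ) :
    (δ * Equiv.swap d e)^[n] ω = δ^[n] ω := by
  have hω := sameCycle_iterate δ ω
  induction n with
  | zero => rfl
  | succ n ih =>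
    rw [iterate_succ_apply', ih, Equiv.Perm.mul_apply, Equiv.swap_apply_of_ne_of_ne
      (fun hc => hd (hc ▸ hω n).symm) (fun hc => he (hc ▸ hω n).symm), iterate_succ_apply']

lemma sameCycle_mul_swap_iff (h : ¬ δ.SameCycle d e) :
    (δ * Equiv.swap d e).SameCycle (δ d) ω ↔ δ.SameCycle d ω ∨ δ.SameCycle e ω := by
  refine ⟨fun hs => ?_, fun hω => ?_⟩
  · obtain ⟨J, hJ, rfl⟩ := exists_lt_minimalPeriod_iterate_eq hs
    rw [minimalPeriod_mul_swap h] at hJ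
    rcases lt_or_ge J (minimalPeriod δ (δ d)) with hlt | hge
    · rw [iterate_mul_swap h hlt]
      exact .inl (Equiv.Perm.sameCycle_apply_left.1 (sameCycle_iterate _ _ _))
    · obtain ⟨i, rfl⟩ := Nat.exists_eq_add_of_le hge
      rw [iterate_mul_swap_add h (by lia)]
      exact .inr (Equiv.Perm.sameCycle_apply_left.1 (sameCycle_iterate _ _ _))
  · rw [sameCycle_iff_exists_iterate]
    rcases hω with hω | hω <;>
      obtain ⟨j, hj, rfl⟩ :=
        exists_lt_minimalPeriod_iterate_eq (Equiv.Perm.sameCycle_apply_left.2 hω)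
    · exact ⟨_, iterate_mul_swap h hj⟩
    · exact ⟨_, iterate_mul_swap_add h hj⟩

-- With `d = γ^[J] e`, the new cycle of `d` is `d, γ e, …, γ^[J - 1] e`, which leaves out `e`.
lemma not_sameCycle_mul_swap (hne : d ≠ e) (h : γ.SameCycle d e) :
    ¬ (γ * Equiv.swap d e).SameCycle d e := by
  obtain ⟨J, hJ, hJd⟩ := exists_lt_minimalPeriod_iterate_eq h.symm
  have hJ0 : J ≠ 0 := fun hc => hne (by rw [← hJd, hc, iterate_zero, id_eq])
  have hnot {i : ℕ} (hi0 : i ≠ 0) (hi : i < J) : γ^[i] e ≠ e :=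
    not_isPeriodicPt_of_pos_of_lt_minimalPeriod hi0 (hi.trans hJ)
  have hiter {i : ℕ} (hi : i < J) : (γ * Equiv.swap d e)^[i + 1] d = γ^[i + 1] e := by
    induction i with
    | zero => simp
    | succ i ih =>
      have hd : γ^[i + 1] e ≠ d := fun hc => hi.ne
        ((iterate_eq_iterate_iff_of_lt_minimalPeriod (hi.trans hJ) hJ).1 (hc.trans hJd.symm))
      rw [iterate_succ_apply', ih (by lia), Equiv.Perm.mul_apply,
        Equiv.swap_apply_of_ne_of_ne hd (hnot i.succ_ne_zero hi), iterate_succ_apply' _ (i + 1)]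
  have hperiodic : IsPeriodicPt (γ * Equiv.swap d e) J d := by
    obtain ⟨k, rfl⟩ := Nat.exists_eq_succ_of_ne_zero hJ0
    exact (hiter k.lt_succ_self).trans hJd
  intro hs
  obtain ⟨n, hn⟩ := sameCycle_iff_exists_iterate.1 hs
  rw [← hperiodic.iterate_mod_apply] at hn
  have hlt := Nat.mod_lt n (Nat.pos_of_ne_zero hJ0)
  rcases Nat.eq_zero_or_eq_succ_pred (n % J) with h0 | h0
  · exact hne (by simpa only [h0, iterate_zero, id_eq] using hn)
  · rw [h0, Nat.succ_eq_add_one, hiter (by lia)] at hn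
    exact hnot (Nat.succ_ne_zero _) (by lia) hn

end Transpositions

section Homing

variable {Φ : Type*} {h : Set Φ → ℂ} {γ δ γm γp : Equiv.Perm Φ} {I : Set Φ} {Q Q' : Φ → ℝ → ℝ → ℂ}

/-- A motion of disjoint closed curves, one for every cycle of `γ`, to the unit circles around the
homes of the cycles. At time `s ∈ [0, 1]` the arc belonging to `ω` is `v ↦ Q ω s v`, `v ∈ [0, 1]`;
only the arcs in `I` move, and the curves may touch each other at the initial time `0`. -/
structure IsHoming (h : Set Φ → ℂ) (γ : Equiv.Perm Φ) (I : Set Φ) (Q : Φ → ℝ → ℝ → ℂ) : Prop where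
  continuousOn : ∀ ω, ContinuousOn (fun p : ℝ × ℝ => Q ω p.1 p.2) (Icc 0 1 ×ˢ Icc 0 1)
  home : ∀ ω, ∀ v ∈ Icc (0 : ℝ) 1, Q ω 1 v = h (cycleSet γ ω) + homeDir γ ω v
  static : ∀ ω ∉ I, ∀ s ∈ Icc (0 : ℝ) 1, ∀ v ∈ Icc (0 : ℝ) 1,
    Q ω s v = h (cycleSet γ ω) + homeDir γ ω v
  apply_mem_iff : ∀ ω, γ ω ∈ I ↔ ω ∈ I
  glue : ∀ ω, ∀ s ∈ Icc (0 : ℝ) 1, Q ω s 1 = Q (γ ω) s 0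
  inj : ∀ s ∈ Ioc (0 : ℝ) 1, ∀ ω ∈ I, ∀ ω' ∈ I, ∀ v ∈ Icc (0 : ℝ) 1, ∀ v' ∈ Icc (0 : ℝ) 1,
    Q ω s v = Q ω' s v' → EqvGen (CircleGlue γ) (ω, v) (ω', v')
  sep : ∀ s ∈ Icc (0 : ℝ) 1, ∀ ω ∈ I, ∀ ω' ∉ I, ∀ v ∈ Icc (0 : ℝ) 1,
    1 < ‖Q ω s v - h (cycleSet γ ω')‖

lemma IsHoming.congr (H : IsHoming h γ I Q)
    (hQ : ∀ ω, ∀ s ∈ Icc (0 : ℝ) 1, ∀ v ∈ Icc (0 : ℝ) 1, Q' ω s v = Q ω s v) :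
    IsHoming h γ I Q' where
  continuousOn ω := (H.continuousOn ω).congr fun p hp => hQ ω p.1 hp.1 p.2 hp.2
  home ω v hv := by rw [hQ ω 1 (by simp) v hv, H.home ω v hv]
  static ω hω s hs v hv := by rw [hQ ω s hs v hv, H.static ω hω s hs v hv]
  apply_mem_iff := H.apply_mem_iff
  glue ω s hs := by rw [hQ ω s hs 1 (by simp), hQ _ s hs 0 (by simp), H.glue ω s hs]
  inj s hs ω hω ω' hω' v hv v' hv' he := by
    have hs' := Ioc_subset_Icc_self hs
    rw [hQ ω s hs' v hv, hQ ω' s hs' v' hv'] at he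
    exact H.inj s hs ω hω ω' hω' v hv v' hv' he
  sep s hs ω hω ω' hω' v hv := by
    rw [hQ ω s hs v hv]
    exact H.sep s hs ω hω ω' hω' v hv

/-- A motion, at times `s ∈ [-1, 1]`, from the unit circles around the homes of the cycles of `γm`
to those around the homes of the cycles of `γp`. At time `0` the curves belong to both permutations;
this is the picture of the level sets of a Morse function near a saddle level. -/
structure IsTransit (h : Set Φ → ℂ) (γm γp : Equiv.Perm Φ) (I : Set Φ) (Q : Φ → ℝ → ℝ → ℂ) :
    Prop where
  above : IsHoming h γp I Q
  below : IsHoming h γm I fun ω s v => Q ω (-s) v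
  inj_zero : ∀ ω ∈ I, ∀ ω' ∈ I, ∀ v ∈ Icc (0 : ℝ) 1, ∀ v' ∈ Icc (0 : ℝ) 1,
    Q ω 0 v = Q ω' 0 v' → EqvGen (CircleGlue γp ⊔ CircleGlue γm) (ω, v) (ω', v')
  iterate_eq : ∀ ω ∉ I, ∀ n, γm^[n] ω = γp^[n] ω

lemma IsTransit.reverse (H : IsTransit h γm γp I Q) :
    IsTransit h γp γm I fun ω s v => Q ω (-s) v where
  above := H.below
  below := by simpa only [neg_neg] using H.above
  inj_zero := by simpa only [neg_zero, sup_comm] using H.inj_zero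
  iterate_eq ω hω n := (H.iterate_eq ω hω n).symm

lemma IsTransit.continuousOn (H : IsTransit h γm γp I Q) (ω : Φ) :
    ContinuousOn (fun p : ℝ × ℝ => Q ω p.1 p.2) (Icc (-1) 1 ×ˢ Icc 0 1) := by
  have hbelow : ContinuousOn (fun p : ℝ × ℝ => Q ω p.1 p.2) (Icc (-1) 0 ×ˢ Icc 0 1) := by
    have hneg : ContinuousOn (fun p : ℝ × ℝ => (-p.1, p.2)) (Icc (-1) 0 ×ˢ Icc 0 1) := by fun_prop
    refine ((H.below.continuousOn ω).comp hneg ?_).congr fun p _ => by simp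
    rintro ⟨s, v⟩ ⟨hs, hv⟩
    exact ⟨⟨by linarith [hs.2], by linarith [hs.1]⟩, hv⟩
  have hunion :
      (Icc (-1) 1 ×ˢ Icc 0 1 : Set (ℝ × ℝ)) = Icc (-1) 0 ×ˢ Icc 0 1 ∪ Icc 0 1 ×ˢ Icc 0 1 := by
    rw [← union_prod, Icc_union_Icc_eq_Icc (by norm_num) zero_le_one]
  rw [hunion]
  exact hbelow.union_of_isClosed (H.above.continuousOn ω) (isClosed_Icc.prod isClosed_Icc)
    (isClosed_Icc.prod isClosed_Icc)

end Homing

section Departing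

/-- The direction from `x` to `y`. -/
noncomputable def towards (x y : ℂ) : Circle := Circle.exp (y - x).arg

lemma norm_mul_towards (x y : ℂ) : (‖y - x‖ : ℂ) * towards x y = y - x := by
  rw [towards, Circle.coe_exp, Complex.norm_mul_exp_arg_mul_I]

lemma towards_swap {x y : ℂ} (h : x ≠ y) : (towards y x : ℂ) = -towards x y := by
  have hne : (‖y - x‖ : ℂ) ≠ 0 := by simpa [sub_eq_zero] using h.symm
  apply mul_left_cancel₀ hne
  rw [mul_neg, norm_mul_towards, norm_sub_rev, norm_mul_towards, neg_sub]

/-- The centre of a unit circle which at time `s = 0` touches the midpoint of `c` and `c'` from the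
side of `c` and then moves to its home `c`. -/
noncomputable def departingCentre (c c' : ℂ) (s : ℝ) : ℂ :=
  (1 - s) * ((c + c') / 2 - towards c c') + s * c

@[fun_prop]
lemma continuous_departingCentre (c c' : ℂ) : Continuous (departingCentre c c') := by
  unfold departingCentre
  fun_prop

lemma departingCentre_mem_segment {c c' : ℂ} (h : 2 ≤ ‖c' - c‖) {s : ℝ} (hs : s ∈ Icc (0 : ℝ) 1) :
    departingCentre c c' s ∈ segment ℝ c c' := by
  have hinv : ‖c' - c‖⁻¹ ≤ 1 / 2 := by
    rw [one_div]
    gcongr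
  have hinv₀ : 0 ≤ ‖c' - c‖⁻¹ := by positivity
  rw [segment_eq_image']
  refine ⟨(1 - s) * (1 / 2 - ‖c' - c‖⁻¹), ⟨?_, ?_⟩, ?_⟩
  · exact mul_nonneg (by linarith [hs.2]) (by linarith)
  · nlinarith [hs.1, hs.2]
  · have hne : (‖c' - c‖ : ℂ) ≠ 0 := by
      norm_cast
      linarith
    have hdir : (towards c c' : ℂ) = (‖c' - c‖ : ℂ)⁻¹ * (c' - c) :=
      (eq_inv_mul_iff_mul_eq₀ hne).2 (norm_mul_towards c c')
    simp only [departingCentre, hdir, Complex.real_smul]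
    push_cast
    ring

lemma departingCentre_sub {c c' : ℂ} (h : c ≠ c') (s : ℝ) :
    departingCentre c' c s - departingCentre c c' s
      = ((2 * (1 - s) + s * ‖c' - c‖ : ℝ) : ℂ) * towards c c' := by
  rw [departingCentre, departingCentre, towards_swap h]
  push_cast
  linear_combination -(s : ℂ) * norm_mul_towards c c'

variable {Φ : Type*} {γ : Equiv.Perm Φ} {a ω ω' : Φ} {c c' : ℂ} {s v v' : ℝ}

/-- The arc of `ω` on the unit circle around `departingCentre c c' s`, which rotates in such a way
that it passes through the midpoint of `c` and `c'` at the beginning of the arc of `a` for `s = 0`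
and is parametrized by `homeDir` for `s = 1`. -/
noncomputable def departingArc (γ : Equiv.Perm Φ) (a : Φ) (c c' : ℂ) (ω : Φ) (s v : ℝ) : ℂ :=
  departingCentre c c' s +
    (Circle.exp ((1 - s) * Complex.arg (towards c c' / homeDir γ a 0 : Circle)) * homeDir γ ω v :
      Circle)

lemma continuous_departingArc (γ : Equiv.Perm Φ) (a : Φ) (c c' : ℂ) (ω : Φ) :
    Continuous fun p : ℝ × ℝ => departingArc γ a c c' ω p.1 p.2 := by
  unfold departingArc
  fun_prop

lemma departingArc_one : departingArc γ a c c' ω 1 v = c + homeDir γ ω v := by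
  simp [departingArc, departingCentre]

lemma departingArc_zero : departingArc γ a c c' ω 0 v
    = (c + c') / 2 - towards c c' + towards c c' * (homeDir γ ω v / homeDir γ a 0 : Circle) := by
  have hrot : Circle.exp (Complex.arg (towards c c' / homeDir γ a 0 : Circle))
      * homeDir γ ω v = towards c c' * (homeDir γ ω v / homeDir γ a 0) := by
    rw [Circle.exp_arg, div_mul_eq_mul_div, mul_div_assoc]
  rw [departingArc, sub_zero, one_mul, hrot, departingCentre, Circle.coe_mul]
  push_cast
  ring

lemma departingArc_glue [Finite Φ] :
    departingArc γ a c c' ω s 1 = departingArc γ a c c' (γ ω) s 0 := by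
  rw [departingArc, homeDir_glue, departingArc]

lemma eqvGen_of_departingArc_eq [Finite Φ] (hω : γ.SameCycle ω ω') (hv : v ∈ Icc (0 : ℝ) 1)
    (hv' : v' ∈ Icc (0 : ℝ) 1) (h : departingArc γ a c c' ω s v = departingArc γ a c c' ω' s v') :
    EqvGen (CircleGlue γ) (ω, v) (ω', v') := by
  rw [departingArc, departingArc, add_right_inj, Circle.coe_inj, mul_right_inj] at h
  exact eqvGen_circleGlue_of_homeDir_eq hω hv hv' h

lemma departingArc_ne {a' : Φ} (h : 2 < ‖c' - c‖) (hs : s ∈ Ioc (0 : ℝ) 1) :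
    departingArc γ a c c' ω s v ≠ departingArc γ a' c' c ω' s v' := by
  intro heq
  have hne : c ≠ c' := by
    rintro rfl
    norm_num at h
  rw [departingArc, departingArc] at heq
  set z := Circle.exp ((1 - s) * Complex.arg (towards c c' / homeDir γ a 0 : Circle))
    * homeDir γ ω v
  set z' := Circle.exp ((1 - s) * Complex.arg (towards c' c / homeDir γ a' 0 : Circle))
    * homeDir γ ω' v'
  have hcentre : ((2 * (1 - s) + s * ‖c' - c‖ : ℝ) : ℂ) * towards c c' = z - z' := by
    rw [← departingCentre_sub hne]
    linear_combination -heq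
  have hdist : 2 < 2 * (1 - s) + s * ‖c' - c‖ := by nlinarith [hs.1]
  have hnorm := congrArg norm hcentre
  rw [norm_mul, Circle.norm_coe, mul_one, Complex.norm_real, Real.norm_of_nonneg (by linarith)]
    at hnorm
  have hle := norm_sub_le (z : ℂ) z'
  rw [Circle.norm_coe, Circle.norm_coe] at hle
  linarith

end Departing

section Saddle

variable {Φ : Type*} {h : Set Φ → ℂ} {γ δ : Equiv.Perm Φ} {d e ω ω' : Φ} {s v v' : ℝ}

lemma segment_subset_convexHull_compl {ι : Type*} (h : ι → ℂ) {i j k : ι} (hi : i ≠ k)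
    (hj : j ≠ k) : segment ℝ (h i) (h j) ⊆ convexHull ℝ (h '' {k}ᶜ) :=
  (convex_convexHull ℝ _).segment_subset (subset_convexHull ℝ _ ⟨i, hi, rfl⟩)
    (subset_convexHull ℝ _ ⟨j, hj, rfl⟩)

/-- The arcs which move when a saddle joins the cycles of `d` and `e`. -/
def saddleSet (δ : Equiv.Perm Φ) (d e : Φ) : Set Φ := {ω | δ.SameCycle d ω ∨ δ.SameCycle e ω}

lemma saddleSet_comm : saddleSet δ d e = saddleSet δ e d := ext fun _ => or_comm

lemma apply_mem_saddleSet : δ ω ∈ saddleSet δ d e ↔ ω ∈ saddleSet δ d e := by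
  simp only [saddleSet, mem_ofPred_eq, Equiv.Perm.sameCycle_apply_right]

lemma cycleSet_ne_of_not_mem_saddleSet (hω : ω ∉ saddleSet δ d e) :
    cycleSet δ d ≠ cycleSet δ ω ∧ cycleSet δ e ≠ cycleSet δ ω := by
  rw [Ne, Ne, cycleSet_eq_iff, cycleSet_eq_iff]
  exact not_or.1 hω

open scoped Classical in
/-- The level circles on the side of a saddle on which `d` and `e` lie on different circles. -/
noncomputable def splitArc (h : Set Φ → ℂ) (δ : Equiv.Perm Φ) (d e ω : Φ) (s v : ℝ) : ℂ :=
  if δ.SameCycle d ω then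
    departingArc δ (δ d) (h (cycleSet δ d)) (h (cycleSet δ e)) ω s v
  else if δ.SameCycle e ω then
    departingArc δ (δ e) (h (cycleSet δ e)) (h (cycleSet δ d)) ω s v
  else h (cycleSet δ ω) + homeDir δ ω v

lemma splitArc_of_left (hω : δ.SameCycle d ω) : splitArc h δ d e ω s v
    = departingArc δ (δ d) (h (cycleSet δ d)) (h (cycleSet δ e)) ω s v :=
  if_pos hω

lemma splitArc_comm (hde : ¬ δ.SameCycle d e) :
    splitArc h δ d e ω s v = splitArc h δ e d ω s v := by
  unfold splitArc
  split_ifs with hd he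
  exacts [absurd (hd.trans he.symm) hde, rfl, rfl, rfl]

lemma splitArc_of_not_mem (hω : ω ∉ saddleSet δ d e) :
    splitArc h δ d e ω s v = h (cycleSet δ ω) + homeDir δ ω v := by
  rw [splitArc, if_neg fun hd => hω (Or.inl hd), if_neg fun he => hω (Or.inr he)]

lemma continuous_splitArc (h : Set Φ → ℂ) (δ : Equiv.Perm Φ) (d e ω : Φ) :
    Continuous fun p : ℝ × ℝ => splitArc h δ d e ω p.1 p.2 := by
  unfold splitArc
  split_ifs
  · exact continuous_departingArc ..
  · exact continuous_departingArc ..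
  · fun_prop

lemma splitArc_one : splitArc h δ d e ω 1 v = h (cycleSet δ ω) + homeDir δ ω v := by
  unfold splitArc
  split_ifs with hd he
  · rw [departingArc_one, cycleSet_eq_iff.2 hd]
  · rw [departingArc_one, cycleSet_eq_iff.2 he]
  · rfl

lemma WidelySeparated.departingArc_sep (H : WidelySeparated h) {a : Φ}
    (hde : cycleSet δ d ≠ cycleSet δ e) (hω' : ω' ∉ saddleSet δ d e) (hs : s ∈ Icc (0 : ℝ) 1) :
    1 < ‖departingArc δ a (h (cycleSet δ d)) (h (cycleSet δ e)) ω s v - h (cycleSet δ ω')‖ := by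
  obtain ⟨hd, he⟩ := cycleSet_ne_of_not_mem_saddleSet hω'
  refine H.one_lt_norm_add_sub (segment_subset_convexHull_compl h hd he ?_) ?_
  · exact departingCentre_mem_segment (by linarith [H.lt_norm_sub hde.symm]) hs
  · rw [Circle.norm_coe]
    norm_num

variable [Finite Φ]

open scoped Classical in
lemma splitArc_glue : splitArc h δ d e ω s 1 = splitArc h δ d e (δ ω) s 0 := by
  rw [splitArc, splitArc, departingArc_glue, departingArc_glue, homeDir_glue,
    cycleSet_eq_iff.2 (Equiv.Perm.sameCycle_apply_right.2 (.refl δ ω))]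
  exact if_congr Equiv.Perm.sameCycle_apply_right.symm rfl
    (if_congr Equiv.Perm.sameCycle_apply_right.symm rfl rfl)

lemma WidelySeparated.splitArc_inj (H : WidelySeparated h) (hde : ¬ δ.SameCycle d e)
    (hs : s ∈ Ioc (0 : ℝ) 1) (hω : δ.SameCycle d ω) (hω' : ω' ∈ saddleSet δ d e)
    (hv : v ∈ Icc (0 : ℝ) 1) (hv' : v' ∈ Icc (0 : ℝ) 1)
    (heq : splitArc h δ d e ω s v = splitArc h δ d e ω' s v') :
    EqvGen (CircleGlue δ) (ω, v) (ω', v') := by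
  rw [splitArc_of_left hω] at heq
  rcases hω' with hd | he
  · rw [splitArc_of_left hd] at heq
    exact eqvGen_of_departingArc_eq (hω.symm.trans hd) hv hv' heq
  · rw [splitArc_comm hde, splitArc_of_left he] at heq
    refine absurd heq (departingArc_ne ?_ hs)
    linarith [H.lt_norm_sub fun h => hde (cycleSet_eq_iff.1 h).symm]

lemma WidelySeparated.isHoming_splitArc (H : WidelySeparated h) (hde : ¬ δ.SameCycle d e) :
    IsHoming h δ (saddleSet δ d e) (splitArc h δ d e) where
  continuousOn ω := (continuous_splitArc h δ d e ω).continuousOn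
  home _ _ _ := splitArc_one
  static _ hω _ _ _ _ := splitArc_of_not_mem hω
  apply_mem_iff _ := apply_mem_saddleSet
  glue _ _ _ := splitArc_glue
  inj s hs ω hω ω' hω' v hv v' hv' heq := by
    rcases hω with hd | he
    · exact H.splitArc_inj hde hs hd hω' hv hv' heq
    · have hed : ¬ δ.SameCycle e d := fun h => hde h.symm
      rw [splitArc_comm hde, splitArc_comm hde] at heq
      exact H.splitArc_inj hed hs he (saddleSet_comm ▸ hω') hv hv' heq
  sep s hs ω hω ω' hω' v _ := by
    have hne : cycleSet δ d ≠ cycleSet δ e := fun h => hde (cycleSet_eq_iff.1 h)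
    rcases hω with hd | he
    · rw [splitArc_of_left hd]
      exact H.departingArc_sep hne hω' hs
    · rw [splitArc_comm hde, splitArc_of_left he]
      exact H.departingArc_sep hne.symm (saddleSet_comm ▸ hω') hs

end Saddle

section Merged

variable {Φ : Type*} [DecidableEq Φ] {h : Set Φ → ℂ} {δ : Equiv.Perm Φ} {d e ω ω' : Φ}
  {s v v' : ℝ}

/-- The moving circle on the side of a saddle on which the cycles of `d` and `e` are merged. -/
noncomputable def mergedCurve (h : Set Φ → ℂ) (δ : Equiv.Perm Φ) (d e : Φ) (s t : ℝ) : ℂ :=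
  (1 - s) * ((h (cycleSet δ d) + h (cycleSet δ e)) / 2)
    + s * h (cycleSet (δ * Equiv.swap d e) (δ d))
    + starCurve (minimalPeriod δ (δ d)) (minimalPeriod δ (δ e))
      (homeDir (δ * Equiv.swap d e) (δ d) 0 : ℂ).arg
      (towards (h (cycleSet δ e)) (h (cycleSet δ d)) : ℂ).arg s t

open scoped Classical in
/-- The level circles on the side of a saddle on which `d` and `e` lie on the same circle. -/
noncomputable def mergedArc (h : Set Φ → ℂ) (δ : Equiv.Perm Φ) (d e ω : Φ) (s v : ℝ) : ℂ :=
  if ω ∈ saddleSet δ d e then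
    mergedCurve h δ d e s (stepsFrom (δ * Equiv.swap d e) (δ d) ω + v)
  else h (cycleSet (δ * Equiv.swap d e) ω) + homeDir (δ * Equiv.swap d e) ω v

lemma continuous_mergedCurve (h : Set Φ → ℂ) (δ : Equiv.Perm Φ) (d e : Φ) :
    Continuous fun p : ℝ × ℝ => mergedCurve h δ d e p.1 p.2 := by
  unfold mergedCurve
  have := continuous_starCurve (minimalPeriod δ (δ d)) (minimalPeriod δ (δ e))
    (homeDir (δ * Equiv.swap d e) (δ d) 0 : ℂ).arg
    (towards (h (cycleSet δ e)) (h (cycleSet δ d)) : ℂ).arg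
  fun_prop

lemma continuous_mergedArc (h : Set Φ → ℂ) (δ : Equiv.Perm Φ) (d e ω : Φ) :
    Continuous fun p : ℝ × ℝ => mergedArc h δ d e ω p.1 p.2 := by
  unfold mergedArc
  split_ifs
  · exact (continuous_mergedCurve h δ d e).comp
      (continuous_fst.prodMk (continuous_const.add continuous_snd))
  · fun_prop

lemma mergedArc_of_not_mem (hω : ω ∉ saddleSet δ d e) : mergedArc h δ d e ω s v
    = h (cycleSet (δ * Equiv.swap d e) ω) + homeDir (δ * Equiv.swap d e) ω v :=
  if_neg hω

variable [Finite Φ]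

lemma exists_iterate_of_mem_saddleSet (hde : ¬ δ.SameCycle d e) (hω : ω ∈ saddleSet δ d e) :
    ∃ j < minimalPeriod δ (δ d) + minimalPeriod δ (δ e), (δ * Equiv.swap d e)^[j] (δ d) = ω := by
  have hs := (sameCycle_mul_swap_iff hde).2 hω
  rw [← minimalPeriod_mul_swap hde]
  exact ⟨_, stepsFrom_lt hs, iterate_stepsFrom hs⟩

lemma mergedArc_iterate (hde : ¬ δ.SameCycle d e) {j : ℕ}
    (hj : j < minimalPeriod δ (δ d) + minimalPeriod δ (δ e)) :
    mergedArc h δ d e ((δ * Equiv.swap d e)^[j] (δ d)) s v = mergedCurve h δ d e s (j + v) := by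
  have hmem : (δ * Equiv.swap d e)^[j] (δ d) ∈ saddleSet δ d e :=
    (sameCycle_mul_swap_iff hde).1 (sameCycle_iterate _ _ j)
  rw [mergedArc, if_pos hmem, stepsFrom_iterate (hj.trans_eq (minimalPeriod_mul_swap hde).symm)]

lemma mergedCurve_add : mergedCurve h δ d e s ((minimalPeriod δ (δ d) + minimalPeriod δ (δ e) : ℕ))
    = mergedCurve h δ d e s 0 := by
  rw [mergedCurve, Nat.cast_add, starCurve_add (by exact_mod_cast minimalPeriod_perm_pos ..)
    (by exact_mod_cast minimalPeriod_perm_pos ..), mergedCurve]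

lemma isInjectiveLoop_mergedCurve (hs : s ∈ Ioc (0 : ℝ) 1) : IsInjectiveLoop
    (mergedCurve h δ d e s) ((minimalPeriod δ (δ d) + minimalPeriod δ (δ e) : ℕ)) := by
  intro t ht t' ht' hlt heq
  rw [Nat.cast_add] at ht ht' ⊢
  exact isInjectiveLoop_starCurve (by exact_mod_cast minimalPeriod_perm_pos ..)
    (by exact_mod_cast minimalPeriod_perm_pos ..) hs t ht t' ht' hlt (add_left_cancel heq)

lemma mergedCurve_one (hde : ¬ δ.SameCycle d e) {j : ℕ} :
    mergedCurve h δ d e 1 (j + v) = h (cycleSet (δ * Equiv.swap d e) (δ d))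
      + homeDir (δ * Equiv.swap d e) ((δ * Equiv.swap d e)^[j] (δ d)) v := by
  rw [homeDir_iterate, mergedCurve, starCurve_one, Circle.exp_arg, minimalPeriod_mul_swap hde]
  push_cast
  ring

lemma mergedArc_one (hde : ¬ δ.SameCycle d e) : mergedArc h δ d e ω 1 v
    = h (cycleSet (δ * Equiv.swap d e) ω) + homeDir (δ * Equiv.swap d e) ω v := by
  by_cases hω : ω ∈ saddleSet δ d e
  · obtain ⟨j, hj, rfl⟩ := exists_iterate_of_mem_saddleSet hde hω
    rw [mergedArc_iterate hde hj, mergedCurve_one hde, cycleSet_eq_iff.2 (sameCycle_iterate _ _ j)]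
  · exact mergedArc_of_not_mem hω

lemma apply_mem_saddleSet_mul_swap (hde : ¬ δ.SameCycle d e) :
    (δ * Equiv.swap d e) ω ∈ saddleSet δ d e ↔ ω ∈ saddleSet δ d e := by
  simp only [saddleSet, mem_ofPred_eq, ← sameCycle_mul_swap_iff hde,
    Equiv.Perm.sameCycle_apply_right]

lemma mergedArc_glue (hde : ¬ δ.SameCycle d e) :
    mergedArc h δ d e ω s 1 = mergedArc h δ d e ((δ * Equiv.swap d e) ω) s 0 := by
  by_cases hω : ω ∈ saddleSet δ d e
  · obtain ⟨j, hj, rfl⟩ := exists_iterate_of_mem_saddleSet hde hω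
    rw [mergedArc_iterate hde hj, ← iterate_succ_apply' (⇑(δ * Equiv.swap d e))]
    obtain hlt | heq := (Nat.succ_le_of_lt hj).lt_or_eq
    · rw [mergedArc_iterate hde hlt]
      push_cast
      ring_nf
    · have hpos : 0 < minimalPeriod δ (δ d) + minimalPeriod δ (δ e) := by omega
      have hback : (δ * Equiv.swap d e)^[j.succ] (δ d) = (δ * Equiv.swap d e)^[0] (δ d) := by
        rw [heq, ← minimalPeriod_mul_swap hde, iterate_minimalPeriod, iterate_zero_apply]
      have hlast : (j + 1 : ℝ) = (minimalPeriod δ (δ d) + minimalPeriod δ (δ e) : ℕ) := by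
        exact_mod_cast heq
      rw [hback, mergedArc_iterate hde hpos, hlast, mergedCurve_add, Nat.cast_zero, add_zero]
  · rw [mergedArc_of_not_mem hω, homeDir_glue,
      mergedArc_of_not_mem fun h => hω ((apply_mem_saddleSet_mul_swap hde).1 h),
      cycleSet_eq_iff.2 (Equiv.Perm.sameCycle_apply_right.2 (.refl _ ω))]

lemma WidelySeparated.mergedCurve_sep (H : WidelySeparated h) (hde : ¬ δ.SameCycle d e)
    (hω' : ω' ∉ saddleSet δ d e) (hs : s ∈ Icc (0 : ℝ) 1) (t : ℝ) :
    1 < ‖mergedCurve h δ d e s t - h (cycleSet (δ * Equiv.swap d e) ω')‖ := by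
  have hswap : cycleSet (δ * Equiv.swap d e) ω' = cycleSet δ ω' :=
    cycleSet_congr (iterate_mul_swap_of_not_sameCycle (not_or.1 hω').1 (not_or.1 hω').2)
  have hmerged : cycleSet (δ * Equiv.swap d e) (δ d) ≠ cycleSet (δ * Equiv.swap d e) ω' := by
    rw [Ne, cycleSet_eq_iff, sameCycle_mul_swap_iff hde]
    exact hω'
  obtain ⟨hd, he⟩ := cycleSet_ne_of_not_mem_saddleSet hω'
  rw [← hswap] at hd he
  have hmid : (h (cycleSet δ d) + h (cycleSet δ e)) / 2 ∈
      convexHull ℝ (h '' {cycleSet (δ * Equiv.swap d e) ω'}ᶜ) :=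
    segment_subset_convexHull_compl h hd he
      ⟨1 / 2, 1 / 2, by norm_num, by norm_num, by norm_num, by simp; ring⟩
  have hcentre := (convex_convexHull ℝ _).segment_subset hmid
    (subset_convexHull ℝ _ ⟨_, hmerged, rfl⟩) ⟨1 - s, s, by linarith [hs.2], hs.1, by ring, rfl⟩
  rw [Complex.real_smul, Complex.real_smul, Complex.ofReal_sub, Complex.ofReal_one] at hcentre
  exact H.one_lt_norm_add_sub hcentre (norm_starCurve_le hs)

lemma WidelySeparated.isHoming_mergedArc (H : WidelySeparated h) (hde : ¬ δ.SameCycle d e) :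
    IsHoming h (δ * Equiv.swap d e) (saddleSet δ d e) (mergedArc h δ d e) where
  continuousOn ω := (continuous_mergedArc h δ d e ω).continuousOn
  home _ _ _ := mergedArc_one hde
  static _ hω _ _ _ _ := mergedArc_of_not_mem hω
  apply_mem_iff _ := apply_mem_saddleSet_mul_swap hde
  glue _ _ _ := mergedArc_glue hde
  inj s hs ω hω ω' hω' v hv v' hv' heq := by
    obtain ⟨j, hj, rfl⟩ := exists_iterate_of_mem_saddleSet hde hω
    obtain ⟨j', hj', rfl⟩ := exists_iterate_of_mem_saddleSet hde hω'
    rw [mergedArc_iterate hde hj, mergedArc_iterate hde hj'] at heq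
    refine eqvGen_circleGlue_of_isInjectiveLoop (isInjectiveLoop_mergedCurve hs) ?_ hj hj' hv hv'
      heq
    rw [← minimalPeriod_mul_swap hde, iterate_minimalPeriod]
  sep s hs ω hω ω' hω' v _ := by
    rw [mergedArc, if_pos hω]
    exact H.mergedCurve_sep hde hω' hs _

end Merged

section Transit

variable {Φ : Type*} {h : Set Φ → ℂ} {γ δ : Equiv.Perm Φ} {d e ω ω' : Φ} {v v' : ℝ}

lemma departingArc_zero_self {a : Φ} {c c' : ℂ} : departingArc γ a c c' a 0 0 = (c + c') / 2 := by
  rw [departingArc_zero, div_self', Circle.coe_one, mul_one, sub_add_cancel]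

lemma departingArc_eq_midpoint {a a' : Φ} {c c' : ℂ} (hne : c ≠ c')
    (heq : departingArc γ a c c' ω 0 v = departingArc γ a' c' c ω' 0 v') :
    departingArc γ a c c' ω 0 v = (c + c') / 2 := by
  rw [departingArc_zero, departingArc_zero, towards_swap hne] at heq
  rw [departingArc_zero]
  set u : Circle := homeDir γ ω v / homeDir γ a 0
  set u' : Circle := homeDir γ ω' v' / homeDir γ a' 0
  have hu : (towards c c' : ℂ) * u = towards c c' := by
    refine (eq_of_sub_eq_two_mul (u := -towards c c' * u') ?_ ?_ (Circle.norm_coe _)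
      (by linear_combination heq)).1 <;> simp only [norm_mul, norm_neg, Circle.norm_coe, mul_one]
  rw [hu, sub_add_cancel]

lemma eqvGen_circleGlue_saddle [DecidableEq Φ] (δ : Equiv.Perm Φ) (d e : Φ) :
    EqvGen (CircleGlue δ ⊔ CircleGlue (δ * Equiv.swap d e)) (δ d, 0) (δ e, 0) :=
  .trans _ (d, 1) _ (.symm _ _ (.rel _ _ (Or.inl ⟨rfl, rfl, rfl⟩)))
    (.rel _ _ (Or.inr ⟨rfl, rfl, by simp⟩))

variable [Finite Φ]

lemma departingArc_zero_iterate {a : Φ} {c c' : ℂ} (j : ℕ) :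
    departingArc δ a c c' (δ^[j] a) 0 v = (c + c') / 2
      + towards c c' * (Circle.exp (2 * π * (j + v) / minimalPeriod δ a) - 1) := by
  rw [departingArc_zero, homeDir_iterate, mul_div_cancel_left]
  ring

lemma eqvGen_of_splitArc_zero_eq (hne : h (cycleSet δ d) ≠ h (cycleSet δ e))
    (hω : δ.SameCycle d ω) (hω' : δ.SameCycle e ω') (hv : v ∈ Icc (0 : ℝ) 1)
    (hv' : v' ∈ Icc (0 : ℝ) 1)
    (heq : departingArc δ (δ d) (h (cycleSet δ d)) (h (cycleSet δ e)) ω 0 v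
      = departingArc δ (δ e) (h (cycleSet δ e)) (h (cycleSet δ d)) ω' 0 v') :
    EqvGen (CircleGlue δ) (ω, v) (δ d, 0) ∧ EqvGen (CircleGlue δ) (ω', v') (δ e, 0) := by
  have h₀ : (0 : ℝ) ∈ Icc (0 : ℝ) 1 := by simp
  exact ⟨eqvGen_of_departingArc_eq (Equiv.Perm.sameCycle_apply_right.2 hω.symm) hv h₀
      ((departingArc_eq_midpoint hne heq).trans departingArc_zero_self.symm),
    eqvGen_of_departingArc_eq (Equiv.Perm.sameCycle_apply_right.2 hω'.symm) hv' h₀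
      ((departingArc_eq_midpoint hne.symm heq.symm).trans departingArc_zero_self.symm)⟩

variable [DecidableEq Φ]

lemma WidelySeparated.splitArc_inj_zero (H : WidelySeparated h) (hde : ¬ δ.SameCycle d e)
    (hω : δ.SameCycle d ω) (hω' : ω' ∈ saddleSet δ d e)
    (hv : v ∈ Icc (0 : ℝ) 1) (hv' : v' ∈ Icc (0 : ℝ) 1)
    (heq : splitArc h δ d e ω 0 v = splitArc h δ d e ω' 0 v') :
    EqvGen (CircleGlue δ ⊔ CircleGlue (δ * Equiv.swap d e)) (ω, v) (ω', v') := by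
  have hmono : EqvGen (CircleGlue δ) ≤ EqvGen (CircleGlue δ ⊔ CircleGlue (δ * Equiv.swap d e)) :=
    EqvGen.mono le_sup_left
  rw [splitArc_of_left hω] at heq
  rcases hω' with hd | he
  · rw [splitArc_of_left hd] at heq
    exact hmono _ _ (eqvGen_of_departingArc_eq (hω.symm.trans hd) hv hv' heq)
  · rw [splitArc_comm hde, splitArc_of_left he] at heq
    have hne : h (cycleSet δ d) ≠ h (cycleSet δ e) := fun hc => by
      have := H.lt_norm_sub fun h => hde (cycleSet_eq_iff.1 h)
      rw [hc, sub_self, norm_zero] at this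
      linarith
    obtain ⟨hleft, hright⟩ := eqvGen_of_splitArc_zero_eq hne hω he hv hv' heq
    exact (hmono _ _ hleft).trans _ _ _
      ((eqvGen_circleGlue_saddle δ d e).trans _ _ _ (hmono _ _ hright).symm)

lemma mergedCurve_zero_of_le (hne : h (cycleSet δ d) ≠ h (cycleSet δ e)) {t : ℝ} (h0 : 0 ≤ t)
    (ht : t ≤ minimalPeriod δ (δ d)) : mergedCurve h δ d e 0 t
      = (h (cycleSet δ d) + h (cycleSet δ e)) / 2
        + towards (h (cycleSet δ d)) (h (cycleSet δ e))
          * (Circle.exp (2 * π * t / minimalPeriod δ (δ d)) - 1) := by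
  rw [mergedCurve, starCurve_zero_of_le (by exact_mod_cast minimalPeriod_perm_pos ..) h0 ht,
    Circle.exp_arg, towards_swap hne]
  push_cast
  ring

lemma mergedCurve_zero_of_ge {t : ℝ} (h0 : 0 ≤ t) (ht : t ≤ minimalPeriod δ (δ e)) :
    mergedCurve h δ d e 0 (minimalPeriod δ (δ d) + t)
      = (h (cycleSet δ d) + h (cycleSet δ e)) / 2
        + towards (h (cycleSet δ e)) (h (cycleSet δ d))
          * (Circle.exp (2 * π * t / minimalPeriod δ (δ e)) - 1) := by
  rw [mergedCurve, starCurve_zero_of_ge (by exact_mod_cast minimalPeriod_perm_pos ..)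
    (by exact_mod_cast minimalPeriod_perm_pos ..) (by linarith) (by linarith), Circle.exp_arg,
    add_sub_cancel_left]
  push_cast
  ring

lemma splitArc_zero_eq_mergedArc_zero (H : WidelySeparated h) (hde : ¬ δ.SameCycle d e)
    (hv : v ∈ Icc (0 : ℝ) 1) : splitArc h δ d e ω 0 v = mergedArc h δ d e ω 0 v := by
  have hfit {j n : ℕ} (hj : j < n) : 0 ≤ (j + v : ℝ) ∧ (j + v : ℝ) ≤ n := by
    have : (j + 1 : ℝ) ≤ n := by exact_mod_cast hj
    exact ⟨add_nonneg j.cast_nonneg hv.1, by linarith [hv.2]⟩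
  by_cases hω : ω ∈ saddleSet δ d e
  · rcases hω with hd | he
    · have hs := Equiv.Perm.sameCycle_apply_left.2 hd
      have hj := stepsFrom_lt hs
      rw [splitArc_of_left hd, ← iterate_stepsFrom hs, departingArc_zero_iterate,
        ← iterate_mul_swap hde hj, mergedArc_iterate hde (by omega),
        mergedCurve_zero_of_le (fun hc => ?_) (hfit hj).1 (hfit hj).2]
      have := H.lt_norm_sub fun h => hde (cycleSet_eq_iff.1 h)
      rw [hc, sub_self, norm_zero] at this
      linarith
    · have hs := Equiv.Perm.sameCycle_apply_left.2 he
      have hj := stepsFrom_lt hs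
      rw [splitArc_comm hde, splitArc_of_left he, ← iterate_stepsFrom hs, departingArc_zero_iterate,
        ← iterate_mul_swap_add hde hj, mergedArc_iterate hde (by omega), Nat.cast_add, add_assoc,
        mergedCurve_zero_of_ge (hfit hj).1 (hfit hj).2, add_comm (h (cycleSet δ e))]
  · have hiter := iterate_mul_swap_of_not_sameCycle (not_or.1 hω).1 (not_or.1 hω).2
    rw [splitArc_of_not_mem hω, mergedArc_of_not_mem hω, cycleSet_congr hiter, homeDir_congr hiter]

open scoped Classical in
/-- The level circles near a saddle at time `0`, which is crossed when `s` changes its sign. -/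
noncomputable def saddleArc (h : Set Φ → ℂ) (δ : Equiv.Perm Φ) (d e ω : Φ) (s v : ℝ) : ℂ :=
  if 0 ≤ s then splitArc h δ d e ω s v else mergedArc h δ d e ω (-s) v

lemma WidelySeparated.isTransit_saddleArc (H : WidelySeparated h) (hde : ¬ δ.SameCycle d e) :
    IsTransit h (δ * Equiv.swap d e) δ (saddleSet δ d e) (saddleArc h δ d e) where
  above := (H.isHoming_splitArc hde).congr fun ω s hs v _ => if_pos hs.1
  below := (H.isHoming_mergedArc hde).congr fun ω s hs v hv => by
    obtain rfl | hpos := hs.1.eq_or_lt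
    · rw [neg_zero, saddleArc, if_pos le_rfl, splitArc_zero_eq_mergedArc_zero H hde hv]
    · rw [saddleArc, if_neg (by linarith), neg_neg]
  inj_zero ω hω ω' hω' v hv v' hv' heq := by
    rw [saddleArc, saddleArc, if_pos le_rfl, if_pos le_rfl] at heq
    rcases hω with hd | he
    · exact H.splitArc_inj_zero hde hd hω' hv hv' heq
    · have hed : ¬ δ.SameCycle e d := fun h => hde h.symm
      rw [splitArc_comm hde, splitArc_comm hde] at heq
      rw [Equiv.swap_comm]
      exact H.splitArc_inj_zero hed he (saddleSet_comm ▸ hω') hv hv' heq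
  iterate_eq ω hω n := iterate_mul_swap_of_not_sameCycle (not_or.1 hω).1 (not_or.1 hω).2 n

theorem WidelySeparated.exists_isTransit (H : WidelySeparated h) (γ : Equiv.Perm Φ) (hne : d ≠ e) :
    ∃ Q, IsTransit h (γ * Equiv.swap d e) γ (saddleSet γ d e) Q := by
  by_cases hde : γ.SameCycle d e
  · have hsplit := not_sameCycle_mul_swap hne hde
    have hback : γ * Equiv.swap d e * Equiv.swap d e = γ := by
      rw [mul_assoc, Equiv.swap_mul_self, mul_one]
    have hset : saddleSet (γ * Equiv.swap d e) d e = saddleSet γ d e := by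
      ext ω
      have hω := sameCycle_mul_swap_iff (ω := ω) hsplit
      rw [hback, Equiv.Perm.mul_apply, Equiv.swap_apply_left, Equiv.Perm.sameCycle_apply_left] at hω
      exact hω.symm.trans ⟨.inr, fun h => h.elim hde.symm.trans id⟩
    have htransit := (H.isTransit_saddleArc hsplit).reverse
    rw [hback, hset] at htransit
    exact ⟨_, htransit⟩
  · exact ⟨_, H.isTransit_saddleArc hde⟩

end Transit

/-! ### Planar pictures of level sets -/

section Levels

variable {Φ : Type*} {h : Set Φ → ℂ} {γ γ' γm γp : Equiv.Perm Φ} {I I' : Set Φ} {C C' : Φ → ℂ}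
  {A A' : Φ → ℝ → ℂ} {Q : Φ → ℝ → ℝ → ℂ}

/-- A planar picture of a level set: the cones with apex `C ω` over the arcs `A ω`, which are glued
along both `γ` and `γ'`; over the active set `I` only the arcs are drawn, not their cones. -/
structure IsConfig (γ γ' : Equiv.Perm Φ) (I : Set Φ) (C : Φ → ℂ) (A : Φ → ℝ → ℂ) : Prop where
  glue : ∀ ω, A ω 1 = A (γ ω) 0
  glue' : ∀ ω, A ω 1 = A (γ' ω) 0
  centre : ∀ ω ∉ I, C (γ ω) = C ω
  centre' : ∀ ω ∉ I, C (γ' ω) = C ω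
  inj : ∀ ω ω', ∀ r ∈ Icc (0 : ℝ) 1, ∀ r' ∈ Icc (0 : ℝ) 1, ∀ v ∈ Icc (0 : ℝ) 1,
    ∀ v' ∈ Icc (0 : ℝ) 1, (r = 1 ∨ ω ∉ I) → (r' = 1 ∨ ω' ∉ I) →
    AffineMap.lineMap (C ω) (A ω v) r = AffineMap.lineMap (C ω') (A ω' v') r' →
    (r = 0 ∧ r' = 0 ∧ γ.SameCycle ω ω') ∨
      (0 < r ∧ 0 < r' ∧ EqvGen (CircleGlue γ ⊔ CircleGlue γ') (ω, v) (ω', v'))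

lemma IsConfig.congr (H : IsConfig γ γ' I C A) (hC : ∀ ω, C' ω = C ω)
    (hA : ∀ ω, ∀ v ∈ Icc (0 : ℝ) 1, A' ω v = A ω v) : IsConfig γ γ' I C' A' where
  glue ω := by rw [hA ω 1 (by simp), hA _ 0 (by simp), H.glue]
  glue' ω := by rw [hA ω 1 (by simp), hA _ 0 (by simp), H.glue']
  centre ω hω := by rw [hC, hC, H.centre ω hω]
  centre' ω hω := by rw [hC, hC, H.centre' ω hω]
  inj ω ω' r hr r' hr' v hv v' hv' ha ha' he := by
    rw [hC, hC, hA ω v hv, hA ω' v' hv'] at he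
    exact H.inj ω ω' r hr r' hr' v hv v' hv' ha ha' he

lemma IsConfig.mono (H : IsConfig γ γ' I C A) (hI : I ⊆ I') : IsConfig γ γ' I' C A where
  glue := H.glue
  glue' := H.glue'
  centre ω hω := H.centre ω fun h => hω (hI h)
  centre' ω hω := H.centre' ω fun h => hω (hI h)
  inj ω ω' r hr r' hr' v hv v' hv' ha ha' := H.inj ω ω' r hr r' hr' v hv v' hv'
    (ha.imp_right fun h h' => h (hI h')) (ha'.imp_right fun h h' => h (hI h'))

lemma lineMap_home (c : ℂ) (u : Circle) (r : ℝ) :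
    AffineMap.lineMap c (c + u) r = c + r * u := by
  rw [AffineMap.lineMap_apply, vsub_eq_sub, add_sub_cancel_left, vadd_eq_add, Complex.real_smul,
    add_comm]

lemma norm_ofReal_mul_circle {r : ℝ} (hr : 0 ≤ r) (u : Circle) : ‖(r * u : ℂ)‖ = r := by
  rw [norm_mul, Circle.norm_coe, mul_one, Complex.norm_of_nonneg hr]

/-- The centres of the discs during a transit from the homes for `γm` to those for `γp`. -/
noncomputable def transitCentre (h : Set Φ → ℂ) (γm γp : Equiv.Perm Φ) (ω : Φ) (s : ℝ) : ℂ :=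
  ((1 + s) / 2 : ℝ) * h (cycleSet γp ω) + ((1 - s) / 2 : ℝ) * h (cycleSet γm ω)

@[fun_prop]
lemma continuous_transitCentre (h : Set Φ → ℂ) (γm γp : Equiv.Perm Φ) (ω : Φ) :
    Continuous (transitCentre h γm γp ω) := by
  unfold transitCentre
  fun_prop

lemma transitCentre_one (ω : Φ) : transitCentre h γm γp ω 1 = h (cycleSet γp ω) := by
  norm_num [transitCentre]

lemma transitCentre_neg_one (ω : Φ) : transitCentre h γm γp ω (-1) = h (cycleSet γm ω) := by
  norm_num [transitCentre]

lemma transitCentre_of_cycleSet_eq {ω : Φ} (hω : cycleSet γm ω = cycleSet γp ω) (s : ℝ) :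
    transitCentre h γm γp ω s = h (cycleSet γp ω) := by
  rw [transitCentre, hω]
  push_cast
  ring

variable [Finite Φ]

lemma WidelySeparated.eqvGen_of_home_eq (H : WidelySeparated h) {ω ω' : Φ} {r r' v v' : ℝ}
    (hr : r ∈ Icc (0 : ℝ) 1) (hr' : r' ∈ Icc (0 : ℝ) 1) (hv : v ∈ Icc (0 : ℝ) 1)
    (hv' : v' ∈ Icc (0 : ℝ) 1)
    (he : h (cycleSet γ ω) + r * homeDir γ ω v = h (cycleSet γ ω') + r' * homeDir γ ω' v') :
    (r = 0 ∧ r' = 0 ∧ γ.SameCycle ω ω') ∨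
      (0 < r ∧ 0 < r' ∧ EqvGen (CircleGlue γ) (ω, v) (ω', v')) := by
  have hs : γ.SameCycle ω ω' := by
    by_contra hcon
    have hfar := H.lt_norm_sub fun hc => hcon (cycleSet_eq_iff.1 hc)
    have hdiff : h (cycleSet γ ω) - h (cycleSet γ ω')
        = r' * homeDir γ ω' v' - r * homeDir γ ω v := by linear_combination he
    rw [hdiff] at hfar
    have hnear := norm_sub_le (r' * homeDir γ ω' v' : ℂ) (r * homeDir γ ω v)
    rw [norm_ofReal_mul_circle hr.1, norm_ofReal_mul_circle hr'.1] at hnear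
    linarith [hr.2, hr'.2]
  rw [cycleSet_eq_iff.2 hs, add_right_inj] at he
  obtain rfl : r = r' := by
    simpa only [norm_ofReal_mul_circle hr.1, norm_ofReal_mul_circle hr'.1] using congrArg norm he
  obtain rfl | hpos := hr.1.eq_or_lt
  · exact .inl ⟨rfl, rfl, hs⟩
  · have hdir := mul_left_cancel₀ (Complex.ofReal_ne_zero.2 hpos.ne') he
    exact .inr ⟨hpos, hpos, eqvGen_circleGlue_of_homeDir_eq hs hv hv' (Circle.ext hdir)⟩

lemma WidelySeparated.isConfig (H : WidelySeparated h) (hI : ∀ ω, γ ω ∈ I ↔ ω ∈ I)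
    (hγ : ∀ ω ∉ I, γ' ω = γ ω) (hC : ∀ ω ∉ I, C ω = h (cycleSet γ ω))
    (hA : ∀ ω ∉ I, ∀ v ∈ Icc (0 : ℝ) 1, A ω v = h (cycleSet γ ω) + homeDir γ ω v)
    (hglue : ∀ ω, A ω 1 = A (γ ω) 0) (hglue' : ∀ ω, A ω 1 = A (γ' ω) 0)
    (hinj : ∀ ω ∈ I, ∀ ω' ∈ I, ∀ v ∈ Icc (0 : ℝ) 1, ∀ v' ∈ Icc (0 : ℝ) 1,
      A ω v = A ω' v' → EqvGen (CircleGlue γ ⊔ CircleGlue γ') (ω, v) (ω', v'))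
    (hsep : ∀ ω ∈ I, ∀ ω' ∉ I, ∀ v ∈ Icc (0 : ℝ) 1, 1 < ‖A ω v - h (cycleSet γ ω')‖) :
    IsConfig γ γ' I C A := by
  have hcentre : ∀ ω ∉ I, C (γ ω) = C ω := fun ω hω => by
    rw [hC ω hω, hC _ (mt (hI ω).1 hω),
      cycleSet_eq_iff.2 (Equiv.Perm.sameCycle_apply_left.2 (.refl γ ω))]
  have hout : ∀ ω ∉ I, ∀ v ∈ Icc (0 : ℝ) 1, ∀ r : ℝ, AffineMap.lineMap (C ω) (A ω v) r
      = h (cycleSet γ ω) + r * homeDir γ ω v := fun ω hω v hv r => by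
    rw [hA ω hω v hv, hC ω hω, lineMap_home]
  have hmixed : ∀ ω ∈ I, ∀ ω' ∉ I, ∀ v ∈ Icc (0 : ℝ) 1, ∀ v' ∈ Icc (0 : ℝ) 1,
      ∀ r ∈ Icc (0 : ℝ) 1, A ω v ≠ AffineMap.lineMap (C ω') (A ω' v') r := by
    intro ω hω ω' hω' v hv v' hv' r hr heq
    have hfar := hsep ω hω ω' hω' v hv
    rw [heq, hout ω' hω' v' hv', add_sub_cancel_left, norm_ofReal_mul_circle hr.1] at hfar
    linarith [hr.2]
  refine ⟨hglue, hglue', hcentre, fun ω hω => by rw [hγ ω hω, hcentre ω hω], ?_⟩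
  intro ω ω' r hr r' hr' v hv v' hv' ha ha' he
  by_cases hω : ω ∈ I <;> by_cases hω' : ω' ∈ I
  · obtain rfl : r = 1 := ha.resolve_right (not_not_intro hω)
    obtain rfl : r' = 1 := ha'.resolve_right (not_not_intro hω')
    rw [AffineMap.lineMap_apply_one, AffineMap.lineMap_apply_one] at he
    exact .inr ⟨one_pos, one_pos, hinj ω hω ω' hω' v hv v' hv' he⟩
  · obtain rfl : r = 1 := ha.resolve_right (not_not_intro hω)
    rw [AffineMap.lineMap_apply_one] at he
    exact absurd he (hmixed ω hω ω' hω' v hv v' hv' r' hr')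
  · obtain rfl : r' = 1 := ha'.resolve_right (not_not_intro hω')
    rw [AffineMap.lineMap_apply_one] at he
    exact absurd he.symm (hmixed ω' hω' ω hω v' hv' v hv r hr)
  · rw [hout ω hω v hv, hout ω' hω' v' hv'] at he
    exact (H.eqvGen_of_home_eq hr hr' hv hv' he).imp_right
      (And.imp_right (And.imp_right (EqvGen.mono le_sup_left _ _)))

lemma home_glue (h : Set Φ → ℂ) (γ : Equiv.Perm Φ) (ω : Φ) :
    h (cycleSet γ ω) + homeDir γ ω 1 = h (cycleSet γ (γ ω)) + homeDir γ (γ ω) 0 := by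
  rw [homeDir_glue, cycleSet_eq_iff.2 (Equiv.Perm.sameCycle_apply_right.2 (.refl γ ω))]

lemma WidelySeparated.isConfig_home (H : WidelySeparated h) (γ : Equiv.Perm Φ) (I : Set Φ) :
    IsConfig γ γ I (fun ω => h (cycleSet γ ω)) fun ω v => h (cycleSet γ ω) + homeDir γ ω v :=
  (H.isConfig (I := ∅) (by simp) (fun _ _ => rfl) (fun _ _ => rfl) (fun _ _ _ _ => rfl)
    (home_glue h γ) (home_glue h γ) (by simp) (by simp)).mono (empty_subset I)

lemma IsHoming.isConfig (hQ : IsHoming h γ I Q) (H : WidelySeparated h)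
    (hC : ∀ ω ∉ I, C ω = h (cycleSet γ ω)) {s : ℝ} (hs : s ∈ Ioc (0 : ℝ) 1) :
    IsConfig γ γ I C fun ω => Q ω s := by
  have hs' := Ioc_subset_Icc_self hs
  refine H.isConfig hQ.apply_mem_iff (fun _ _ => rfl) hC (fun ω hω => hQ.static ω hω s hs')
    (fun ω => hQ.glue ω s hs') (fun ω => hQ.glue ω s hs') ?_ (hQ.sep s hs')
  simpa only [sup_idem] using hQ.inj s hs

section

variable (hQ : IsTransit h γm γp I Q) (H : WidelySeparated h)
include hQ H

lemma IsTransit.isConfig_of_pos {s : ℝ} (hs : s ∈ Ioc (0 : ℝ) 1) :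
    IsConfig γp γp I (fun ω => transitCentre h γm γp ω s) fun ω => Q ω s :=
  hQ.above.isConfig H
    (fun ω hω => transitCentre_of_cycleSet_eq (cycleSet_congr (hQ.iterate_eq ω hω)) s) hs

lemma IsTransit.isConfig_of_neg {s : ℝ} (hs : s ∈ Ico (-1 : ℝ) 0) :
    IsConfig γm γm I (fun ω => transitCentre h γm γp ω s) fun ω => Q ω s := by
  have hcycle ω (hω : ω ∉ I) : cycleSet γm ω = cycleSet γp ω :=
    cycleSet_congr (hQ.iterate_eq ω hω)
  have hconfig := hQ.below.isConfig H (C := fun ω => transitCentre h γm γp ω s)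
    (fun ω hω => by rw [transitCentre_of_cycleSet_eq (hcycle ω hω), hcycle ω hω])
    (s := -s) ⟨by linarith [hs.2], by linarith [hs.1]⟩
  simpa only [neg_neg] using hconfig

lemma IsTransit.isConfig_zero :
    IsConfig γp γm I (fun ω => transitCentre h γm γp ω 0) fun ω => Q ω 0 := by
  have h₀ : (0 : ℝ) ∈ Icc (0 : ℝ) 1 := by simp
  exact H.isConfig hQ.above.apply_mem_iff (fun ω hω => hQ.iterate_eq ω hω 1)
    (fun ω hω => transitCentre_of_cycleSet_eq (cycleSet_congr (hQ.iterate_eq ω hω)) 0)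
    (fun ω hω => hQ.above.static ω hω 0 h₀) (fun ω => hQ.above.glue ω 0 h₀)
    (fun ω => by simpa using hQ.below.glue ω 0 h₀) hQ.inj_zero (hQ.above.sep 0 h₀)

end

end Levels

/-! ### Permutations changing by transpositions -/

section SwapFamily

open Filter Topology

/-- Permutations depending on a level, constant except at the well separated levels `level i`, at
which the permutation `below` just below the level and the permutation `above` just above it differ
by a transposition. -/
structure SwapFamily (ι Φ : Type*) [DecidableEq Φ] where
  above : ℝ → Equiv.Perm Φ
  below : ℝ → Equiv.Perm Φ
  level : ι → ℝ
  fst : ι → Φ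
  snd : ι → Φ
  gap : ℝ
  gap_pos : 0 < gap
  spacing : Pairwise fun i j => 4 * gap ≤ |level i - level j|
  fst_ne_snd : ∀ i, fst i ≠ snd i
  below_level : ∀ i, below (level i) = above (level i) * Equiv.swap (fst i) (snd i)
  below_eq_above : ∀ c ∉ range level, below c = above c
  below_eq_of_lt : ∀ c c', c < c' → (∀ i, level i ∉ Ioo c c') → below c' = above c

namespace SwapFamily

variable {ι Φ : Type*} [DecidableEq Φ] (S : SwapFamily ι Φ) {i j : ι} {c c' : ℝ}

/-- The flags of the cycles taking part in a swap. -/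
def saddle (i : ι) : Set Φ := saddleSet (S.above (S.level i)) (S.fst i) (S.snd i)

/-- The flags taking part in a swap close to the level `c`. -/
def active (c : ℝ) : Set Φ := {ω | ∃ i, |c - S.level i| < 2 * S.gap ∧ ω ∈ S.saddle i}

variable {S}

lemma index_unique (hi : |c - S.level i| < 2 * S.gap) (hj : |c - S.level j| < 2 * S.gap) :
    i = j := by
  by_contra hne
  have hgap := S.spacing hne
  have htri := abs_sub_le (S.level i) c (S.level j)
  rw [abs_sub_comm (S.level i) c] at htri
  linarith

lemma active_of_near (hi : |c - S.level i| < 2 * S.gap) : S.active c = S.saddle i := by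
  ext ω
  refine ⟨?_, fun hω => ⟨i, hi, hω⟩⟩
  rintro ⟨j, hj, hω⟩
  rwa [index_unique hi hj]

lemma above_eq_of_le (hcc' : c ≤ c') (hc : ∀ i, S.level i ∉ Ioc c c') :
    S.above c' = S.above c := by
  obtain rfl | hlt := hcc'.eq_or_lt
  · rfl
  · rw [← S.below_eq_above c' (by rintro ⟨i, rfl⟩; exact hc i ⟨hlt, le_rfl⟩),
      S.below_eq_of_lt c c' hlt fun i hi => hc i (Ioo_subset_Ioc_self hi)]

lemma below_eq_of_near (hi : |c - S.level i| < 2 * S.gap) (hne : c ≠ S.level i) :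
    S.below c = S.above c := by
  refine S.below_eq_above c ?_
  rintro ⟨j, rfl⟩
  refine hne (congrArg S.level (index_unique (c := S.level j) ?_ hi))
  simpa using S.gap_pos

lemma above_eq_above_level (hi : |c - S.level i| < 2 * S.gap) (hc : S.level i ≤ c) :
    S.above c = S.above (S.level i) := by
  refine above_eq_of_le hc fun j hj => hj.1.ne (congrArg S.level (index_unique hi ?_))
  rw [abs_of_nonneg (by linarith [hj.2])]
  linarith [hj.1, le_abs_self (c - S.level i)]

lemma above_eq_below_level (hi : |c - S.level i| < 2 * S.gap) (hc : c < S.level i) :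
    S.above c = S.below (S.level i) := by
  refine (S.below_eq_of_lt c _ hc fun j hj => hj.2.ne' (congrArg S.level (index_unique hi ?_))).symm
  rw [abs_of_neg (by linarith [hj.1])]
  linarith [hj.2, neg_abs_le (c - S.level i)]

variable (S) in
/-- The time, between `-1` and `1`, of the transit through the swap level of index `i`. -/
noncomputable def time (i : ι) (c : ℝ) : ℝ :=
  projIcc (-1) 1 (by norm_num) ((c - S.level i) / S.gap)

@[fun_prop]
lemma continuous_time : Continuous (S.time i) := by
  have hproj : Continuous fun x : ℝ => (projIcc (-1 : ℝ) 1 (by norm_num) x : ℝ) :=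
    continuous_subtype_val.comp continuous_projIcc
  exact hproj.comp (by fun_prop)

lemma time_mem : S.time i c ∈ Icc (-1 : ℝ) 1 := Subtype.coe_prop _

lemma time_of_le_sub (h : S.gap ≤ c - S.level i) : S.time i c = 1 := by
  rw [time, projIcc_of_right_le]
  rwa [le_div_iff₀ S.gap_pos, one_mul]

lemma time_of_sub_le (h : c - S.level i ≤ -S.gap) : S.time i c = -1 := by
  rw [time, projIcc_of_le_left]
  rw [div_le_iff₀ S.gap_pos]
  linarith

lemma time_pos (h : S.level i < c) : 0 < S.time i c := by
  rw [time, coe_projIcc]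
  exact lt_max_of_lt_right (lt_min one_pos (div_pos (sub_pos.2 h) S.gap_pos))

lemma time_neg (h : c < S.level i) : S.time i c < 0 := by
  rw [time, coe_projIcc]
  exact max_lt (by norm_num)
    ((min_le_right _ _).trans_lt (div_neg_of_neg_of_pos (sub_neg.2 h) S.gap_pos))

lemma time_level : S.time i (S.level i) = 0 := by
  rw [time, coe_projIcc, sub_self, zero_div]
  norm_num

section Glue

variable {α : Type*} {near : ι → ℝ → α} {far : Equiv.Perm Φ → α}

variable (S near far) in
open scoped Classical in
/-- The function of the level `c` which runs through `near i` while `c` passes the swap level of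
index `i` and depends only on the permutation at the other levels. -/
noncomputable def interpolate (c : ℝ) : α :=
  if hc : ∃ i, |c - S.level i| < 2 * S.gap then near hc.choose (S.time hc.choose c)
  else far (S.above c)

lemma interpolate_of_near (hi : |c - S.level i| < 2 * S.gap) :
    S.interpolate near far c = near i (S.time i c) := by
  have hex : ∃ i, |c - S.level i| < 2 * S.gap := ⟨i, hi⟩
  rw [interpolate, dif_pos hex, index_unique hex.choose_spec hi]

lemma interpolate_of_far (habove : ∀ i, near i 1 = far (S.above (S.level i)))
    (hbelow : ∀ i, near i (-1) = far (S.below (S.level i))) (hc : ∀ i, S.gap ≤ |c - S.level i|) :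
    S.interpolate near far c = far (S.above c) := by
  by_cases hex : ∃ i, |c - S.level i| < 2 * S.gap
  · obtain ⟨i, hi⟩ := hex
    have hgap := S.gap_pos
    rw [interpolate_of_near hi]
    rcases le_abs'.1 (hc i) with hle | hle
    · rw [time_of_sub_le hle, hbelow, above_eq_below_level hi (by linarith)]
    · rw [time_of_le_sub hle, habove, above_eq_above_level hi (by linarith)]
  · rw [interpolate, dif_neg hex]

lemma eventually_above_eq (hc : ∀ i, 2 * S.gap ≤ |c - S.level i|) :
    ∀ᶠ c' in 𝓝 c, S.above c' = S.above c ∧ ∀ i, S.gap ≤ |c' - S.level i| := by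
  filter_upwards [Metric.ball_mem_nhds c S.gap_pos] with c' hc'
  rw [Metric.mem_ball, Real.dist_eq] at hc'
  have hfar i : S.gap ≤ |c' - S.level i| := by
    have htri := abs_sub_le c c' (S.level i)
    rw [abs_sub_comm c c'] at htri
    linarith [hc i]
  refine ⟨?_, hfar⟩
  have hgap := S.gap_pos
  rw [abs_lt] at hc'
  rcases le_total c' c with hle | hle
  · refine (above_eq_of_le hle fun i hi => ?_).symm
    rcases le_abs'.1 (hc i) with h | h <;> linarith [hi.1, hi.2]
  · refine above_eq_of_le hle fun i hi => ?_
    rcases le_abs'.1 (hc i) with h | h <;> linarith [hi.1, hi.2]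

lemma continuousOn_interpolate {Y Z : Type*} [TopologicalSpace Y] [TopologicalSpace Z] {K : Set Y}
    {near : ι → ℝ → Y → Z} {far : Equiv.Perm Φ → Y → Z}
    (hnear : ∀ i, ContinuousOn (uncurry (near i)) (Icc (-1) 1 ×ˢ K))
    (hfar : ∀ γ, ContinuousOn (far γ) K)
    (habove : ∀ i, ∀ y ∈ K, near i 1 y = far (S.above (S.level i)) y)
    (hbelow : ∀ i, ∀ y ∈ K, near i (-1) y = far (S.below (S.level i)) y) :
    ContinuousOn (fun p : ℝ × Y => S.interpolate (near · · p.2) (far · p.2) p.1) (univ ×ˢ K) := by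
  rintro ⟨c, y⟩ ⟨-, hy⟩
  by_cases hex : ∃ i, |c - S.level i| < 2 * S.gap
  · obtain ⟨i, hi⟩ := hex
    have hev : ∀ᶠ c' in 𝓝 c, |c' - S.level i| < 2 * S.gap :=
      (by fun_prop : Continuous fun c' => |c' - S.level i|).continuousAt.eventually_lt_const hi
    have htime : ContinuousOn (fun p : ℝ × Y => (S.time i p.1, p.2)) (univ ×ˢ K) := by fun_prop
    have htransit := (hnear i).comp htime fun p hp => ⟨time_mem, hp.2⟩
    refine (htransit (c, y) ⟨mem_univ c, hy⟩).congr_of_eventuallyEq ?_ (interpolate_of_near hi)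
    filter_upwards [nhdsWithin_le_nhds (continuousAt_fst.eventually hev)] with p hp
    exact interpolate_of_near hp
  · push Not at hex
    have hfst : ContinuousOn (fun p : ℝ × Y => far (S.above c) p.2) (univ ×ˢ K) :=
      (hfar (S.above c)).comp continuousOn_snd fun p hp => hp.2
    have hfar_eq {p : ℝ × Y} (hp : p.2 ∈ K) (hc : ∀ i, S.gap ≤ |p.1 - S.level i|) :
        S.interpolate (near · · p.2) (far · p.2) p.1 = far (S.above p.1) p.2 :=
      interpolate_of_far (fun i => habove i p.2 hp) (fun i => hbelow i p.2 hp) hc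
    refine (hfst (c, y) ⟨mem_univ c, hy⟩).congr_of_eventuallyEq ?_
      (hfar_eq hy fun i => by linarith [S.gap_pos, hex i])
    filter_upwards [nhdsWithin_le_nhds (continuousAt_fst.eventually (eventually_above_eq hex)),
      self_mem_nhdsWithin] with p hp hpK
    rw [hfar_eq hpK.2 hp.2, hp.1]

end Glue

section Transits

variable {h : Set Φ → ℂ} {Q : ι → Φ → ℝ → ℝ → ℂ} {ω : Φ} {v : ℝ}

variable (S h) in
/-- The centre of the level circle through a flag, as a function of the level. -/
noncomputable def centre (ω : Φ) : ℝ → ℂ :=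
  S.interpolate (fun i => transitCentre h (S.below (S.level i)) (S.above (S.level i)) ω)
    fun γ => h (cycleSet γ ω)

variable (S h Q) in
/-- The arc of the level curves belonging to a flag, as a function of the level: a transit `Q i`
at the swap levels, and unit circles around the homes `h` elsewhere. -/
noncomputable def arc (ω : Φ) (c v : ℝ) : ℂ :=
  S.interpolate (fun i s => Q i ω s v) (fun γ => h (cycleSet γ ω) + homeDir γ ω v) c

@[fun_prop]
lemma continuous_centre : Continuous (S.centre h ω) := by
  have hC := continuousOn_interpolate (S := S) (K := (univ : Set Unit))
    (near := fun i s _ => transitCentre h (S.below (S.level i)) (S.above (S.level i)) ω s)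
    (far := fun γ _ => h (cycleSet γ ω)) (fun i => by unfold uncurry; fun_prop)
    (fun γ => continuousOn_const) (fun i _ _ => transitCentre_one ω)
    (fun i _ _ => transitCentre_neg_one ω)
  rw [univ_prod_univ, continuousOn_univ] at hC
  exact hC.comp (Continuous.prodMk_left ())

lemma centre_of_far (hc : ∀ i, S.gap ≤ |c - S.level i|) :
    S.centre h ω c = h (cycleSet (S.above c) ω) :=
  interpolate_of_far (fun _ => transitCentre_one ω) (fun _ => transitCentre_neg_one ω) hc

variable (hQ : ∀ i, IsTransit h (S.below (S.level i)) (S.above (S.level i)) (S.saddle i) (Q i))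
include hQ

lemma continuousOn_arc : ContinuousOn (uncurry (S.arc h Q ω)) (univ ×ˢ Icc 0 1) :=
  continuousOn_interpolate (S := S) (near := fun i s v => Q i ω s v)
    (far := fun γ v => h (cycleSet γ ω) + homeDir γ ω v) (fun i => (hQ i).continuousOn ω)
    (fun γ => by fun_prop) (fun i => (hQ i).above.home ω) fun i => (hQ i).below.home ω

lemma arc_of_far (hv : v ∈ Icc (0 : ℝ) 1) (hc : ∀ i, S.gap ≤ |c - S.level i|) :
    S.arc h Q ω c v = h (cycleSet (S.above c) ω) + homeDir (S.above c) ω v :=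
  interpolate_of_far (far := fun γ => h (cycleSet γ ω) + homeDir γ ω v)
    (fun i => (hQ i).above.home ω v hv) (fun i => (hQ i).below.home ω v hv) hc

lemma isConfig_of_near [Finite Φ] (H : WidelySeparated h) (hi : |c - S.level i| < 2 * S.gap) :
    IsConfig (S.above c) (S.below c) (S.saddle i) (fun ω => S.centre h ω c)
      fun ω => S.arc h Q ω c := by
  refine IsConfig.congr
    (C := fun ω => transitCentre h (S.below (S.level i)) (S.above (S.level i)) ω (S.time i c))
    (A := fun ω => Q i ω (S.time i c)) ?_ (fun ω => interpolate_of_near hi)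
    fun ω v _ => interpolate_of_near hi
  rcases lt_trichotomy c (S.level i) with hlt | rfl | hlt
  · rw [below_eq_of_near hi hlt.ne, above_eq_below_level hi hlt]
    exact (hQ i).isConfig_of_neg H ⟨time_mem.1, time_neg hlt⟩
  · rw [time_level]
    exact (hQ i).isConfig_zero H
  · rw [below_eq_of_near hi hlt.ne', above_eq_above_level hi hlt.le]
    exact (hQ i).isConfig_of_pos H ⟨time_pos hlt, time_mem.2⟩

lemma isConfig_centre_arc [Finite Φ] (H : WidelySeparated h) (c : ℝ) :
    IsConfig (S.above c) (S.below c) (S.active c) (fun ω => S.centre h ω c)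
      fun ω => S.arc h Q ω c := by
  by_cases hex : ∃ i, |c - S.level i| < 2 * S.gap
  · obtain ⟨i, hi⟩ := hex
    rw [active_of_near hi]
    exact isConfig_of_near hQ H hi
  · push Not at hex
    have hfar i : S.gap ≤ |c - S.level i| := by linarith [S.gap_pos, hex i]
    rw [S.below_eq_above c (by rintro ⟨i, rfl⟩; simpa [S.gap_pos.not_ge] using hfar i)]
    exact (H.isConfig_home (S.above c) _).congr (fun ω => centre_of_far hfar)
      fun ω v hv => arc_of_far hQ hv hfar

end Transits

theorem exists_isConfig [Finite Φ] (S : SwapFamily ι Φ) :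
    ∃ (C : Φ → ℝ → ℂ) (A : Φ → ℝ → ℝ → ℂ), (∀ ω, Continuous (C ω)) ∧
      (∀ ω, ContinuousOn (uncurry (A ω)) (univ ×ˢ Icc 0 1)) ∧
      ∀ c, IsConfig (S.above c) (S.below c) (S.active c) (fun ω => C ω c) fun ω => A ω c := by
  obtain ⟨h, H⟩ := exists_widelySeparated (Set Φ)
  have htransit i := H.exists_isTransit (S.above (S.level i)) (S.fst_ne_snd i)
  simp only [← S.below_level] at htransit
  choose Q hQ using htransit
  exact ⟨S.centre h, S.arc h Q, fun ω => continuous_centre, fun ω => continuousOn_arc hQ,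
    isConfig_centre_arc hQ H⟩

end SwapFamily

end SwapFamily

lemma exists_pos_forall_le {ι : Type*} [Finite ι] {f : ι → ℝ} (hf : ∀ i, 0 < f i) :
    ∃ δ > 0, ∀ i, δ ≤ f i := by
  cases isEmpty_or_nonempty ι
  · exact ⟨1, one_pos, fun i => isEmptyElim i⟩
  · obtain ⟨i, hi⟩ := Finite.exists_min f
    exact ⟨f i, hf i, hi⟩

/-! ### Flags and height functions -/

/-- The flags of a triangulated oriented surface, which correspond to the triangles of the
barycentric subdivision, with the three reflections in their sides and with their orientation: `r₀`,
`r₁` and `r₂` change the vertex, the edge and the face of a flag. -/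
structure FlagSystem (Φ : Type*) where
  r₀ : Φ → Φ
  r₁ : Φ → Φ
  r₂ : Φ → Φ
  sgn : Φ → Bool
  r₀_r₀ : ∀ ω, r₀ (r₀ ω) = ω
  r₁_r₁ : ∀ ω, r₁ (r₁ ω) = ω
  r₂_r₂ : ∀ ω, r₂ (r₂ ω) = ω
  sgn_r₀ : ∀ ω, sgn (r₀ ω) = !sgn ω
  sgn_r₁ : ∀ ω, sgn (r₁ ω) = !sgn ω
  sgn_r₂ : ∀ ω, sgn (r₂ ω) = !sgn ω
  comm : ∀ ω, r₂ (r₀ ω) = r₀ (r₂ ω)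
  ne : ∀ ω, r₀ ω ≠ r₂ ω

/-- The parameter domain of a barycentric triangle: the corners `(0, 0)`, `(1, 0)` and `(1, 1)`
stand for the centre of the face, for the midpoint of the edge and for the vertex. -/
def flagTriangle : Set (ℝ × ℝ) := {p | 0 ≤ p.2 ∧ p.2 ≤ p.1 ∧ p.1 ≤ 1}

namespace FlagSystem

variable {Φ : Type*} (F : FlagSystem Φ)

/-- Adjacent barycentric triangles are glued along their common side. -/
def Step (x y : Φ × (ℝ × ℝ)) : Prop :=
  y.2 = x.2 ∧ ((x.2.2 = 0 ∧ y.1 = F.r₀ x.1) ∨ (x.2.1 = x.2.2 ∧ y.1 = F.r₁ x.1) ∨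
    (x.2.1 = 1 ∧ y.1 = F.r₂ x.1))

section Step

variable {F} {x y : Φ × (ℝ × ℝ)}

lemma Step.symm (h : F.Step x y) : F.Step y x := by
  obtain ⟨hp, h⟩ := h
  refine ⟨hp.symm, ?_⟩
  rw [hp]
  rcases h with ⟨hside, hω⟩ | ⟨hside, hω⟩ | ⟨hside, hω⟩
  · exact .inl ⟨hside, by rw [hω, F.r₀_r₀]⟩
  · exact .inr (.inl ⟨hside, by rw [hω, F.r₁_r₁]⟩)
  · exact .inr (.inr ⟨hside, by rw [hω, F.r₂_r₂]⟩)

lemma Step.sgn_eq (h : F.Step x y) : F.sgn y.1 = !F.sgn x.1 := by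
  obtain ⟨-, ⟨-, hω⟩ | ⟨-, hω⟩ | ⟨-, hω⟩⟩ := h <;> rw [hω]
  exacts [F.sgn_r₀ _, F.sgn_r₁ _, F.sgn_r₂ _]

end Step

open scoped Classical in
/-- Turn around faces outside `P` and around vertices inside `P`: the positive flags cross an edge
side, the negative flags go on around the corner. -/
noncomputable def turn (P : Φ → Prop) (ω : Φ) : Φ :=
  if F.sgn ω then (if P ω then F.r₂ ω else F.r₀ ω) else F.r₁ ω

section Turn

variable {F} {P P' : Φ → Prop} {ω : Φ}

lemma turn_of_sgn_of (hs : F.sgn ω = true) (hP : P ω) : F.turn P ω = F.r₂ ω := by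
  rw [turn, if_pos hs, if_pos hP]

lemma turn_of_sgn_of_not (hs : F.sgn ω = true) (hP : ¬P ω) : F.turn P ω = F.r₀ ω := by
  rw [turn, if_pos hs, if_neg hP]

lemma turn_of_not_sgn (hs : F.sgn ω = false) : F.turn P ω = F.r₁ ω := by
  rw [turn, if_neg (by simp [hs])]

lemma turn_congr (h : F.sgn ω = true → (P ω ↔ P' ω)) : F.turn P ω = F.turn P' ω := by
  unfold turn
  split_ifs <;> simp_all

variable (F P ω) in
lemma sgn_turn : F.sgn (F.turn P ω) = !F.sgn ω := by
  unfold turn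
  split_ifs
  exacts [F.sgn_r₂ ω, F.sgn_r₀ ω, F.sgn_r₁ ω]

lemma turn_injective (h₀ : ∀ ω, P (F.r₀ ω) ↔ P ω) (h₂ : ∀ ω, P (F.r₂ ω) ↔ P ω) :
    Injective (F.turn P) := by
  have hP {ω} (hs : F.sgn ω = true) : P (F.turn P ω) ↔ P ω := by
    by_cases hω : P ω
    · rw [turn_of_sgn_of hs hω, h₂]
    · rw [turn_of_sgn_of_not hs hω, h₀]
  intro x y hxy
  have hsgn : F.sgn x = F.sgn y := by
    simpa only [sgn_turn, Bool.not_inj_iff] using congrArg F.sgn hxy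
  rcases hx : F.sgn x with _ | _
  · rw [turn_of_not_sgn hx, turn_of_not_sgn (hsgn ▸ hx)] at hxy
    exact LeftInverse.injective F.r₁_r₁ hxy
  · have hy := hsgn ▸ hx
    have hPxy : P x ↔ P y := by rw [← hP hx, ← hP hy, hxy]
    by_cases hPx : P x
    · rw [turn_of_sgn_of hx hPx, turn_of_sgn_of hy (hPxy.1 hPx)] at hxy
      exact LeftInverse.injective F.r₂_r₂ hxy
    · rw [turn_of_sgn_of_not hx hPx, turn_of_sgn_of_not hy (hPx ∘ hPxy.2)] at hxy
      exact LeftInverse.injective F.r₀_r₀ hxy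

end Turn

/-- Values at the centres of the faces, at the midpoints of the edges and at the vertices, which
determine a map on the surface that is affine on the barycentric triangles. -/
structure CornerMap (E : Type*) where
  face : Φ → E
  edge : Φ → E
  vertex : Φ → E
  face_r₀ : ∀ ω, face (F.r₀ ω) = face ω
  face_r₁ : ∀ ω, face (F.r₁ ω) = face ω
  edge_r₀ : ∀ ω, edge (F.r₀ ω) = edge ω
  edge_r₂ : ∀ ω, edge (F.r₂ ω) = edge ω
  vertex_r₁ : ∀ ω, vertex (F.r₁ ω) = vertex ω
  vertex_r₂ : ∀ ω, vertex (F.r₂ ω) = vertex ω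

namespace CornerMap

section Interp

variable {F} {E : Type*} [AddCommGroup E] [Module ℝ E] (Y : F.CornerMap E)

/-- The affine interpolation on a barycentric triangle. -/
def interp (ω : Φ) (p : ℝ × ℝ) : E :=
  (1 - p.1) • Y.face ω + (p.1 - p.2) • Y.edge ω + p.2 • Y.vertex ω

variable {Y} {ω : Φ} {p : ℝ × ℝ}

lemma interp_eq_of_step {x y : Φ × (ℝ × ℝ)} (h : F.Step x y) :
    Y.interp y.1 y.2 = Y.interp x.1 x.2 := by
  obtain ⟨hp, ⟨hside, hω⟩ | ⟨hside, hω⟩ | ⟨hside, hω⟩⟩ := h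
  · simp [interp, hp, hω, hside, Y.face_r₀, Y.edge_r₀]
  · simp [interp, hp, hω, hside, Y.face_r₁, Y.vertex_r₁]
  · simp [interp, hp, hω, hside, Y.edge_r₂, Y.vertex_r₂]

lemma interp_mem {s : Set E} (hs : Convex ℝ s) (hface : Y.face ω ∈ s) (hedge : Y.edge ω ∈ s)
    (hvertex : Y.vertex ω ∈ s) (hp : p ∈ flagTriangle) : Y.interp ω p ∈ s := by
  obtain ⟨h0, h01, h1⟩ := hp
  have hsum := hs.sum_mem (t := Finset.univ) (w := ![1 - p.1, p.1 - p.2, p.2])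
    (z := ![Y.face ω, Y.edge ω, Y.vertex ω]) ?_ ?_ ?_
  · simpa [interp, Fin.sum_univ_three] using hsum
  · simp [Fin.forall_fin_succ, h0, h01, h1]
  · simp [Fin.sum_univ_three]
  · simp [Fin.forall_fin_succ, hface, hedge, hvertex]

end Interp

@[fun_prop]
lemma continuous_interp {F : FlagSystem Φ} {E : Type*} [NormedAddCommGroup E] [NormedSpace ℝ E]
    {Y : F.CornerMap E} {ω : Φ} : Continuous (Y.interp ω) := by
  unfold interp
  fun_prop

end CornerMap

/-- A height function on the surface that is affine on the barycentric triangles, high on the faces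
and low on the vertices, so that it has a saddle on each edge, and no two saddles are at the same
height. -/
structure Height extends F.CornerMap ℝ where
  edge_lt_face : ∀ ω, edge ω < face ω
  vertex_lt_edge : ∀ ω, vertex ω < edge ω
  face_le_one : ∀ ω, face ω ≤ 1
  neg_one_le_vertex : ∀ ω, -1 ≤ vertex ω
  eq_or_eq_of_edge_eq : ∀ ω ω', edge ω = edge ω' → F.sgn ω = F.sgn ω' →
    ω' = ω ∨ ω' = F.r₀ (F.r₂ ω)

namespace Height

variable {F} (A : F.Height)

/-- The height of a point of a barycentric triangle. -/
def level (ω : Φ) (p : ℝ × ℝ) : ℝ := A.interp ω p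

variable {A} {ω ω' : Φ} {p : ℝ × ℝ} {c c' δ : ℝ}

lemma level_eq : A.level ω p =
    (1 - p.1) * A.face ω + (p.1 - p.2) * A.edge ω + p.2 * A.vertex ω := rfl

@[fun_prop]
lemma continuous_level : Continuous (A.level ω) := CornerMap.continuous_interp

lemma vertex_lt_face : A.vertex ω < A.face ω := (A.vertex_lt_edge ω).trans (A.edge_lt_face ω)

lemma level_mem (hp : p ∈ flagTriangle) : A.level ω p ∈ Icc (-1 : ℝ) 1 := by
  have hface := A.face_le_one ω
  have hvertex := A.neg_one_le_vertex ω
  have hedge_face := A.edge_lt_face ω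
  have hvertex_edge := A.vertex_lt_edge ω
  exact CornerMap.interp_mem (convex_Icc _ _) ⟨by linarith, hface⟩ ⟨by linarith, by linarith⟩
    ⟨hvertex, by linarith⟩ hp

lemma level_face_corner : A.level ω (0, 0) = A.face ω := by simp [level_eq]

lemma level_vertex_corner : A.level ω (1, 1) = A.vertex ω := by simp [level_eq]

lemma level_eq_of_step {x y : Φ × (ℝ × ℝ)} (h : F.Step x y) :
    A.level y.1 y.2 = A.level x.1 x.2 :=
  CornerMap.interp_eq_of_step h

lemma exists_sgn_edge_eq (A : F.Height) (ω : Φ) : ∃ ω', F.sgn ω' = true ∧ A.edge ω' = A.edge ω := by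
  rcases hs : F.sgn ω with _ | _
  · exact ⟨F.r₀ ω, by rw [F.sgn_r₀, hs, Bool.not_false], A.edge_r₀ ω⟩
  · exact ⟨ω, hs, rfl⟩

variable [Finite Φ]

variable (A) in
/-- The permutation of the flags which follows the oriented level curves just above a level. -/
noncomputable def up (c : ℝ) : Equiv.Perm Φ :=
  .ofBijective (F.turn (c < A.edge ·)) (Finite.injective_iff_bijective.1
    (turn_injective (fun ω => by rw [A.edge_r₀]) (fun ω => by rw [A.edge_r₂])))

variable (A) in
/-- The permutation of the flags which follows the oriented level curves just below a level. -/
noncomputable def down (c : ℝ) : Equiv.Perm Φ :=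
  .ofBijective (F.turn (c ≤ A.edge ·)) (Finite.injective_iff_bijective.1
    (turn_injective (fun ω => by rw [A.edge_r₀]) (fun ω => by rw [A.edge_r₂])))

lemma up_apply : A.up c ω = F.turn (c < A.edge ·) ω := rfl

lemma down_apply : A.down c ω = F.turn (c ≤ A.edge ·) ω := rfl

lemma down_eq_up (hc : c ∉ range A.edge) : A.down c = A.up c := by
  ext ω : 1
  rw [up_apply, down_apply]
  exact turn_congr fun _ => ⟨fun h => h.lt_of_ne fun heq => hc ⟨ω, heq.symm⟩, le_of_lt⟩

lemma down_eq_up_of_lt (hcc' : c < c') (hc : ∀ ω, A.edge ω ∉ Ioo c c') : A.down c' = A.up c := by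
  ext ω : 1
  rw [up_apply, down_apply]
  exact turn_congr fun _ => ⟨hcc'.trans_le, fun h => not_lt.1 fun h' => hc ω ⟨h, h'⟩⟩

variable (A) in
lemma down_edge [DecidableEq Φ] (hs : F.sgn ω = true) :
    A.down (A.edge ω) = A.up (A.edge ω) * Equiv.swap ω (F.r₀ (F.r₂ ω)) := by
  have hs' : F.sgn (F.r₀ (F.r₂ ω)) = true := by rw [F.sgn_r₀, F.sgn_r₂, Bool.not_not, hs]
  have hedge : A.edge (F.r₀ (F.r₂ ω)) = A.edge ω := by rw [A.edge_r₀, A.edge_r₂]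
  ext x : 1
  rw [Equiv.Perm.mul_apply, up_apply, down_apply]
  by_cases hx : x = ω
  · rw [hx, Equiv.swap_apply_left, turn_of_sgn_of hs (le_refl (A.edge ω)),
      turn_of_sgn_of_not hs' hedge.le.not_gt, F.r₀_r₀]
  by_cases hx' : x = F.r₀ (F.r₂ ω)
  · rw [hx', Equiv.swap_apply_right, turn_of_sgn_of hs' hedge.ge,
      turn_of_sgn_of_not hs (lt_irrefl (A.edge ω)), F.comm, F.r₂_r₂]
  rw [Equiv.swap_apply_of_ne_of_ne hx hx']
  refine turn_congr fun hsx => ⟨fun h => h.lt_of_ne fun heq => ?_, le_of_lt⟩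
  exact (A.eq_or_eq_of_edge_eq ω x heq (hs.trans hsx.symm)).elim hx hx'

variable (A c δ) in
/-- The flags of the cycles which pass a saddle at a height closer than `δ` to `c`. -/
def active : Set Φ :=
  {ω | ∃ ω₀, |c - A.edge ω₀| < δ ∧ (A.up (A.edge ω₀)).SameCycle ω₀ ω}

lemma exists_edge_gap (A : F.Height) :
    ∃ ε > 0, ∀ ω ω', A.edge ω ≠ A.edge ω' → ε ≤ |A.edge ω - A.edge ω'| := by
  obtain ⟨ε, hε, h⟩ := exists_pos_forall_le
    (f := fun x : {x : Φ × Φ // A.edge x.1 ≠ A.edge x.2} => |A.edge x.1.1 - A.edge x.1.2|)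
    fun x => abs_pos.2 (sub_ne_zero.2 x.2)
  exact ⟨ε, hε, fun ω ω' hne => h ⟨(ω, ω'), hne⟩⟩

lemma exists_swapFamily [DecidableEq Φ] (A : F.Height) (hδ : 0 < δ) :
    ∃ S : SwapFamily (range A.edge) Φ, S.above = A.up ∧ S.below = A.down ∧
      ∀ c, S.active c ⊆ A.active c δ := by
  obtain ⟨ε, hε, hgap⟩ := A.exists_edge_gap
  have hsaddle (i : range A.edge) :
      ∃ ω, A.edge ω = i ∧ A.down i = A.up i * Equiv.swap ω (F.r₀ (F.r₂ ω)) := by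
    obtain ⟨_, ω, rfl⟩ := i
    obtain ⟨ω', hs, hedge⟩ := A.exists_sgn_edge_eq ω
    exact ⟨ω', hedge, by simpa only [hedge] using A.down_edge hs⟩
  choose saddle hedge hdown using hsaddle
  refine ⟨{
    above := A.up
    below := A.down
    level := Subtype.val
    fst := saddle
    snd i := F.r₀ (F.r₂ (saddle i))
    gap := min (ε / 4) (δ / 2)
    gap_pos := by positivity
    spacing := ?_
    fst_ne_snd i h := F.ne (saddle i) (by rw [← F.r₀_r₀ (F.r₂ (saddle i)), ← h])
    below_level := hdown
    below_eq_above c hc := down_eq_up (by rwa [Subtype.range_coe] at hc)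
    below_eq_of_lt c c' hcc' hc := down_eq_up_of_lt hcc' fun ω => hc ⟨_, ω, rfl⟩ },
    rfl, rfl, ?_⟩
  · rintro ⟨_, ω, rfl⟩ ⟨_, ω', rfl⟩ hne
    linarith [hgap ω ω' fun h => hne (Subtype.ext h), min_le_left (ε / 4) (δ / 2)]
  · rintro c ω ⟨i, hi, hω⟩
    have hi' : |c - i| < δ := by linarith [min_le_right (ε / 4) (δ / 2)]
    rcases hω with hω | hω
    · exact ⟨_, by rwa [hedge], by rwa [hedge]⟩
    · have hedge' : A.edge (F.r₀ (F.r₂ (saddle i))) = i := by rw [A.edge_r₀, A.edge_r₂, hedge]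
      exact ⟨_, by rwa [hedge'], by rwa [hedge']⟩

theorem exists_isConfig (A : F.Height) (hδ : 0 < δ) :
    ∃ (C : Φ → ℝ → ℂ) (B : Φ → ℝ → ℝ → ℂ), (∀ ω, Continuous (C ω)) ∧
      (∀ ω, ContinuousOn (uncurry (B ω)) (univ ×ˢ Icc 0 1)) ∧
      ∀ c, IsConfig (A.up c) (A.down c) (A.active c δ) (fun ω => C ω c) fun ω => B ω c := by
  classical
  obtain ⟨S, habove, hbelow, hactive⟩ := A.exists_swapFamily hδ
  obtain ⟨C, B, hC, hB, hconfig⟩ := S.exists_isConfig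
  rw [habove, hbelow] at hconfig
  exact ⟨C, B, hC, hB, fun c => (hconfig c).mono (hactive c)⟩

lemma mem_of_sameCycle {γ : Equiv.Perm Φ} {s : Set Φ} (hs : MapsTo γ s s) (hω : ω ∈ s)
    (h : γ.SameCycle ω ω') : ω' ∈ s := by
  obtain ⟨n, rfl⟩ := sameCycle_iff_exists_iterate.1 h
  exact hs.iterate n hω

lemma sameCycle_face (h : (A.up c).SameCycle ω ω') (hc : ∀ x, A.face x = A.face ω → A.edge x ≤ c) :
    A.face ω' = A.face ω ∧ EqvGen F.Step (ω, (0, 0)) (ω', (0, 0)) := by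
  refine mem_of_sameCycle (s := {x | A.face x = A.face ω ∧
    EqvGen F.Step (ω, (0, 0)) (x, (0, 0))}) ?_ ⟨rfl, .refl _⟩ h
  rintro x ⟨hx, hωx⟩
  rw [up_apply]
  rcases hs : F.sgn x with _ | _
  · rw [turn_of_not_sgn hs]
    exact ⟨(A.face_r₁ x).trans hx, hωx.trans _ _ _ (.rel _ _ ⟨rfl, .inr (.inl ⟨rfl, rfl⟩)⟩)⟩
  · rw [turn_of_sgn_of_not hs (hc x hx).not_gt]
    exact ⟨(A.face_r₀ x).trans hx, hωx.trans _ _ _ (.rel _ _ ⟨rfl, .inl ⟨rfl, rfl⟩⟩)⟩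

lemma sameCycle_vertex (h : (A.up c).SameCycle ω ω')
    (hc : ∀ x, A.vertex x = A.vertex ω → c < A.edge x) :
    A.vertex ω' = A.vertex ω ∧ EqvGen F.Step (ω, (1, 1)) (ω', (1, 1)) := by
  refine mem_of_sameCycle (s := {x | A.vertex x = A.vertex ω ∧
    EqvGen F.Step (ω, (1, 1)) (x, (1, 1))}) ?_ ⟨rfl, .refl _⟩ h
  rintro x ⟨hx, hωx⟩
  rw [up_apply]
  rcases hs : F.sgn x with _ | _
  · rw [turn_of_not_sgn hs]
    exact ⟨(A.vertex_r₁ x).trans hx, hωx.trans _ _ _ (.rel _ _ ⟨rfl, .inr (.inl ⟨rfl, rfl⟩)⟩)⟩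
  · rw [turn_of_sgn_of hs (hc x hx)]
    exact ⟨(A.vertex_r₂ x).trans hx, hωx.trans _ _ _ (.rel _ _ ⟨rfl, .inr (.inr ⟨rfl, rfl⟩)⟩)⟩

lemma not_active (hface : ∀ x, A.edge x + 2 * δ ≤ A.face x)
    (hvertex : ∀ x, A.vertex x + 2 * δ ≤ A.edge x)
    (hp : p ∈ flagTriangle) (h : p.1 < δ / 2 ∨ 1 - p.2 < δ / 2) :
    ω ∉ A.active (A.level ω p) δ := by
  rintro ⟨ω₀, hlt, hcycle⟩
  obtain ⟨h0, h01, h1⟩ := hp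
  have := A.face_le_one ω
  have := A.neg_one_le_vertex ω
  have := A.edge_lt_face ω
  have := A.vertex_lt_edge ω
  rw [abs_lt] at hlt
  rcases h with h | h
  · have hlevel : A.face ω - δ < A.level ω p := by
      rw [level_eq]
      nlinarith
    have hω₀ := (sameCycle_face hcycle.symm fun x hx => by linarith [hface x]).1
    linarith [hface ω₀]
  · have hlevel : A.level ω p < A.vertex ω + δ := by
      rw [level_eq]
      nlinarith
    have hω₀ := (sameCycle_vertex hcycle.symm fun x hx => by linarith [hvertex x]).1
    linarith [hvertex ω₀]

end Height

end FlagSystem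

/-! ### Level curves in barycentric triangles -/

section FlagCoordinates

variable {p q : ℝ × ℝ} {η : ℝ}

/-- The angular coordinate in a barycentric triangle, away from its face and vertex corners. It is
`0` on the side joining these corners and `1` on the other two sides. -/
noncomputable def flagAngle (p : ℝ × ℝ) : ℝ := 1 - min (p.2 / p.1) ((1 - p.1) / (1 - p.2))

lemma flagAngle_mem (hp : p ∈ flagTriangle) : flagAngle p ∈ Icc (0 : ℝ) 1 := by
  obtain ⟨h0, h01, h1⟩ := hp
  have hle : p.2 / p.1 ≤ 1 := div_le_one_of_le₀ h01 (h0.trans h01)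
  have hnonneg : 0 ≤ min (p.2 / p.1) ((1 - p.1) / (1 - p.2)) :=
    le_min (div_nonneg h0 (h0.trans h01)) (div_nonneg (by linarith) (by linarith))
  exact ⟨sub_nonneg.2 ((min_le_left _ _).trans hle), sub_le_self _ hnonneg⟩

lemma flagAngle_eq_one_iff (hp : p ∈ flagTriangle) (h0 : 0 < p.1) (h1 : p.2 < 1) :
    flagAngle p = 1 ↔ p.2 = 0 ∨ p.1 = 1 := by
  have hfst : p.2 / p.1 = 0 ↔ p.2 = 0 := by simp [h0.ne']
  have hsnd : (1 - p.1) / (1 - p.2) = 0 ↔ p.1 = 1 := by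
    rw [div_eq_zero_iff, sub_eq_zero, or_iff_left (by linarith : 1 - p.2 ≠ 0), eq_comm]
  have hmin : flagAngle p = 1 ↔ min (p.2 / p.1) ((1 - p.1) / (1 - p.2)) = 0 := sub_eq_self
  have hfst' : 0 ≤ p.2 / p.1 := div_nonneg hp.1 h0.le
  have hsnd' : 0 ≤ (1 - p.1) / (1 - p.2) := div_nonneg (by linarith [hp.2.2]) (by linarith)
  rw [hmin, ← hfst, ← hsnd]
  refine ⟨fun h => ?_, ?_⟩
  · rcases min_choice (p.2 / p.1) ((1 - p.1) / (1 - p.2)) with hm | hm <;> rw [hm] at h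
    exacts [.inl h, .inr h]
  · rintro (h | h) <;> rw [h]
    exacts [min_eq_left hsnd', min_eq_right hfst']

lemma flagAngle_eq_zero_iff (hp : p ∈ flagTriangle) (h0 : 0 < p.1) (h1 : p.2 < 1) :
    flagAngle p = 0 ↔ p.1 = p.2 := by
  rw [flagAngle, sub_eq_zero]
  refine ⟨fun h => ?_, fun h => ?_⟩
  · have hle : 1 ≤ p.2 / p.1 := h.le.trans (min_le_left _ _)
    rw [le_div_iff₀ h0, one_mul] at hle
    exact hle.antisymm hp.2.1
  · rw [← h, div_self h0.ne', div_self (by linarith), min_self]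

lemma continuousAt_flagAngle (h0 : 0 < p.1) (h1 : p.2 < 1) : ContinuousAt flagAngle p := by
  have hsnd : (1 : ℝ) - p.2 ≠ 0 := by linarith
  have hfst := h0.ne'
  unfold flagAngle
  fun_prop (disch := assumption)

lemma flagAngle_lt_flagAngle {x y : ℝ} (hx : 0 < x) (hy : 0 < y) (hq : q ∈ flagTriangle)
    (hp0 : 0 < p.1) (hp1 : p.2 < 1) (hlevel : p.1 * x + p.2 * y = q.1 * x + q.2 * y)
    (hlt : p.1 < q.1) :
    flagAngle p < flagAngle q := by
  have hsnd : q.2 < p.2 := by nlinarith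
  refine sub_lt_sub_left (min_lt_min ?_ ?_) 1
  · rw [div_lt_div_iff₀ (hp0.trans hlt) hp0]
    nlinarith [hq.1]
  · rw [div_lt_div_iff₀ (by linarith) (by linarith)]
    nlinarith [hq.2.2]

lemma eq_of_flagAngle_eq {x y : ℝ} (hx : 0 < x) (hy : 0 < y) (hp : p ∈ flagTriangle)
    (hq : q ∈ flagTriangle) (hp0 : 0 < p.1) (hp1 : p.2 < 1) (hq0 : 0 < q.1) (hq1 : q.2 < 1)
    (hangle : flagAngle p = flagAngle q) (hlevel : p.1 * x + p.2 * y = q.1 * x + q.2 * y) :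
    p = q := by
  have hfst : p.1 = q.1 := by
    rcases lt_trichotomy p.1 q.1 with hlt | heq | hlt
    · exact absurd hangle (flagAngle_lt_flagAngle hx hy hq hp0 hp1 hlevel hlt).ne
    · exact heq
    · exact absurd hangle (flagAngle_lt_flagAngle hx hy hp hq0 hq1 hlevel.symm hlt).ne'
  rw [hfst, add_right_inj] at hlevel
  exact Prod.ext hfst (mul_right_cancel₀ hy.ne' hlevel)

/-- The radial coordinate in a barycentric triangle, which is `0` at its face and vertex corners and
`1` away from them. -/
noncomputable def flagRadius (η : ℝ) (p : ℝ × ℝ) : ℝ := min 1 (min p.1 (1 - p.2) / η)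

lemma flagRadius_mem (hη : 0 < η) (hp : p ∈ flagTriangle) : flagRadius η p ∈ Icc (0 : ℝ) 1 := by
  obtain ⟨h0, h01, h1⟩ := hp
  exact ⟨le_min zero_le_one (div_nonneg (le_min (by linarith) (by linarith)) hη.le),
    min_le_left _ _⟩

lemma flagRadius_eq_one_or (hη : 0 < η) (p : ℝ × ℝ) :
    flagRadius η p = 1 ∨ p.1 < η ∨ 1 - p.2 < η := by
  by_cases h : p.1 < η ∨ 1 - p.2 < η
  · exact .inr h
  · push Not at h
    exact .inl (min_eq_left (by rw [le_div_iff₀ hη, one_mul]; exact le_min h.1 h.2))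

lemma flagRadius_pos_iff (hη : 0 < η) : 0 < flagRadius η p ↔ 0 < p.1 ∧ p.2 < 1 := by
  rw [flagRadius, lt_min_iff, div_pos_iff_of_pos_right hη, lt_min_iff, sub_pos,
    and_iff_right one_pos]

lemma flagRadius_eq_zero_of_not (hη : 0 < η) (hp : p ∈ flagTriangle) (h : ¬(0 < p.1 ∧ p.2 < 1)) :
    flagRadius η p = 0 := by
  rw [← flagRadius_pos_iff hη] at h
  exact (not_lt.1 h).antisymm (flagRadius_mem hη hp).1

lemma eq_corner_of_flagRadius_eq_zero (hη : 0 < η) (hp : p ∈ flagTriangle)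
    (h : flagRadius η p = 0) : p = (0, 0) ∨ p = (1, 1) := by
  obtain ⟨h0, h01, h1⟩ := hp
  have hcorner := (flagRadius_pos_iff hη (p := p)).not.1 h.not_gt
  rw [not_and_or, not_lt, not_lt] at hcorner
  rcases hcorner with hle | hle
  · exact .inl (Prod.ext (hle.antisymm (h0.trans h01)) ((h01.trans hle).antisymm h0))
  · exact .inr (Prod.ext (h1.antisymm (hle.trans h01)) ((h01.trans h1).antisymm hle))

@[fun_prop]
lemma continuous_flagRadius : Continuous (flagRadius η) := by
  unfold flagRadius
  fun_prop

end FlagCoordinates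

namespace FlagSystem

variable {Φ : Type*} {F : FlagSystem Φ} {ω ω' : Φ} {p : ℝ × ℝ}

variable (F) in
/-- The coordinate along the arc of a level curve in a flag, oriented by the sign of the flag. -/
noncomputable def arcCoord (ω : Φ) (p : ℝ × ℝ) : ℝ :=
  if F.sgn ω then flagAngle p else 1 - flagAngle p

lemma arcCoord_mem (hp : p ∈ flagTriangle) : F.arcCoord ω p ∈ Icc (0 : ℝ) 1 := by
  unfold arcCoord
  split_ifs
  exacts [flagAngle_mem hp, Icc.one_sub_mem (flagAngle_mem hp)]

lemma arcCoord_of_sgn_eq (h : F.sgn ω' = !F.sgn ω) : F.arcCoord ω' p = 1 - F.arcCoord ω p := by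
  unfold arcCoord
  rw [h]
  cases F.sgn ω <;> simp

lemma continuousAt_arcCoord (h0 : 0 < p.1) (h1 : p.2 < 1) : ContinuousAt (F.arcCoord ω) p := by
  unfold arcCoord
  split_ifs
  exacts [continuousAt_flagAngle h0 h1, continuousAt_const.sub (continuousAt_flagAngle h0 h1)]

namespace Height

variable (A : F.Height) {P : Φ → Prop} {c : ℝ}

lemma edge_le_level (hp : p ∈ flagTriangle) (hside : p.2 = 0) : A.edge ω ≤ A.level ω p := by
  simp only [level_eq, hside]
  nlinarith [A.edge_lt_face ω, hp.2.2]

lemma edge_lt_level (hside : p.2 = 0) (hlt : p.1 < 1) : A.edge ω < A.level ω p := by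
  simp only [level_eq, hside]
  nlinarith [A.edge_lt_face ω]

lemma level_le_edge (hp : p ∈ flagTriangle) (hside : p.1 = 1) : A.level ω p ≤ A.edge ω := by
  simp only [level_eq, hside]
  nlinarith [A.vertex_lt_edge ω, hp.1]

lemma level_lt_edge (hside : p.1 = 1) (hlt : 0 < p.2) : A.level ω p < A.edge ω := by
  simp only [level_eq, hside]
  nlinarith [A.vertex_lt_edge ω]

variable {A}

lemma step_turn (hP : P ω → c ≤ A.edge ω) (hP' : ¬P ω → A.edge ω ≤ c) (hp : p ∈ flagTriangle)
    (h0 : 0 < p.1) (h1 : p.2 < 1) (harc : F.arcCoord ω p = 1)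
    (hc : A.level ω p = c ∨ A.level (F.turn P ω) p = c) : F.Step (ω, p) (F.turn P ω, p) := by
  rcases hs : F.sgn ω with _ | _
  · rw [arcCoord, if_neg (by simp [hs]), sub_eq_self, flagAngle_eq_zero_iff hp h0 h1] at harc
    rw [turn_of_not_sgn hs]
    exact ⟨rfl, .inr (.inl ⟨harc, rfl⟩)⟩
  rw [arcCoord, if_pos hs, flagAngle_eq_one_iff hp h0 h1] at harc
  by_cases hω : P ω
  · rw [turn_of_sgn_of hs hω] at hc ⊢
    refine ⟨rfl, .inr (.inr ⟨by_contra fun hne => ?_, rfl⟩)⟩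
    have hlt := hp.2.2.lt_of_ne hne
    have hedge := A.edge_lt_level (ω := ω) (harc.resolve_right hne) hlt
    have hedge' := A.edge_lt_level (ω := F.r₂ ω) (harc.resolve_right hne) hlt
    rw [A.edge_r₂] at hedge'
    rcases hc with hc | hc <;> linarith [hP hω]
  · rw [turn_of_sgn_of_not hs hω] at hc ⊢
    refine ⟨rfl, .inl ⟨by_contra fun hne => ?_, rfl⟩⟩
    have hlt := hp.1.lt_of_ne' hne
    have hedge := A.level_lt_edge (ω := ω) (harc.resolve_left hne) hlt
    have hedge' := A.level_lt_edge (ω := F.r₀ ω) (harc.resolve_left hne) hlt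
    rw [A.edge_r₀] at hedge'
    rcases hc with hc | hc <;> linarith [hP' hω]

variable (A) in
/-- The point `x` of a barycentric triangle, away from the face and vertex corners, lies on the
level `c` in the flag `z.1`, at the position `z.2` of the arc of the level curve in this flag. -/
structure Represents (c : ℝ) (z : Φ × ℝ) (x : Φ × (ℝ × ℝ)) : Prop where
  flag : x.1 = z.1
  mem : x.2 ∈ flagTriangle
  fst_pos : 0 < x.2.1
  snd_lt : x.2.2 < 1
  level : A.level x.1 x.2 = c
  arc : F.arcCoord x.1 x.2 = z.2

variable (A) in
/-- The points represented by `z` are points represented by `z'`. -/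
def RepresentsLE (c : ℝ) (z z' : Φ × ℝ) : Prop :=
  ∀ x, A.Represents c z x → ∃ x', A.Represents c z' x' ∧ EqvGen F.Step x x'

variable {z z' z'' : Φ × ℝ} {x y : Φ × (ℝ × ℝ)}

lemma Represents.unique (hx : A.Represents c z x) (hy : A.Represents c z y) : x = y := by
  obtain ⟨ω, p⟩ := x
  obtain ⟨ω', q⟩ := y
  obtain rfl : ω = ω' := hx.flag.trans hy.flag.symm
  have hlevel := hx.level.trans hy.level.symm
  have harc := hx.arc.trans hy.arc.symm
  refine Prod.ext rfl (eq_of_flagAngle_eq (sub_pos.2 (A.edge_lt_face ω))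
    (sub_pos.2 (A.vertex_lt_edge ω)) hx.mem hy.mem hx.fst_pos hx.snd_lt hy.fst_pos hy.snd_lt ?_ ?_)
  · simp only [arcCoord] at harc
    split_ifs at harc
    exacts [harc, sub_right_injective harc]
  · simp only [Height.level_eq] at hlevel
    linarith

lemma RepresentsLE.trans (h : A.RepresentsLE c z z') (h' : A.RepresentsLE c z' z'') :
    A.RepresentsLE c z z'' := fun x hx => by
  obtain ⟨y, hy, hxy⟩ := h x hx
  obtain ⟨w, hw, hyw⟩ := h' y hy
  exact ⟨w, hw, hxy.trans _ _ _ hyw⟩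

lemma representsLE_of_turn (hP : P z.1 → c ≤ A.edge z.1) (hP' : ¬P z.1 → A.edge z.1 ≤ c)
    (hz : z.2 = 1) (hz' : z'.2 = 0) (hturn : z'.1 = F.turn P z.1) :
    A.RepresentsLE c z z' ∧ A.RepresentsLE c z' z := by
  obtain ⟨ω, v⟩ := z
  obtain ⟨ω₁, v'⟩ := z'
  obtain rfl : v = 1 := hz
  obtain rfl : v' = 0 := hz'
  obtain rfl : ω₁ = F.turn P ω := hturn
  have harc_turn p : F.arcCoord (F.turn P ω) p = 1 - F.arcCoord ω p :=
    arcCoord_of_sgn_eq (F.sgn_turn P ω)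
  constructor
  · rintro ⟨ω, p⟩ ⟨rfl, hp, h0, h1, hlevel, harc⟩
    have hstep := step_turn hP hP' hp h0 h1 harc (.inl hlevel)
    exact ⟨(F.turn P ω, p), ⟨rfl, hp, h0, h1, (level_eq_of_step hstep).trans hlevel,
      by rw [harc_turn, harc, sub_self]⟩, .rel _ _ hstep⟩
  · rintro ⟨_, p⟩ ⟨rfl, hp, h0, h1, hlevel, harc⟩
    rw [harc_turn, sub_eq_zero] at harc
    have hstep := step_turn hP hP' hp h0 h1 harc.symm (.inr hlevel)
    exact ⟨(ω, p), ⟨rfl, hp, h0, h1, (level_eq_of_step hstep).symm.trans hlevel, harc.symm⟩,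
      .rel _ _ hstep.symm⟩

variable [Finite Φ]

lemma representsLE_of_eqvGen (h : EqvGen (CircleGlue (A.up c) ⊔ CircleGlue (A.down c)) z z') :
    A.RepresentsLE c z z' ∧ A.RepresentsLE c z' z := by
  induction h with
  | rel z z' h =>
    rcases h with ⟨hz, hz', hturn⟩ | ⟨hz, hz', hturn⟩
    · exact representsLE_of_turn (P := (c < A.edge ·)) le_of_lt le_of_not_gt hz hz' hturn
    · exact representsLE_of_turn (P := (c ≤ A.edge ·)) id le_of_not_ge hz hz' hturn
  | refl z => exact ⟨fun x hx => ⟨x, hx, .refl x⟩, fun x hx => ⟨x, hx, .refl x⟩⟩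
  | symm z z' _ ih => exact ih.symm
  | trans z z' z'' _ _ ih ih' => exact ⟨ih.1.trans ih'.1, ih'.2.trans ih.2⟩

lemma eqvGen_step_of_eqvGen_circleGlue {p' : ℝ × ℝ} (hp : p ∈ flagTriangle)
    (hp' : p' ∈ flagTriangle) (h : 0 < p.1 ∧ p.2 < 1) (h' : 0 < p'.1 ∧ p'.2 < 1)
    (hlevel : A.level ω p = c) (hlevel' : A.level ω' p' = c)
    (hglue : EqvGen (CircleGlue (A.up c) ⊔ CircleGlue (A.down c)) (ω, F.arcCoord ω p)
      (ω', F.arcCoord ω' p')) : EqvGen F.Step (ω, p) (ω', p') := by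
  obtain ⟨x, hx, hpx⟩ :=
    (representsLE_of_eqvGen hglue).1 (ω, p) ⟨rfl, hp, h.1, h.2, hlevel, rfl⟩
  have hx' : A.Represents c (ω', F.arcCoord ω' p') (ω', p') :=
    ⟨rfl, hp', h'.1, h'.2, hlevel', rfl⟩
  rwa [hx.unique hx'] at hpx

lemma eqvGen_step_corner {p' : ℝ × ℝ} (hp : p = (0, 0) ∨ p = (1, 1))
    (hp' : p' = (0, 0) ∨ p' = (1, 1)) (hlevel : A.level ω p = c) (hlevel' : A.level ω' p' = c)
    (hcycle : (A.up c).SameCycle ω ω') : EqvGen F.Step (ω, p) (ω', p') := by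
  have hlt := A.vertex_lt_face (ω := ω')
  rcases hp with rfl | rfl
  · rw [level_face_corner] at hlevel
    obtain ⟨hface, hstep⟩ := sameCycle_face hcycle fun x hx => by
      rw [← hlevel, ← hx]
      exact (A.edge_lt_face x).le
    rcases hp' with rfl | rfl
    · exact hstep
    · rw [level_vertex_corner] at hlevel'
      linarith
  · rw [level_vertex_corner] at hlevel
    obtain ⟨hvertex, hstep⟩ := sameCycle_vertex hcycle fun x hx => by
      rw [← hlevel, ← hx]
      exact A.vertex_lt_edge x
    rcases hp' with rfl | rfl
    · rw [level_face_corner] at hlevel'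
      linarith
    · exact hstep

lemma exists_turn_of_step (hp : p ∈ flagTriangle) (h : F.Step (ω, p) (ω', p))
    (hs : F.sgn ω = true) :
    ((ω' = A.up (A.level ω p) ω ∨ ω' = A.down (A.level ω p) ω) ∧
      (0 < p.1 → p.2 < 1 → F.arcCoord ω p = 1)) ∨
    (ω = A.up (A.level ω p) ω' ∧ (0 < p.1 → p.2 < 1 → F.arcCoord ω' p = 1)) := by
  have hs' : F.sgn ω' = false := by rw [h.sgn_eq, hs, Bool.not_true]
  simp only [up_apply, down_apply, arcCoord, hs, hs', if_true, Bool.false_eq_true, if_false]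
  obtain ⟨-, ⟨hside, hω⟩ | ⟨hside, hω⟩ | ⟨hside, hω⟩⟩ := h <;> dsimp only at hside hω
  · refine .inl ⟨.inl ?_, fun h0 h1 => (flagAngle_eq_one_iff hp h0 h1).2 (.inl hside)⟩
    rw [hω, turn_of_sgn_of_not hs (A.edge_le_level hp hside).not_gt]
  · refine .inr ⟨?_, fun h0 h1 => by rw [(flagAngle_eq_zero_iff hp h0 h1).2 hside, sub_zero]⟩
    rw [turn_of_not_sgn hs', hω, F.r₁_r₁]
  · refine .inl ⟨.inr ?_, fun h0 h1 => (flagAngle_eq_one_iff hp h0 h1).2 (.inr hside)⟩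
    rw [hω, turn_of_sgn_of hs (A.level_le_edge hp hside)]

end Height

end FlagSystem

lemma IsConfig.lineMap_glue {Φ : Type*} {γ γ' : Equiv.Perm Φ} {I : Set Φ} {C : Φ → ℂ}
    {A : Φ → ℝ → ℂ} {ω ω' : Φ} {r : ℝ} (H : IsConfig γ γ' I C A) (hr : r = 1 ∨ ω ∉ I)
    (hω' : ω' = γ ω ∨ ω' = γ' ω) :
    AffineMap.lineMap (C ω) (A ω 1) r = AffineMap.lineMap (C ω') (A ω' 0) r := by
  have harc : A ω 1 = A ω' 0 := by
    rcases hω' with rfl | rfl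
    exacts [H.glue ω, H.glue' ω]
  rcases hr with rfl | hω
  · rwa [AffineMap.lineMap_apply_one, AffineMap.lineMap_apply_one]
  · have hcentre : C ω' = C ω := by
      rcases hω' with rfl | rfl
      exacts [H.centre ω hω, H.centre' ω hω]
    rw [harc, hcentre]

namespace FlagSystem

namespace Height

variable {Φ : Type*} {F : FlagSystem Φ} {A : F.Height} {C : Φ → ℝ → ℂ} {B : Φ → ℝ → ℝ → ℂ}
  {ω ω' : Φ} {p p' : ℝ × ℝ} {η δ : ℝ}

variable (A C B η) in
/-- The map of a surface to the plane whose restriction to the level curves of a height function is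
given by the arcs `B`, coned off at the points `C` near the extrema of the height function. -/
noncomputable def levelMap (ω : Φ) (p : ℝ × ℝ) : ℂ :=
  AffineMap.lineMap (C ω (A.level ω p)) (B ω (A.level ω p) (F.arcCoord ω p)) (flagRadius η p)

lemma levelMap_of_flagRadius_eq_zero (h : flagRadius η p = 0) :
    A.levelMap C B η ω p = C ω (A.level ω p) := by
  rw [levelMap, h, AffineMap.lineMap_apply_zero]

lemma continuousOn_levelMap (hη : 0 < η) (hC : Continuous (C ω))
    (hB : ContinuousOn (uncurry (B ω)) (univ ×ˢ Icc 0 1)) :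
    ContinuousOn (A.levelMap C B η ω) flagTriangle := by
  intro p hp
  have hcentre : ContinuousWithinAt (fun p => C ω (A.level ω p)) flagTriangle p := by fun_prop
  have hradius : ContinuousWithinAt (flagRadius η) flagTriangle p :=
    continuous_flagRadius.continuousWithinAt
  have hmaps : MapsTo (fun p => (A.level ω p, F.arcCoord ω p)) flagTriangle
      (Icc (-1) 1 ×ˢ Icc 0 1) := fun p hp => ⟨level_mem hp, arcCoord_mem hp⟩
  by_cases h : 0 < p.1 ∧ p.2 < 1
  · have harc : ContinuousWithinAt (fun p => B ω (A.level ω p) (F.arcCoord ω p)) flagTriangle p :=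
      ((hB.mono (prod_mono_left (subset_univ _))) _ (hmaps hp)).comp_of_eq
        (continuous_level.continuousWithinAt.prodMk
          (continuousAt_arcCoord h.1 h.2).continuousWithinAt) hmaps rfl
    exact hcentre.lineMap harc hradius
  · have hzero := flagRadius_eq_zero_of_not hη hp h
    obtain ⟨M, hM⟩ := (isCompact_Icc.prod isCompact_Icc).exists_bound_of_continuousOn
      ((hB.mono (prod_mono_left (subset_univ (Icc (-1) 1)))).sub
        (hC.comp continuous_fst).continuousOn)
    have hlimit : Filter.Tendsto (fun q => flagRadius η q •
        (B ω (A.level ω q) (F.arcCoord ω q) - C ω (A.level ω q))) (nhdsWithin p flagTriangle)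
        (nhds 0) := by
      refine (hzero ▸ hradius.tendsto).zero_smul_isBoundedUnder_le ⟨M, ?_⟩
      rw [Filter.eventually_map]
      filter_upwards [self_mem_nhdsWithin] with q hq using hM _ (hmaps hq)
    rw [ContinuousWithinAt, levelMap_of_flagRadius_eq_zero hzero]
    have hsum := hlimit.add hcentre.tendsto
    simp only [← AffineMap.lineMap_apply_module', zero_add] at hsum
    exact hsum

variable [Finite Φ]

lemma levelMap_eq_of_turn (hη : 0 < η)
    (H : ∀ c, IsConfig (A.up c) (A.down c) (A.active c δ) (fun ω => C ω c) fun ω => B ω c)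
    (hactive : flagRadius η p = 1 ∨ ω ∉ A.active (A.level ω p) δ) (hp : p ∈ flagTriangle)
    (h : F.Step (ω, p) (ω', p))
    (hturn : ω' = A.up (A.level ω p) ω ∨ ω' = A.down (A.level ω p) ω)
    (harc : 0 < p.1 → p.2 < 1 → F.arcCoord ω p = 1) :
    A.levelMap C B η ω p = A.levelMap C B η ω' p := by
  have hlevel : A.level ω' p = A.level ω p := level_eq_of_step h
  have hglue := (H (A.level ω p)).lineMap_glue hactive hturn
  by_cases hcorner : 0 < p.1 ∧ p.2 < 1
  · rwa [levelMap, levelMap, hlevel, arcCoord_of_sgn_eq h.sgn_eq, harc hcorner.1 hcorner.2,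
      sub_self]
  · have hzero := flagRadius_eq_zero_of_not hη hp hcorner
    rw [hzero, AffineMap.lineMap_apply_zero, AffineMap.lineMap_apply_zero] at hglue
    rwa [levelMap_of_flagRadius_eq_zero hzero, levelMap_of_flagRadius_eq_zero hzero, hlevel]

lemma levelMap_eq_of_step (hη : 0 < η)
    (H : ∀ c, IsConfig (A.up c) (A.down c) (A.active c δ) (fun ω => C ω c) fun ω => B ω c)
    (hactive : ∀ ω, flagRadius η p = 1 ∨ ω ∉ A.active (A.level ω p) δ) (hp : p ∈ flagTriangle)
    (h : F.Step (ω, p) (ω', p)) : A.levelMap C B η ω p = A.levelMap C B η ω' p := by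
  wlog hs : F.sgn ω = true generalizing ω ω'
  · exact (this h.symm (by rw [h.sgn_eq, eq_false_of_ne_true hs, Bool.not_false])).symm
  rcases exists_turn_of_step (A := A) hp h hs with ⟨hturn, harc⟩ | ⟨hturn, harc⟩
  · exact levelMap_eq_of_turn hη H (hactive ω) hp h hturn harc
  · have hlevel : A.level ω' p = A.level ω p := level_eq_of_step h
    rw [← hlevel] at hturn
    exact (levelMap_eq_of_turn hη H (hactive ω') hp h.symm (.inl hturn) harc).symm

lemma eqvGen_step_of_levelMap_eq (hη : 0 < η)
    (H : ∀ c, IsConfig (A.up c) (A.down c) (A.active c δ) (fun ω => C ω c) fun ω => B ω c)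
    (hactive : ∀ ω, ∀ p ∈ flagTriangle, flagRadius η p = 1 ∨ ω ∉ A.active (A.level ω p) δ)
    (hp : p ∈ flagTriangle) (hp' : p' ∈ flagTriangle) (hlevel : A.level ω' p' = A.level ω p)
    (h : A.levelMap C B η ω p = A.levelMap C B η ω' p') :
    EqvGen F.Step (ω, p) (ω', p') := by
  have hactive' := hactive ω' p' hp'
  rw [levelMap, levelMap, hlevel] at h
  rw [hlevel] at hactive'
  rcases (H (A.level ω p)).inj ω ω' _ (flagRadius_mem hη hp) _ (flagRadius_mem hη hp') _
    (arcCoord_mem hp) _ (arcCoord_mem hp') (hactive ω p hp) hactive' h with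
    ⟨hr, hr', hcycle⟩ | ⟨hr, hr', hglue⟩
  · exact eqvGen_step_corner (eq_corner_of_flagRadius_eq_zero hη hp hr)
      (eq_corner_of_flagRadius_eq_zero hη hp' hr') rfl hlevel hcycle
  · exact eqvGen_step_of_eqvGen_circleGlue hp hp' ((flagRadius_pos_iff hη).1 hr)
      ((flagRadius_pos_iff hη).1 hr') rfl hlevel hglue

theorem exists_levelwise_embedding (A : F.Height) :
    ∃ H : Φ → ℝ × ℝ → ℂ, (∀ ω, ContinuousOn (H ω) flagTriangle) ∧
      (∀ ω ω' p, p ∈ flagTriangle → F.Step (ω, p) (ω', p) → H ω p = H ω' p) ∧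
      ∀ ω ω', ∀ p ∈ flagTriangle, ∀ p' ∈ flagTriangle,
        A.level ω p = A.level ω' p' → H ω p = H ω' p' → EqvGen F.Step (ω, p) (ω', p') := by
  obtain ⟨δ₁, hδ₁, hface⟩ := exists_pos_forall_le fun ω => sub_pos.2 (A.edge_lt_face ω)
  obtain ⟨δ₂, hδ₂, hvertex⟩ := exists_pos_forall_le fun ω => sub_pos.2 (A.vertex_lt_edge ω)
  set δ := min δ₁ δ₂ / 2
  have hδ : 0 < δ := by positivity
  have hδ₁' : 2 * δ ≤ δ₁ := by linarith [min_le_left δ₁ δ₂, show δ = min δ₁ δ₂ / 2 from rfl]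
  have hδ₂' : 2 * δ ≤ δ₂ := by linarith [min_le_right δ₁ δ₂, show δ = min δ₁ δ₂ / 2 from rfl]
  obtain ⟨C, B, hC, hB, hconfig⟩ := A.exists_isConfig hδ
  have hactive (ω) (p) (hp : p ∈ flagTriangle) :
      flagRadius (δ / 2) p = 1 ∨ ω ∉ A.active (A.level ω p) δ :=
    (flagRadius_eq_one_or (half_pos hδ) p).imp_right fun h =>
      not_active (fun x => by linarith [hface x]) (fun x => by linarith [hvertex x]) hp h
  exact ⟨A.levelMap C B (δ / 2),
    fun ω => continuousOn_levelMap (half_pos hδ) (hC ω) (hB ω),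
    fun ω ω' p hp => levelMap_eq_of_step (half_pos hδ) hconfig (fun ω => hactive ω p hp) hp,
    fun ω ω' p hp p' hp' hlevel =>
      eqvGen_step_of_levelMap_eq (half_pos hδ) hconfig hactive hp hp' hlevel.symm⟩

end Height

end FlagSystem

/-! ### Subdivisions of the sphere -/

/-- The sign encoded by a Boolean, which is positive for `true`. -/
def boolSign (s : Bool) : ℝ := if s then 1 else -1

lemma abs_boolSign (s : Bool) : |boolSign s| = 1 := by cases s <;> simp [boolSign]

lemma boolSign_injective : Injective boolSign := by
  intro s s' h
  cases s <;> cases s' <;> first | rfl | norm_num [boolSign] at h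

lemma abs_boolSign_mul (s : Bool) (x : ℝ) : |boolSign s * x| = |x| := by
  rw [abs_mul, abs_boolSign, one_mul]

lemma boolSign_mul_abs (x : ℝ) : boolSign (decide (0 ≤ x)) * |x| = x := by
  rcases le_or_gt 0 x with h | h
  · simp [boolSign, h, abs_of_nonneg]
  · simp [boolSign, h.not_ge, abs_of_neg h]

section Pillow

variable {s s' : Bool} {p p' : ℝ × ℝ}

/-- The pillow, two copies of the square `‖p‖ ≤ 1` glued along their boundary, as a surface around
the origin. -/
noncomputable def pillow (s : Bool) (p : ℝ × ℝ) : EuclideanSpace ℝ (Fin 3) :=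
  !₂[p.1, p.2, boolSign s * (1 - ‖p‖)]

lemma pillow_ne_zero : pillow s p ≠ 0 := by
  intro h
  have hp : p = 0 := Prod.ext (congrFun (congrArg WithLp.ofLp h) 0)
    (congrFun (congrArg WithLp.ofLp h) 1)
  have hthird : boolSign s * (1 - ‖p‖) = 0 := congrFun (congrArg WithLp.ofLp h) 2
  have habs := abs_boolSign_mul s (1 - ‖p‖)
  rw [hthird, hp] at habs
  norm_num at habs

lemma continuous_pillow : Continuous (pillow s) := by
  refine (PiLp.continuous_toLp 2 _).comp (continuous_pi fun i => ?_)
  fin_cases i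
  exacts [continuous_fst, continuous_snd,
    continuous_const.mul (continuous_const.sub continuous_norm)]

lemma pillow_congr (hp : ‖p‖ = 1) : pillow s p = pillow s' p := by
  simp only [pillow, hp, sub_self, mul_zero]

lemma eq_of_sameRay_pillow (hp : ‖p‖ ≤ 1) (hp' : ‖p'‖ ≤ 1)
    (h : SameRay ℝ (pillow s p) (pillow s' p')) : p = p' ∧ (s = s' ∨ ‖p‖ = 1) := by
  obtain ⟨t, t', ht, ht', heq⟩ := h.exists_pos pillow_ne_zero pillow_ne_zero
  have hcoord (i : Fin 3) : t * pillow s p i = t' * pillow s' p' i :=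
    congrFun (congrArg WithLp.ofLp heq) i
  have hplane : t • p = t' • p' := Prod.ext (hcoord 0) (hcoord 1)
  have hthird : t * (boolSign s * (1 - ‖p‖)) = t' * (boolSign s' * (1 - ‖p'‖)) := hcoord 2
  have hnorm : t * ‖p‖ = t' * ‖p'‖ := by
    simpa only [norm_smul_of_nonneg, ht.le, ht'.le] using congrArg norm hplane
  have hheight : t * (1 - ‖p‖) = t' * (1 - ‖p'‖) := by
    simpa only [abs_mul, abs_boolSign, one_mul, abs_of_pos, ht, ht', abs_of_nonneg, sub_nonneg, hp,
      hp'] using congrArg abs hthird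
  obtain rfl : t = t' := by linarith
  obtain rfl : p = p' := smul_right_injective _ ht.ne' hplane
  refine ⟨rfl, or_iff_not_imp_right.2 fun hne => boolSign_injective ?_⟩
  exact mul_right_cancel₀ (sub_ne_zero.2 (Ne.symm hne)) (mul_left_cancel₀ ht.ne' hthird)

lemma exists_pillow_eq_smul {v : EuclideanSpace ℝ (Fin 3)} (hv : v ≠ 0) :
    ∃ s p, ‖p‖ ≤ 1 ∧ ∃ t : ℝ, 0 < t ∧ pillow s p = t • v := by
  set w : ℝ × ℝ := (v 0, v 1)
  set N := ‖w‖ + |v 2|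
  have hN0 : 0 < N := by
    refine (by positivity : 0 ≤ N).lt_of_ne' fun h0 => hv ?_
    have hw0 : w = 0 := norm_eq_zero.1 (by linarith [norm_nonneg w, abs_nonneg (v 2)])
    have hthird : v 2 = 0 := abs_eq_zero.1 (by linarith [norm_nonneg w, abs_nonneg (v 2)])
    ext i
    fin_cases i
    exacts [congrArg Prod.fst hw0, congrArg Prod.snd hw0, hthird]
  have hnorm : 1 - ‖N⁻¹ • w‖ = N⁻¹ * |v 2| := by
    rw [norm_smul_of_nonneg (inv_nonneg.2 hN0.le)]
    field_simp
    linarith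
  refine ⟨decide (0 ≤ v 2), N⁻¹ • w, ?_, N⁻¹, inv_pos.2 hN0, ?_⟩
  · exact sub_nonneg.1 (hnorm ▸ by positivity)
  · ext i
    fin_cases i
    · rfl
    · rfl
    · change boolSign _ * (1 - ‖N⁻¹ • w‖) = N⁻¹ * v 2
      rw [hnorm, mul_left_comm, boolSign_mul_abs]

/-- The radial projection of the pillow to the unit sphere. -/
noncomputable def spherePillow (s : Bool) (p : ℝ × ℝ) :
    Metric.sphere (0 : EuclideanSpace ℝ (Fin 3)) 1 :=
  ⟨‖pillow s p‖⁻¹ • pillow s p, by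
    rw [mem_sphere_zero_iff_norm, norm_smul, norm_inv, norm_norm,
      inv_mul_cancel₀ (norm_ne_zero_iff.2 pillow_ne_zero)]⟩

lemma continuous_spherePillow : Continuous (spherePillow s) :=
  ((continuous_pillow.norm.inv₀ fun _ => norm_ne_zero_iff.2 pillow_ne_zero).smul
    continuous_pillow).subtype_mk _

lemma spherePillow_congr (hp : ‖p‖ = 1) : spherePillow s p = spherePillow s' p :=
  Subtype.ext (by simp only [spherePillow, pillow_congr (s' := s') hp])

lemma eq_of_spherePillow_eq (hp : ‖p‖ ≤ 1) (hp' : ‖p'‖ ≤ 1)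
    (h : spherePillow s p = spherePillow s' p') : p = p' ∧ (s = s' ∨ ‖p‖ = 1) :=
  eq_of_sameRay_pillow hp hp' ((sameRay_iff_inv_norm_smul_eq_of_ne pillow_ne_zero
    pillow_ne_zero).2 (congrArg Subtype.val h))

lemma exists_spherePillow_eq (z : Metric.sphere (0 : EuclideanSpace ℝ (Fin 3)) 1) :
    ∃ s p, ‖p‖ ≤ 1 ∧ spherePillow s p = z := by
  obtain ⟨s, p, hp, t, ht, heq⟩ := exists_pillow_eq_smul (ne_zero_of_mem_unit_sphere z)
  refine ⟨s, p, hp, Subtype.ext ?_⟩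
  change ‖pillow s p‖⁻¹ • pillow s p = z
  rw [heq, norm_smul_of_nonneg ht.le, norm_eq_of_mem_sphere, mul_one, inv_smul_smul₀ ht.ne']

end Pillow

section Grid

variable {m : ℕ} {d d' : Fin m × Bool} {α α' : ℝ}

/-- The position in `[-1, 1]`, subdivided into `m` cells, of the point at fraction `α` of the way
from the midpoint to the endpoint of a half-cell. The Boolean selects the half of the cell. -/
noncomputable def gridPos (d : Fin m × Bool) (α : ℝ) : ℝ :=
  (2 * d.1 + 1 + boolSign d.2 * α) / m - 1

/-- The half-cell on the other side of the endpoint of a half-cell. -/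
def gridMove (d : Fin m × Bool) : Option (Fin m × Bool) :=
  if d.2 then (if h : d.1 + 1 < m then some (⟨d.1 + 1, h⟩, false) else none)
  else (if 0 < d.1.1 then some (⟨d.1 - 1, by omega⟩, true) else none)

lemma gridMove_eq_some : gridMove d = some d' ↔ d'.2 = (!d.2) ∧
    ((d.2 = true ∧ d'.1.1 = d.1 + 1) ∨ (d.2 = false ∧ d'.1.1 + 1 = d.1)) := by
  obtain ⟨i, s⟩ := d
  obtain ⟨i', s'⟩ := d'
  unfold gridMove
  cases s <;> cases s' <;> simp [Fin.ext_iff] <;> omega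

lemma gridMove_eq_none :
    gridMove d = none ↔ (d.2 = true ∧ d.1.1 + 1 = m) ∨ (d.2 = false ∧ d.1.1 = 0) := by
  obtain ⟨i, s⟩ := d
  unfold gridMove
  cases s
  · simp
  · simp
    omega

lemma gridMove_symm (h : gridMove d = some d') : gridMove d' = some d := by
  rw [gridMove_eq_some] at h ⊢
  obtain ⟨i, s⟩ := d
  obtain ⟨i', s'⟩ := d'
  cases s <;> cases s' <;> simp at h ⊢ <;> omega

lemma continuous_gridPos : Continuous (gridPos d) := by
  unfold gridPos
  fun_prop

lemma gridPos_flip : gridPos (d.1, !d.2) 0 = gridPos d 0 := by simp [gridPos]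

lemma gridPos_move (h : gridMove d = some d') : gridPos d' 1 = gridPos d 1 := by
  obtain ⟨hside, ⟨htrue, hcell⟩ | ⟨hfalse, hcell⟩⟩ := gridMove_eq_some.1 h
  · simp only [gridPos, hside, htrue, hcell, boolSign, Bool.not_true, Bool.false_eq_true, if_true,
      if_false]
    push_cast
    ring
  · simp only [gridPos, hside, hfalse, ← hcell, boolSign, Bool.not_false, Bool.false_eq_true,
      if_true, if_false]
    push_cast
    ring

lemma abs_gridPos_of_move (h : gridMove d = none) : |gridPos d 1| = 1 := by
  have hm : (m : ℝ) ≠ 0 := Nat.cast_ne_zero.2 d.1.pos.ne'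
  obtain ⟨htrue, hcell⟩ | ⟨hfalse, hcell⟩ := gridMove_eq_none.1 h
  · have hnum : 2 * (d.1 : ℝ) + 1 + 1 = 2 * m := by
      linarith [show (d.1 : ℝ) + 1 = m by exact_mod_cast hcell]
    simp only [gridPos, htrue, boolSign, if_true, one_mul, hnum, mul_div_cancel_right₀ _ hm]
    norm_num
  · simp [gridPos, hfalse, hcell, boolSign]

lemma gridPos_mem (hα : α ∈ Icc (0 : ℝ) 1) : |gridPos d α| ≤ 1 := by
  have hm : (0 : ℝ) < m := Nat.cast_pos.2 d.1.pos
  have hcell : (d.1 : ℝ) + 1 ≤ m := by exact_mod_cast d.1.2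
  obtain ⟨hlo, hhi⟩ := abs_le.1 ((abs_boolSign_mul d.2 α).trans_le (abs_of_nonneg hα.1 ▸ hα.2))
  rw [gridPos, abs_le, neg_le_sub_iff_le_add, sub_le_iff_le_add, div_le_iff₀ hm]
  exact ⟨le_add_of_nonneg_left (div_nonneg (by linarith [(d.1 : ℕ).cast_nonneg (α := ℝ)]) hm.le),
    by linarith⟩

lemma of_abs_gridPos_eq_one (hα : α ∈ Icc (0 : ℝ) 1) (h : |gridPos d α| = 1) :
    α = 1 ∧ gridMove d = none := by
  obtain ⟨i, s⟩ := d
  obtain ⟨hα0, hα1⟩ := hα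
  have hm : (m : ℝ) ≠ 0 := Nat.cast_ne_zero.2 i.pos.ne'
  have hcell : (i : ℝ) + 1 ≤ m := by exact_mod_cast i.2
  have hi0 : (0 : ℝ) ≤ i := Nat.cast_nonneg _
  have hend : 2 * (i : ℝ) + 1 + boolSign s * α = 2 * m ∨ 2 * (i : ℝ) + 1 + boolSign s * α = 0 := by
    rw [← div_eq_iff hm, ← (div_eq_zero_iff.trans (or_iff_left hm))]
    refine (eq_or_eq_neg_of_abs_eq h).imp (fun h => ?_) fun h => ?_ <;>
      linarith [show _ / (m : ℝ) - 1 = _ from h]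
  rw [gridMove_eq_none]
  cases s <;> simp only [boolSign, if_true, Bool.false_eq_true, if_false] at hend
  · have hi : (i : ℝ) = 0 := by rcases hend with h | h <;> linarith only [h, hi0, hα0, hα1, hcell]
    exact ⟨by rcases hend with h | h <;> linarith, Or.inr ⟨rfl, by exact_mod_cast hi⟩⟩
  · have hi : (i : ℝ) + 1 = m := by rcases hend with h | h <;> linarith
    exact ⟨by rcases hend with h | h <;> linarith, Or.inl ⟨rfl, by exact_mod_cast hi⟩⟩

lemma eq_of_gridPos_eq (hα : α ∈ Icc (0 : ℝ) 1) (hα' : α' ∈ Icc (0 : ℝ) 1)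
    (h : gridPos d α = gridPos d' α') :
    α = α' ∧ (d' = d ∨ (α = 0 ∧ d' = (d.1, !d.2)) ∨ (α = 1 ∧ gridMove d = some d')) := by
  obtain ⟨i, s⟩ := d
  obtain ⟨i', s'⟩ := d'
  obtain ⟨hα0, hα1⟩ := hα
  obtain ⟨hα0', hα1'⟩ := hα'
  have hnum : 2 * (i : ℝ) + 1 + boolSign s * α = 2 * i' + 1 + boolSign s' * α' :=
    (div_left_inj' (Nat.cast_ne_zero.2 i.pos.ne')).1 (sub_left_injective h)
  obtain ⟨hlo, hhi⟩ := abs_le.1 ((abs_boolSign_mul s α).trans_le (abs_of_nonneg hα0 ▸ hα1))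
  obtain ⟨hlo', hhi'⟩ := abs_le.1 ((abs_boolSign_mul s' α').trans_le (abs_of_nonneg hα0' ▸ hα1'))
  have hle : (i : ℕ) ≤ i' + 1 := by exact_mod_cast (by linarith : (i : ℝ) ≤ i' + 1)
  have hle' : (i' : ℕ) ≤ i + 1 := by exact_mod_cast (by linarith : (i' : ℝ) ≤ i + 1)
  rw [gridMove_eq_some]
  simp only [Prod.mk.injEq, Fin.ext_iff]
  obtain hi | hi | hi : (i' : ℕ) = i ∨ (i' : ℕ) = i + 1 ∨ (i : ℕ) = i' + 1 := by omega
  all_goals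
    rw [hi] at hnum
    push_cast at hnum
    cases s <;> cases s' <;>
      simp only [boolSign, Bool.false_eq_true, if_true, if_false] at hnum <;>
      first
      | (exfalso; linarith)
      | exact ⟨by linarith, Or.inl ⟨hi, rfl⟩⟩
      | exact ⟨by linarith, Or.inr (Or.inl ⟨by linarith, hi, rfl⟩)⟩
      | exact ⟨by linarith, Or.inr (Or.inr ⟨by linarith, rfl, Or.inl ⟨rfl, hi⟩⟩)⟩
      | exact ⟨by linarith, Or.inr (Or.inr ⟨by linarith, rfl, Or.inr ⟨rfl, hi.symm⟩⟩)⟩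

lemma exists_fin_le_le_add_one (hm : 0 < m) {x : ℝ} (hx : x ∈ Icc (0 : ℝ) m) :
    ∃ i : Fin m, (i : ℝ) ≤ x ∧ x ≤ i + 1 := by
  rcases hx.2.lt_or_eq with h | rfl
  · exact ⟨⟨⌊x⌋₊, (Nat.floor_lt hx.1).2 h⟩, Nat.floor_le hx.1, (Nat.lt_floor_add_one x).le⟩
  · refine ⟨⟨m - 1, by omega⟩, Nat.cast_le.2 (Nat.sub_le m 1), ?_⟩
    exact_mod_cast (Nat.sub_add_cancel hm).ge

lemma exists_gridPos_eq (hm : 0 < m) {u : ℝ} (hu : |u| ≤ 1) :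
    ∃ (d : Fin m × Bool) (α : ℝ), α ∈ Icc (0 : ℝ) 1 ∧ gridPos d α = u := by
  obtain ⟨hu0, hu1⟩ := abs_le.1 hu
  have hm' : (0 : ℝ) < m := Nat.cast_pos.2 hm
  obtain ⟨i, hi0, hi1⟩ := exists_fin_le_le_add_one hm (x := (u + 1) * m / 2)
    ⟨div_nonneg (mul_nonneg (by linarith) hm'.le) two_pos.le, by nlinarith⟩
  refine ⟨(i, decide (0 ≤ (u + 1) * m - (2 * i + 1))), |(u + 1) * m - (2 * i + 1)|,
    ⟨abs_nonneg _, abs_le.2 ⟨by linarith, by linarith⟩⟩, ?_⟩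
  rw [gridPos, boolSign_mul_abs, add_sub_cancel, mul_div_cancel_right₀ _ hm'.ne',
    add_sub_cancel_right]

lemma dist_gridPos_le (hα : α ∈ Icc (0 : ℝ) 1) (hα' : α' ∈ Icc (0 : ℝ) 1) :
    dist (gridPos d α) (gridPos d α') ≤ 1 / m := by
  have hdiff : gridPos d α - gridPos d α' = boolSign d.2 * (α - α') / m := by
    unfold gridPos
    ring
  rw [Real.dist_eq, hdiff, abs_div, abs_boolSign_mul, Nat.abs_cast]
  gcongr
  exact abs_le.2 ⟨by linarith [hα.1, hα'.2], by linarith [hα.2, hα'.1]⟩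

end Grid

section GridFlag

variable {m : ℕ} {s s' : Bool} {d d' dx dx' dy dy' : Fin m × Bool}

/-- The sheet of the pillow and the half-cell on the other side of the endpoint of a half-cell:
crossing the boundary of the square changes the sheet. -/
def gridCross (s : Bool) (d : Fin m × Bool) : Bool × (Fin m × Bool) :=
  match gridMove d with
  | some d' => (s, d')
  | none => (!s, d)

lemma gridCross_of_some (h : gridMove d = some d') : gridCross s d = (s, d') := by
  simp only [gridCross, h]

lemma gridCross_of_none (h : gridMove d = none) : gridCross s d = (!s, d) := by
  simp only [gridCross, h]

lemma gridCross_gridCross : gridCross (gridCross s d).1 (gridCross s d).2 = (s, d) := by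
  rcases h : gridMove d with _ | d'
  · simp [gridCross_of_none h]
  · simp [gridCross_of_some h, gridCross_of_some (gridMove_symm h)]

lemma xor_gridCross : ((gridCross s d).1 ^^ (gridCross s d).2.2) = !(s ^^ d.2) := by
  rcases h : gridMove d with _ | d'
  · simp [gridCross_of_none h]
  · simp [gridCross_of_some h, (gridMove_eq_some.1 h).1]

/-- The flags of the `m × m` subdivision of the two sheets of the pillow: a sheet, a half-cell on
each axis, and one of the two flags in the resulting quarter of a cell. -/
abbrev GridFlag (m : ℕ) := Bool × (Fin m × Bool) × (Fin m × Bool) × Bool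

/-- The flag system of the subdivided pillow. -/
def gridFlagSystem (m : ℕ) : FlagSystem (GridFlag m) where
  r₀ ω := if ω.2.2.2 then (ω.1, (ω.2.1.1, !ω.2.1.2), ω.2.2.1, ω.2.2.2)
    else (ω.1, ω.2.1, (ω.2.2.1.1, !ω.2.2.1.2), ω.2.2.2)
  r₁ ω := (ω.1, ω.2.1, ω.2.2.1, !ω.2.2.2)
  r₂ ω := if ω.2.2.2 then
      ((gridCross ω.1 ω.2.2.1).1, ω.2.1, (gridCross ω.1 ω.2.2.1).2, ω.2.2.2)
    else ((gridCross ω.1 ω.2.1).1, (gridCross ω.1 ω.2.1).2, ω.2.2.1, ω.2.2.2)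
  sgn ω := ω.1 ^^ ω.2.1.2 ^^ ω.2.2.1.2 ^^ ω.2.2.2
  r₀_r₀ := by rintro ⟨s, dx, dy, _ | _⟩ <;> simp
  r₁_r₁ := by rintro ⟨s, dx, dy, _ | _⟩ <;> simp
  r₂_r₂ := by rintro ⟨s, dx, dy, _ | _⟩ <;> simp [gridCross_gridCross]
  sgn_r₀ := by rintro ⟨s, dx, dy, _ | _⟩ <;> simp
  sgn_r₁ := by rintro ⟨s, dx, dy, _ | _⟩ <;> simp
  sgn_r₂ := by
    rintro ⟨s, dx, dy, _ | _⟩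
    · simp [xor_gridCross]
    · simp only [if_true]
      rw [Bool.xor_right_comm _ dx.2, xor_gridCross, Bool.xor_right_comm s]
      simp
  comm := by rintro ⟨s, dx, dy, _ | _⟩ <;> simp
  ne := by
    rintro ⟨s, dx, dy, _ | _⟩ h
    · simpa using congrArg (fun ω : GridFlag m => ω.2.2.1.2) h
    · simpa using congrArg (fun ω : GridFlag m => ω.2.1.2) h

variable {a a' : Bool} {p p' : ℝ × ℝ} {ω ω' : GridFlag m}

/-- The coordinates, in its quarter of a cell, of a point of one of the two flags in it. -/
def gridCoord (a : Bool) (p : ℝ × ℝ) : ℝ × ℝ := if a then p.swap else p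

lemma continuous_gridCoord : Continuous (gridCoord a) := by
  cases a
  exacts [continuous_id, continuous_swap]

lemma gridCoord_mem (hp : p ∈ flagTriangle) :
    (gridCoord a p).1 ∈ Icc (0 : ℝ) 1 ∧ (gridCoord a p).2 ∈ Icc (0 : ℝ) 1 := by
  obtain ⟨h0, h1, h2⟩ := hp
  cases a
  exacts [⟨⟨h0.trans h1, h2⟩, h0, h1.trans h2⟩, ⟨⟨h0, h1.trans h2⟩, h0.trans h1, h2⟩]

lemma gridCoord_injOn (hp : p ∈ flagTriangle) (hp' : p' ∈ flagTriangle)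
    (h : gridCoord a p = gridCoord a' p') : p = p' ∧ (a = a' ∨ p.1 = p.2) := by
  obtain ⟨-, hle, -⟩ := hp
  obtain ⟨-, hle', -⟩ := hp'
  obtain ⟨hfst, hsnd⟩ := Prod.ext_iff.1 h
  cases a <;> cases a' <;>
    simp only [gridCoord, if_true, if_false, Bool.false_eq_true, Prod.fst_swap, Prod.snd_swap]
      at hfst hsnd
  · exact ⟨Prod.ext hfst hsnd, Or.inl rfl⟩
  · exact ⟨Prod.ext (by linarith) (by linarith), Or.inr (by linarith)⟩
  · exact ⟨Prod.ext (by linarith) (by linarith), Or.inr (by linarith)⟩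
  · exact ⟨Prod.ext hsnd hfst, Or.inl rfl⟩

lemma gridCoord_fst_eq_zero (hp : p ∈ flagTriangle) (h : (gridCoord a p).1 = 0) :
    p.2 = 0 ∧ (a = true ∨ p.1 = p.2) := by
  cases a
  · have h2 := le_antisymm (hp.2.1.trans_eq h) hp.1
    exact ⟨h2, Or.inr (h.trans h2.symm)⟩
  · exact ⟨h, Or.inl rfl⟩

lemma gridCoord_snd_eq_zero (hp : p ∈ flagTriangle) (h : (gridCoord a p).2 = 0) :
    p.2 = 0 ∧ (a = false ∨ p.1 = p.2) := by
  cases a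
  · exact ⟨h, Or.inl rfl⟩
  · have h2 := le_antisymm (hp.2.1.trans_eq h) hp.1
    exact ⟨h2, Or.inr (h.trans h2.symm)⟩

lemma gridCoord_fst_eq_one (hp : p ∈ flagTriangle) (h : (gridCoord a p).1 = 1) :
    p.1 = 1 ∧ (a = false ∨ p.1 = p.2) := by
  cases a
  · exact ⟨h, Or.inl rfl⟩
  · have h1 := le_antisymm hp.2.2 (h.symm.trans_le hp.2.1)
    exact ⟨h1, Or.inr (h1.trans h.symm)⟩

lemma gridCoord_snd_eq_one (hp : p ∈ flagTriangle) (h : (gridCoord a p).2 = 1) :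
    p.1 = 1 ∧ (a = true ∨ p.1 = p.2) := by
  cases a
  · have h1 := le_antisymm hp.2.2 (h.symm.trans_le hp.2.1)
    exact ⟨h1, Or.inr (h1.trans h.symm)⟩
  · exact ⟨h, Or.inl rfl⟩

/-- The point of the square with given coordinates in a flag of the subdivided pillow. -/
noncomputable def gridSquare (ω : GridFlag m) (p : ℝ × ℝ) : ℝ × ℝ :=
  (gridPos ω.2.1 (gridCoord ω.2.2.2 p).1, gridPos ω.2.2.1 (gridCoord ω.2.2.2 p).2)

/-- The point of the sphere with given coordinates in a flag of the subdivided pillow. -/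
noncomputable def gridPoint (ω : GridFlag m) (p : ℝ × ℝ) :
    Metric.sphere (0 : EuclideanSpace ℝ (Fin 3)) 1 := spherePillow ω.1 (gridSquare ω p)

lemma continuous_gridSquare : Continuous (gridSquare ω) :=
  (continuous_gridPos.comp (continuous_fst.comp continuous_gridCoord)).prodMk
    (continuous_gridPos.comp (continuous_snd.comp continuous_gridCoord))

lemma norm_gridSquare_le (hp : p ∈ flagTriangle) : ‖gridSquare ω p‖ ≤ 1 :=
  norm_prod_le_iff.2 ⟨gridPos_mem (gridCoord_mem hp).1, gridPos_mem (gridCoord_mem hp).2⟩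

lemma spherePillow_gridCross_left {v : ℝ} (hv : |v| ≤ 1) :
    spherePillow (gridCross s d).1 (gridPos (gridCross s d).2 1, v) =
      spherePillow s (gridPos d 1, v) := by
  rcases h : gridMove d with _ | d'
  · rw [gridCross_of_none h]
    exact spherePillow_congr (max_eq_left (hv.trans_eq (abs_gridPos_of_move h).symm) |>.trans
      (abs_gridPos_of_move h))
  · rw [gridCross_of_some h, gridPos_move h]

lemma spherePillow_gridCross_right {v : ℝ} (hv : |v| ≤ 1) :
    spherePillow (gridCross s d).1 (v, gridPos (gridCross s d).2 1) =
      spherePillow s (v, gridPos d 1) := by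
  rcases h : gridMove d with _ | d'
  · rw [gridCross_of_none h]
    exact spherePillow_congr (max_eq_right (hv.trans_eq (abs_gridPos_of_move h).symm) |>.trans
      (abs_gridPos_of_move h))
  · rw [gridCross_of_some h, gridPos_move h]

lemma gridPoint_eq_of_step (hp : p ∈ flagTriangle)
    (h : (gridFlagSystem m).Step (ω, p) (ω', p)) : gridPoint ω' p = gridPoint ω p := by
  obtain ⟨s, dx, dy, _ | _⟩ := ω <;>
    obtain ⟨-, ⟨h, rfl⟩ | ⟨h, rfl⟩ | ⟨h, rfl⟩⟩ := h <;> dsimp only at h <;>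
    simp only [gridPoint, gridSquare, gridCoord, gridFlagSystem, h, if_true, if_false,
        Prod.fst_swap,
      Prod.snd_swap, Bool.false_eq_true, Bool.not_true, Bool.not_false]
  · rw [gridPos_flip]
  · exact spherePillow_gridCross_left (gridPos_mem (gridCoord_mem (a := false) hp).2)
  · rw [gridPos_flip]
  · exact spherePillow_gridCross_right (gridPos_mem (gridCoord_mem (a := false) hp).2)

lemma exists_gridPoint_eq (hm : 0 < m) (z : Metric.sphere (0 : EuclideanSpace ℝ (Fin 3)) 1) :
    ∃ ω : GridFlag m, ∃ p ∈ flagTriangle, gridPoint ω p = z := by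
  obtain ⟨s, ⟨u, v⟩, huv, rfl⟩ := exists_spherePillow_eq z
  obtain ⟨dx, α, hα, rfl⟩ := exists_gridPos_eq hm (norm_prod_le_iff.1 huv).1
  obtain ⟨dy, β, hβ, rfl⟩ := exists_gridPos_eq hm (norm_prod_le_iff.1 huv).2
  rcases le_total β α with h | h
  · exact ⟨(s, dx, dy, false), (α, β), ⟨hβ.1, h, hα.2⟩, rfl⟩
  · exact ⟨(s, dx, dy, true), (β, α), ⟨hα.1, h, hβ.2⟩, rfl⟩

lemma eqvGen_gridStep_swap (h : a = a' ∨ p.1 = p.2) :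
    EqvGen (gridFlagSystem m).Step ((s, dx, dy, a), p) ((s, dx, dy, a'), p) := by
  rcases eq_or_ne a a' with rfl | hne
  · exact .refl _
  · obtain rfl := Bool.eq_not.2 hne.symm
    exact .rel _ _ ⟨rfl, Or.inr (Or.inl ⟨h.resolve_left hne, rfl⟩)⟩

lemma eqvGen_gridStep_of_swap
    (hstep : (gridFlagSystem m).Step ((s, dx, dy, a'), p) ((s', dx', dy', a'), p))
    (h : a = a' ∨ p.1 = p.2) :
    EqvGen (gridFlagSystem m).Step ((s, dx, dy, a), p) ((s', dx', dy', a), p) :=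
  ((eqvGen_gridStep_swap h).trans _ _ _ (.rel _ _ hstep)).trans _ _ _
    (eqvGen_gridStep_swap (h.imp_left Eq.symm))

lemma eqvGen_gridStep_flip_left (hp : p ∈ flagTriangle) (h : (gridCoord a p).1 = 0) :
    EqvGen (gridFlagSystem m).Step ((s, dx, dy, a), p) ((s, (dx.1, !dx.2), dy, a), p) :=
  have ⟨hzero, hswap⟩ := gridCoord_fst_eq_zero hp h
  eqvGen_gridStep_of_swap ⟨rfl, Or.inl ⟨hzero, rfl⟩⟩ hswap

lemma eqvGen_gridStep_flip_right (hp : p ∈ flagTriangle) (h : (gridCoord a p).2 = 0) :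
    EqvGen (gridFlagSystem m).Step ((s, dx, dy, a), p) ((s, dx, (dy.1, !dy.2), a), p) :=
  have ⟨hzero, hswap⟩ := gridCoord_snd_eq_zero hp h
  eqvGen_gridStep_of_swap ⟨rfl, Or.inl ⟨hzero, rfl⟩⟩ hswap

lemma eqvGen_gridStep_cross_left (hp : p ∈ flagTriangle) (h : (gridCoord a p).1 = 1) :
    EqvGen (gridFlagSystem m).Step ((s, dx, dy, a), p)
      (((gridCross s dx).1, (gridCross s dx).2, dy, a), p) :=
  have ⟨hone, hswap⟩ := gridCoord_fst_eq_one hp h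
  eqvGen_gridStep_of_swap ⟨rfl, Or.inr (Or.inr ⟨hone, rfl⟩)⟩ hswap

lemma eqvGen_gridStep_cross_right (hp : p ∈ flagTriangle) (h : (gridCoord a p).2 = 1) :
    EqvGen (gridFlagSystem m).Step ((s, dx, dy, a), p)
      (((gridCross s dy).1, dx, (gridCross s dy).2, a), p) :=
  have ⟨hone, hswap⟩ := gridCoord_snd_eq_one hp h
  eqvGen_gridStep_of_swap ⟨rfl, Or.inr (Or.inr ⟨hone, rfl⟩)⟩ hswap

lemma eqvGen_gridStep_sheet (hp : p ∈ flagTriangle)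
    (h : s = s' ∨ ‖gridSquare (s, dx, dy, a) p‖ = 1) :
    EqvGen (gridFlagSystem m).Step ((s, dx, dy, a), p) ((s', dx, dy, a), p) := by
  rcases eq_or_ne s s' with rfl | hne
  · exact .refl _
  obtain rfl := Bool.eq_not.2 hne.symm
  obtain ⟨hα, hβ⟩ := gridCoord_mem (a := a) hp
  have hnorm : max |gridPos dx (gridCoord a p).1| |gridPos dy (gridCoord a p).2| = 1 :=
    h.resolve_left hne
  rcases max_choice |gridPos dx (gridCoord a p).1| |gridPos dy (gridCoord a p).2| with hmax | hmax
  · obtain ⟨hend, hmove⟩ := of_abs_gridPos_eq_one hα (hmax ▸ hnorm)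
    simpa only [gridCross_of_none hmove] using
      eqvGen_gridStep_cross_left (s := s) (dx := dx) (dy := dy) hp hend
  · obtain ⟨hend, hmove⟩ := of_abs_gridPos_eq_one hβ (hmax ▸ hnorm)
    simpa only [gridCross_of_none hmove] using
      eqvGen_gridStep_cross_right (s := s) (dx := dx) (dy := dy) hp hend

lemma eqvGen_gridStep_left (hp : p ∈ flagTriangle)
    (h : dx' = dx ∨ ((gridCoord a p).1 = 0 ∧ dx' = (dx.1, !dx.2)) ∨
      ((gridCoord a p).1 = 1 ∧ gridMove dx = some dx')) :
    EqvGen (gridFlagSystem m).Step ((s, dx, dy, a), p) ((s, dx', dy, a), p) := by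
  rcases h with rfl | ⟨hmid, rfl⟩ | ⟨hend, hmove⟩
  · exact .refl _
  · exact eqvGen_gridStep_flip_left hp hmid
  · simpa only [gridCross_of_some hmove] using
      eqvGen_gridStep_cross_left (s := s) (dx := dx) (dy := dy) hp hend

lemma eqvGen_gridStep_right (hp : p ∈ flagTriangle)
    (h : dy' = dy ∨ ((gridCoord a p).2 = 0 ∧ dy' = (dy.1, !dy.2)) ∨
      ((gridCoord a p).2 = 1 ∧ gridMove dy = some dy')) :
    EqvGen (gridFlagSystem m).Step ((s, dx, dy, a), p) ((s, dx, dy', a), p) := by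
  rcases h with rfl | ⟨hmid, rfl⟩ | ⟨hend, hmove⟩
  · exact .refl _
  · exact eqvGen_gridStep_flip_right hp hmid
  · simpa only [gridCross_of_some hmove] using
      eqvGen_gridStep_cross_right (s := s) (dx := dx) (dy := dy) hp hend

lemma eqvGen_gridStep_of_gridPoint_eq (hp : p ∈ flagTriangle) (hp' : p' ∈ flagTriangle)
    (h : gridPoint ω p = gridPoint ω' p') :
    EqvGen (gridFlagSystem m).Step (ω, p) (ω', p') := by
  obtain ⟨s, dx, dy, a⟩ := ω
  obtain ⟨s', dx', dy', a'⟩ := ω'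
  obtain ⟨hsquare, hsheet⟩ :=
    eq_of_spherePillow_eq (norm_gridSquare_le hp) (norm_gridSquare_le hp') h
  obtain ⟨hα, hβ⟩ := gridCoord_mem (a := a) hp
  obtain ⟨hα', hβ'⟩ := gridCoord_mem (a := a') hp'
  obtain ⟨hfst, hleft⟩ := eq_of_gridPos_eq hα hα' (congrArg Prod.fst hsquare)
  obtain ⟨hsnd, hright⟩ := eq_of_gridPos_eq hβ hβ' (congrArg Prod.snd hsquare)
  obtain ⟨rfl, hswap⟩ := gridCoord_injOn hp hp' (Prod.ext hfst hsnd)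
  exact (((eqvGen_gridStep_sheet hp hsheet).trans _ _ _
    (eqvGen_gridStep_left hp hleft)).trans _ _ _ (eqvGen_gridStep_right hp hright)).trans _ _ _
    (eqvGen_gridStep_swap hswap)

lemma dist_gridSquare_le (hp : p ∈ flagTriangle) (hp' : p' ∈ flagTriangle) :
    dist (gridSquare ω p) (gridSquare ω p') ≤ 1 / m :=
  max_le (dist_gridPos_le (gridCoord_mem hp).1 (gridCoord_mem hp').1)
    (dist_gridPos_le (gridCoord_mem hp).2 (gridCoord_mem hp').2)

lemma exists_dist_gridPoint_lt {δ : ℝ} (hδ : 0 < δ) :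
    ∃ m : ℕ, 0 < m ∧ ∀ ω : GridFlag m, ∀ p ∈ flagTriangle, ∀ p' ∈ flagTriangle,
      dist (gridPoint ω p) (gridPoint ω p') < δ := by
  have hunif (s : Bool) := Metric.uniformContinuousOn_iff.1
    ((isCompact_closedBall (0 : ℝ × ℝ) 1).uniformContinuousOn_of_continuous
      (continuous_spherePillow (s := s)).continuousOn) δ hδ
  choose θ hθ hclose using hunif
  obtain ⟨n, hn⟩ := exists_nat_one_div_lt (lt_min (hθ true) (hθ false))
  have hmesh (s : Bool) : 1 / ((n + 1 : ℕ) : ℝ) < θ s := by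
    push_cast
    cases s
    exacts [hn.trans_le (min_le_right _ _), hn.trans_le (min_le_left _ _)]
  refine ⟨n + 1, n.succ_pos, fun ω p hp p' hp' => ?_⟩
  exact hclose _ _ (mem_closedBall_zero_iff.2 (norm_gridSquare_le hp)) _
    (mem_closedBall_zero_iff.2 (norm_gridSquare_le hp'))
    ((dist_gridSquare_le hp hp').trans_lt (hmesh _))

end GridFlag

/-! ### Approximation by maps with a generic height -/

lemma exists_injOn_near {α M : Type*} [MetricSpace M] [∀ x : M, (nhdsWithin x {x}ᶜ).NeBot]
    {S : Set α} (hS : S.Finite) (g : α → M) {θ : ℝ} (hθ : 0 < θ) :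
    ∃ A : α → M, InjOn A S ∧ ∀ x, dist (A x) (g x) < θ := by
  classical
  induction S, hS using Set.Finite.induction_on with
  | empty => exact ⟨g, injOn_empty g, fun x => by simpa using hθ⟩
  | @insert a S ha hS ih =>
    obtain ⟨A, hinj, hA⟩ := ih
    obtain ⟨y, hy, hya⟩ := (dense_univ.sdiff_finite (hS.image A)).exists_dist_lt (g a) hθ
    have hcongr : EqOn (update A a y) A S := fun x hx =>
      update_of_ne (ne_of_mem_of_not_mem hx ha) _ _
    refine ⟨update A a y, (injOn_insert ha).2 ⟨hinj.congr hcongr.symm, ?_⟩, fun x => ?_⟩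
    · rw [update_self, hcongr.image_eq]
      exact hy.2
    · obtain rfl | hx := eq_or_ne x a
      · rwa [update_self, dist_comm]
      · rw [update_of_ne hx]
        exact hA x

lemma dense_setOf_linearIndependent_pair {ι E : Type*} [Countable ι] [NormedAddCommGroup E]
    [NormedSpace ℝ E] [FiniteDimensional ℝ E] (hE : 1 < Module.finrank ℝ E) {z : ι → E}
    (hz : ∀ i, z i ≠ 0) : Dense {y : E | ∀ i, LinearIndependent ℝ ![z i, y]} := by
  have : CompleteSpace E := FiniteDimensional.complete ℝ E
  have hline (i) : Dense ((Submodule.span ℝ {z i} : Set E)ᶜ) := by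
    refine interior_eq_empty_iff_dense_compl.1 (not_nonempty_iff_eq_empty.1 fun hint => ?_)
    have := finrank_span_singleton (K := ℝ) (hz i)
    rw [Submodule.eq_top_of_nonempty_interior' _ hint, finrank_top] at this
    exact hE.ne' this
  refine (dense_iInter_of_isOpen (fun i => (Submodule.closed_of_finiteDimensional
    (Submodule.span ℝ {z i})).isOpen_compl) hline).mono fun y hy i => ?_
  rw [LinearIndependent.pair_iff' (hz i)]
  exact fun a ha => mem_iInter.1 hy i (Submodule.mem_span_singleton.2 ⟨a, ha⟩)

section NormedSpace

open NormedSpace (normalize)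

variable {E : Type*} [NormedAddCommGroup E] [NormedSpace ℝ E]

lemma norm_normalize_le_one (y : E) : ‖normalize y‖ ≤ 1 := by
  rcases eq_or_ne y 0 with rfl | hy
  · simp
  · exact (NormedSpace.norm_normalize hy).le

lemma continuousOn_smul_normalize {α : Type*} [TopologicalSpace α] {S : Set α} {R : α → ℝ}
    {y : α → E} (hR : ContinuousOn R S) (hy : ContinuousOn y S) (h : ∀ p ∈ S, y p = 0 → R p = 0) :
    ContinuousOn (fun p => R p • normalize (y p)) S := by
  intro p hp
  rcases eq_or_ne (y p) 0 with h0 | h0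
  · rw [ContinuousWithinAt, h0, NormedSpace.normalize_zero_eq_zero, smul_zero]
    refine squeeze_zero_norm (a := fun x => |R x|) (fun x => ?_) ?_
    · rw [norm_smul, Real.norm_eq_abs]
      exact mul_le_of_le_one_right (abs_nonneg _) (norm_normalize_le_one _)
    · simpa only [h p hp h0, abs_zero] using (hR p hp).tendsto.abs
  · exact (hR p hp).smul (((hy p hp).norm.inv₀ (norm_ne_zero_iff.2 h0)).smul (hy p hp))

lemma abs_sub_le_sqrt {a b d : ℝ} (ha : 0 ≤ a) (hb : 0 ≤ b) (h : |a ^ 2 - b ^ 2| ≤ d) :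
    |a - b| ≤ √d := by
  have hsum : |a - b| ≤ |a + b| := by
    rw [abs_of_nonneg (add_nonneg ha hb), abs_le]
    exact ⟨by linarith, by linarith⟩
  refine Real.le_sqrt_of_sq_le (le_trans ?_ h)
  rw [sq_sub_sq, abs_mul, sq]
  exact mul_le_mul_of_nonneg_right hsum (abs_nonneg _)

lemma abs_sqrt_one_sub_sq_sub_le {r v c δ : ℝ} (hr : 0 ≤ r) (hrv : r ^ 2 + v ^ 2 = 1)
    (hc : c ∈ Icc (-1 : ℝ) 1) (h : |c - v| ≤ δ) : |√(1 - c ^ 2) - r| ≤ √(2 * δ) := by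
  have hc2 : c ^ 2 ≤ 1 := by nlinarith [hc.1, hc.2]
  have hv : |v| ≤ 1 := (sq_le_one_iff_abs_le_one v).1 (by nlinarith)
  apply abs_sub_le_sqrt (Real.sqrt_nonneg _) hr
  rw [Real.sq_sqrt (by linarith), show 1 - c ^ 2 - r ^ 2 = -((c + v) * (c - v)) by linarith,
    abs_neg, abs_mul]
  have hsum : |c + v| ≤ 2 := (abs_add_le c v).trans (by linarith [show |c| ≤ 1 from abs_le.2 hc])
  gcongr

lemma norm_smul_normalize_sub_le {R δ θ : ℝ} {y u : E} (hR : |R - ‖u‖| ≤ δ) (hy : ‖y - u‖ ≤ θ) :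
    ‖R • normalize y - u‖ ≤ δ + 2 * θ := by
  have hdecomp : R • normalize y - u = (R - ‖y‖) • normalize y + (y - u) := by
    rw [sub_smul, NormedSpace.norm_smul_normalize, sub_add_sub_cancel]
  have hRy : |R - ‖y‖| ≤ δ + θ := by
    have := abs_le.1 ((abs_norm_sub_norm_le y u).trans hy)
    have := abs_le.1 hR
    exact abs_le.2 ⟨by linarith, by linarith⟩
  calc ‖R • normalize y - u‖ ≤ |R - ‖y‖| * ‖normalize y‖ + ‖y - u‖ := by
        rw [hdecomp, ← Real.norm_eq_abs, ← norm_smul]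
        exact norm_add_le _ _
    _ ≤ (δ + θ) * 1 + θ := by
        gcongr
        exacts [(abs_nonneg _).trans hRy, norm_normalize_le_one y]
    _ = δ + 2 * θ := by ring

lemma norm_smul_normalize_sub_le_of_norm_le {R δ θ : ℝ} {y u : E} (hR : |R - ‖u‖| ≤ δ)
    (hu : ‖u‖ ≤ θ) : ‖R • normalize y - u‖ ≤ δ + 2 * θ := by
  have hRθ : |R| ≤ δ + θ := by
    calc |R| ≤ |R - ‖u‖| + |‖u‖| := by simpa using abs_add_le (R - ‖u‖) ‖u‖
      _ ≤ δ + θ := by rw [abs_norm]; gcongr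
  calc ‖R • normalize y - u‖ ≤ |R| * ‖normalize y‖ + ‖u‖ := by
        rw [← Real.norm_eq_abs, ← norm_smul]
        exact norm_sub_le _ _
    _ ≤ (δ + θ) * 1 + θ := by
        gcongr
        exacts [(abs_nonneg _).trans hRθ, norm_normalize_le_one y]
    _ = δ + 2 * θ := by ring

end NormedSpace

namespace FlagSystem

variable {Φ X E : Type*} {F : FlagSystem Φ} {q : Φ → ℝ × ℝ → X}

variable (F q) in
/-- The maps `q ω` exhibit `X` as the triangulated surface with the flags `Φ`: they cover `X`, and
points are identified exactly along common sides of barycentric triangles. -/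
structure IsParametrization [TopologicalSpace X] : Prop where
  continuousOn : ∀ ω, ContinuousOn (q ω) flagTriangle
  exists_eq : ∀ x, ∃ ω, ∃ p ∈ flagTriangle, q ω p = x
  eq_iff : ∀ ω ω', ∀ p ∈ flagTriangle, ∀ p' ∈ flagTriangle,
    q ω p = q ω' p' ↔ EqvGen F.Step (ω, p) (ω', p')

lemma snd_eq_of_eqvGen_step {x y : Φ × (ℝ × ℝ)} (h : EqvGen F.Step x y) : x.2 = y.2 := by
  induction h with
  | rel x y h => exact h.1.symm
  | refl x => rfl
  | symm x y _ ih => exact ih.symm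
  | trans x y z _ _ ih ih' => exact ih.trans ih'

lemma eq_of_eqvGen_step (hstep : ∀ ω ω', ∀ p ∈ flagTriangle, F.Step (ω, p) (ω', p) →
    q ω p = q ω' p) {x y : Φ × (ℝ × ℝ)} (h : EqvGen F.Step x y) (hx : x.2 ∈ flagTriangle) :
    q x.1 x.2 = q y.1 y.2 := by
  induction h with
  | rel x y h =>
    obtain ⟨ω', p⟩ := y
    obtain rfl : p = x.2 := h.1
    exact hstep _ _ _ hx h
  | refl x => rfl
  | symm x y h ih => exact (ih (snd_eq_of_eqvGen_step h ▸ hx)).symm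
  | trans x y z h _ ih ih' => exact (ih hx).trans (ih' (snd_eq_of_eqvGen_step h ▸ hx))

lemma isParametrization_of_step [TopologicalSpace X]
    (hcont : ∀ ω, ContinuousOn (q ω) flagTriangle)
    (hsurj : ∀ x, ∃ ω, ∃ p ∈ flagTriangle, q ω p = x)
    (hstep : ∀ ω ω', ∀ p ∈ flagTriangle, F.Step (ω, p) (ω', p) → q ω p = q ω' p)
    (hker : ∀ ω ω', ∀ p ∈ flagTriangle, ∀ p' ∈ flagTriangle, q ω p = q ω' p' →
      EqvGen F.Step (ω, p) (ω', p')) : F.IsParametrization q :=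
  ⟨hcont, hsurj, fun ω ω' p hp p' hp' => ⟨hker ω ω' p hp p' hp',
    fun h => eq_of_eqvGen_step hstep h hp⟩⟩

lemma zero_zero_mem_flagTriangle : ((0, 0) : ℝ × ℝ) ∈ flagTriangle := by simp [flagTriangle]

lemma one_zero_mem_flagTriangle : ((1, 0) : ℝ × ℝ) ∈ flagTriangle := by simp [flagTriangle]

lemma one_one_mem_flagTriangle : ((1, 1) : ℝ × ℝ) ∈ flagTriangle := by simp [flagTriangle]

lemma eqvGen_step_edge_midpoint {x y : Φ × (ℝ × ℝ)} (h : EqvGen F.Step x y) (hx : x.2 = (1, 0)) :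
    y.1 = x.1 ∨ y.1 = F.r₀ x.1 ∨ y.1 = F.r₂ x.1 ∨ y.1 = F.r₀ (F.r₂ x.1) := by
  induction h with
  | rel x y h =>
    obtain ⟨-, ⟨-, hω⟩ | ⟨hside, -⟩ | ⟨-, hω⟩⟩ := h
    exacts [.inr (.inl hω), by simp [hx] at hside, .inr (.inr (.inl hω))]
  | refl x => exact .inl rfl
  | symm x y h ih =>
    rcases ih (snd_eq_of_eqvGen_step h ▸ hx) with h | h | h | h <;>
      simp [h, F.comm, F.r₀_r₀, F.r₂_r₂]
  | trans x y z h _ ih ih' =>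
    rcases ih hx with h₁ | h₁ | h₁ | h₁ <;>
      rcases ih' (snd_eq_of_eqvGen_step h ▸ hx) with h₂ | h₂ | h₂ | h₂ <;>
      simp [h₂, h₁, F.comm, F.r₀_r₀, F.r₂_r₂]

namespace IsParametrization

variable [TopologicalSpace X] (hq : F.IsParametrization q)

include hq

lemma eq_of_step {ω ω' : Φ} {p : ℝ × ℝ} (hp : p ∈ flagTriangle) (h : F.Step (ω, p) (ω', p)) :
    q ω' p = q ω p :=
  ((hq.eq_iff _ _ p hp p hp).2 (.rel _ _ h)).symm

/-- The values of three maps at the corners of the barycentric triangles. -/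
def cornerMap (a b c : X → E) : F.CornerMap E where
  face ω := a (q ω (0, 0))
  edge ω := b (q ω (1, 0))
  vertex ω := c (q ω (1, 1))
  face_r₀ _ := congrArg a (hq.eq_of_step zero_zero_mem_flagTriangle ⟨rfl, .inl ⟨rfl, rfl⟩⟩)
  face_r₁ _ := congrArg a (hq.eq_of_step zero_zero_mem_flagTriangle ⟨rfl, .inr (.inl ⟨rfl, rfl⟩)⟩)
  edge_r₀ _ := congrArg b (hq.eq_of_step one_zero_mem_flagTriangle ⟨rfl, .inl ⟨rfl, rfl⟩⟩)
  edge_r₂ _ := congrArg b (hq.eq_of_step one_zero_mem_flagTriangle ⟨rfl, .inr (.inr ⟨rfl, rfl⟩)⟩)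
  vertex_r₁ _ := congrArg c (hq.eq_of_step one_one_mem_flagTriangle ⟨rfl, .inr (.inl ⟨rfl, rfl⟩)⟩)
  vertex_r₂ _ := congrArg c (hq.eq_of_step one_one_mem_flagTriangle ⟨rfl, .inr (.inr ⟨rfl, rfl⟩)⟩)

lemma eq_or_eq_of_edge_midpoint_eq {ω ω' : Φ} (h : q ω (1, 0) = q ω' (1, 0))
    (hs : F.sgn ω = F.sgn ω') : ω' = ω ∨ ω' = F.r₀ (F.r₂ ω) := by
  rcases eqvGen_step_edge_midpoint ((hq.eq_iff _ _ _ one_zero_mem_flagTriangle _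
    one_zero_mem_flagTriangle).1 h) rfl with hω | hω | hω | hω
  · exact .inl hω
  · simp [show ω' = F.r₀ ω from hω, F.sgn_r₀] at hs
  · simp [show ω' = F.r₂ ω from hω, F.sgn_r₂] at hs
  · exact .inr hω

end IsParametrization

end FlagSystem

lemma bounds_of_abs_sub_clamp_lt {v e μ : ℝ} (hμ : μ ≤ 1) (hv : v ∈ Icc (-1 : ℝ) 1)
    (he : |e - max (-1 + μ) (min (1 - μ) v)| < μ / 2) :
    |e - v| < 3 / 2 * μ ∧ |e| < 1 - μ / 2 := by
  obtain ⟨hv₁, hv₂⟩ := hv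
  rw [abs_lt] at he ⊢
  rw [abs_lt]
  rcases max_cases (-1 + μ) (min (1 - μ) v) with ⟨hmax, _⟩ | ⟨hmax, _⟩ <;>
    rcases min_cases (1 - μ) v with ⟨hmin, _⟩ | ⟨hmin, _⟩ <;>
    rw [hmax] at he <;> refine ⟨⟨?_, ?_⟩, ?_, ?_⟩ <;> linarith

namespace FlagSystem

variable {Φ X : Type*} {F : FlagSystem Φ} {q : Φ → ℝ × ℝ → X}

namespace IsParametrization

variable [TopologicalSpace X] (hq : F.IsParametrization q)

include hq

lemma exists_height_corners [Finite Φ] {V : X → ℝ} (hV : ∀ x, V x ∈ Icc (-1 : ℝ) 1) {μ : ℝ}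
    (hμ : 0 < μ) (hμ₁ : μ ≤ 1) (hosc : ∀ ω, ∀ p ∈ flagTriangle, ∀ p' ∈ flagTriangle,
      |V (q ω p) - V (q ω p')| ≤ μ / 4) :
    ∃ A : F.Height, (∀ ω, A.face ω = min 1 (V (q ω (0, 0)) + 3 * μ)) ∧
      (∀ ω, A.vertex ω = max (-1) (V (q ω (1, 1)) - 3 * μ)) ∧
      ∀ ω, |A.edge ω - V (q ω (1, 0))| < 3 / 2 * μ := by
  obtain ⟨b, hinj, hb⟩ := exists_injOn_near (finite_range fun ω => q ω (1, 0))
    (fun x => max (-1 + μ) (min (1 - μ) (V x))) (half_pos hμ)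
  have hedge ω := bounds_of_abs_sub_clamp_lt hμ₁ (hV (q ω (1, 0))) (hb (q ω (1, 0)))
  have hface ω : b (q ω (1, 0)) < min 1 (V (q ω (0, 0)) + 3 * μ) := by
    have := abs_lt.1 (hedge ω).1
    have := abs_lt.1 (hedge ω).2
    have := abs_le.1 (hosc ω _ zero_zero_mem_flagTriangle _ one_zero_mem_flagTriangle)
    exact lt_min (by linarith) (by linarith)
  have hvertex ω : max (-1) (V (q ω (1, 1)) - 3 * μ) < b (q ω (1, 0)) := by
    have := abs_lt.1 (hedge ω).1
    have := abs_lt.1 (hedge ω).2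
    have := abs_le.1 (hosc ω _ one_one_mem_flagTriangle _ one_zero_mem_flagTriangle)
    exact max_lt (by linarith) (by linarith)
  let A : F.Height :=
    { toCornerMap := hq.cornerMap (fun x => min 1 (V x + 3 * μ)) b fun x => max (-1) (V x - 3 * μ)
      edge_lt_face := hface
      vertex_lt_edge := hvertex
      face_le_one _ := min_le_left _ _
      neg_one_le_vertex _ := le_max_left _ _
      eq_or_eq_of_edge_eq ω ω' h := hq.eq_or_eq_of_edge_midpoint_eq
        (hinj (mem_range_self ω) (mem_range_self ω') h) }
  exact ⟨A, fun _ => rfl, fun _ => rfl, fun ω => (hedge ω).1⟩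

lemma exists_height_near [Finite Φ] {V : X → ℝ} (hV : ∀ x, V x ∈ Icc (-1 : ℝ) 1) {μ : ℝ}
    (hμ : 0 < μ) (hμ₁ : μ ≤ 1) (hosc : ∀ ω, ∀ p ∈ flagTriangle, ∀ p' ∈ flagTriangle,
      |V (q ω p) - V (q ω p')| ≤ μ / 4) :
    ∃ A : F.Height, ∀ ω, ∀ p ∈ flagTriangle, |A.level ω p - V (q ω p)| ≤ 4 * μ ∧
      (A.face ω = 1 → 1 - 4 * μ ≤ V (q ω p)) ∧ (A.vertex ω = -1 → V (q ω p) ≤ -1 + 4 * μ) ∧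
      (A.face ω ≠ 1 → A.vertex ω ≠ -1 → |V (q ω p)| ≤ 1 - 2 * μ) := by
  obtain ⟨A, hface, hvertex, hedge⟩ := hq.exists_height_corners hV hμ hμ₁ hosc
  refine ⟨A, fun ω p hp => ?_⟩
  have hface_osc := abs_le.1 (hosc ω _ zero_zero_mem_flagTriangle _ hp)
  have hedge_osc := abs_le.1 (hosc ω _ one_zero_mem_flagTriangle _ hp)
  have hvertex_osc := abs_le.1 (hosc ω _ one_one_mem_flagTriangle _ hp)
  refine ⟨?_, fun h => ?_, fun h => ?_, fun h₁ h₂ => ?_⟩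
  · have hface_ge : V (q ω (0, 0)) ≤ A.face ω := hface ω ▸ le_min (hV _).2 (by linarith)
    have hface_le : A.face ω ≤ V (q ω (0, 0)) + 3 * μ := hface ω ▸ min_le_right _ _
    have hvertex_le : A.vertex ω ≤ V (q ω (1, 1)) := hvertex ω ▸ max_le (hV _).1 (by linarith)
    have hvertex_ge : V (q ω (1, 1)) - 3 * μ ≤ A.vertex ω := hvertex ω ▸ le_max_right _ _
    have hedge_near := abs_lt.1 (hedge ω)
    have hlevel : A.level ω p ∈ Icc (V (q ω p) - 4 * μ) (V (q ω p) + 4 * μ) :=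
      CornerMap.interp_mem (convex_Icc _ _) ⟨by linarith, by linarith⟩ ⟨by linarith, by linarith⟩
        ⟨by linarith, by linarith⟩ hp
    exact abs_sub_le_iff.2 ⟨by linarith [hlevel.2], by linarith [hlevel.1]⟩
  · have := min_eq_left_iff.1 ((hface ω).symm.trans h)
    linarith
  · have := max_eq_left_iff.1 ((hvertex ω).symm.trans h)
    linarith
  · rw [hface, Ne, min_eq_left_iff, not_le] at h₁
    rw [hvertex, Ne, max_eq_left_iff, not_le] at h₂
    exact abs_le.2 ⟨by linarith, by linarith⟩

lemma exists_transverse_cornerMap_near [Finite Φ] {E : Type*} [NormedAddCommGroup E]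
    [NormedSpace ℝ E] [FiniteDimensional ℝ E] (hE : 1 < Module.finrank ℝ E) {U : X → E} {ν : ℝ}
    (hν : 0 < ν) (hosc : ∀ ω, ∀ p ∈ flagTriangle, ∀ p' ∈ flagTriangle,
      dist (U (q ω p)) (U (q ω p')) ≤ ν) :
    ∃ Y : F.CornerMap E, ∀ ω,
      LinearIndependent ℝ ![Y.face ω, Y.edge ω] ∧ LinearIndependent ℝ ![Y.vertex ω, Y.edge ω] ∧
      ∀ p ∈ flagTriangle, dist (Y.interp ω p) (U (q ω p)) ≤ 2 * ν := by
  have : Nontrivial E := Module.nontrivial_of_finrank_pos (by lia : 0 < Module.finrank ℝ E)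
  have : ∀ x : E, (nhdsWithin x {x}ᶜ).NeBot := Module.punctured_nhds_neBot ℝ E
  choose a ha haU using fun x => (dense_compl_singleton (0 : E)).exists_dist_lt (U x) hν
  choose b hb hbU using fun x => (dense_setOf_linearIndependent_pair hE
    (z := fun i : Φ ⊕ Φ => i.elim (fun ω => a (q ω (0, 0))) fun ω => a (q ω (1, 1)))
    (by rintro (ω | ω) <;> exact ha _)).exists_dist_lt (U x) hν
  refine ⟨hq.cornerMap a b a, fun ω => ⟨hb _ (.inl ω), hb _ (.inr ω), fun p hp => ?_⟩⟩
  have hmem {y : E} {p' : ℝ × ℝ} (hp' : p' ∈ flagTriangle) (hy : dist (U (q ω p')) y < ν) :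
      y ∈ Metric.closedBall (U (q ω p)) (2 * ν) := by
    rw [Metric.mem_closedBall, dist_comm]
    linarith [dist_triangle (U (q ω p)) (U (q ω p')) y, hosc ω p hp p' hp']
  exact CornerMap.interp_mem (convex_closedBall _ _) (hmem zero_zero_mem_flagTriangle (haU _))
    (hmem one_zero_mem_flagTriangle (hbU _)) (hmem one_one_mem_flagTriangle (haU _)) hp

end IsParametrization

section VanishAtPoles

variable {E : Type*} [AddCommGroup E] [Module ℝ E]

open scoped Classical in
/-- Make the horizontal part of a map to the sphere vanish at the corners of height `±1`. -/
noncomputable def CornerMap.vanishAtPoles (Y : F.CornerMap E) (A : F.Height) : F.CornerMap E where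
  face ω := if A.face ω = 1 then 0 else Y.face ω
  edge := Y.edge
  vertex ω := if A.vertex ω = -1 then 0 else Y.vertex ω
  face_r₀ ω := by rw [A.face_r₀, Y.face_r₀]
  face_r₁ ω := by rw [A.face_r₁, Y.face_r₁]
  edge_r₀ := Y.edge_r₀
  edge_r₂ := Y.edge_r₂
  vertex_r₁ ω := by rw [A.vertex_r₁, Y.vertex_r₁]
  vertex_r₂ ω := by rw [A.vertex_r₂, Y.vertex_r₂]

variable {Y : F.CornerMap E} {A : F.Height} {ω : Φ} {p : ℝ × ℝ}

lemma interp_vanishAtPoles_of_ne (hface : A.face ω ≠ 1) (hvertex : A.vertex ω ≠ -1) :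
    (Y.vanishAtPoles A).interp ω p = Y.interp ω p := by
  simp [CornerMap.interp, CornerMap.vanishAtPoles, hface, hvertex]

lemma level_eq_one_of_interp_vanishAtPoles_eq_zero (hface : A.face ω = 1)
    (hvertex : A.vertex ω ≠ -1) (hY : LinearIndependent ℝ ![Y.vertex ω, Y.edge ω])
    (h : (Y.vanishAtPoles A).interp ω p = 0) : A.level ω p = 1 := by
  have hsum : p.2 • Y.vertex ω + (p.1 - p.2) • Y.edge ω = 0 := by
    simpa [CornerMap.interp, CornerMap.vanishAtPoles, hface, hvertex, add_comm] using h
  obtain ⟨h₂, h₁₂⟩ := LinearIndependent.pair_iff.1 hY _ _ hsum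
  simp [Height.level_eq, h₂, show p.1 = 0 by linarith, hface]

lemma level_eq_neg_one_of_interp_vanishAtPoles_eq_zero (hface : A.face ω ≠ 1)
    (hvertex : A.vertex ω = -1) (hY : LinearIndependent ℝ ![Y.face ω, Y.edge ω])
    (h : (Y.vanishAtPoles A).interp ω p = 0) : A.level ω p = -1 := by
  have hsum : (1 - p.1) • Y.face ω + (p.1 - p.2) • Y.edge ω = 0 := by
    simpa [CornerMap.interp, CornerMap.vanishAtPoles, hface, hvertex] using h
  obtain ⟨h₁, h₁₂⟩ := LinearIndependent.pair_iff.1 hY _ _ hsum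
  simp [Height.level_eq, show p.1 = 1 by linarith, show p.2 = 1 by linarith, hvertex]

lemma level_sq_eq_one_of_interp_vanishAtPoles_eq_zero
    (hface : LinearIndependent ℝ ![Y.face ω, Y.edge ω])
    (hvertex : LinearIndependent ℝ ![Y.vertex ω, Y.edge ω])
    (hpoles : A.face ω = 1 → A.vertex ω ≠ -1)
    (hne : A.face ω ≠ 1 → A.vertex ω ≠ -1 → Y.interp ω p ≠ 0)
    (h : (Y.vanishAtPoles A).interp ω p = 0) : A.level ω p ^ 2 = 1 := by
  by_cases hA : A.face ω = 1
  · rw [level_eq_one_of_interp_vanishAtPoles_eq_zero hA (hpoles hA) hvertex h, one_pow]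
  by_cases hA' : A.vertex ω = -1
  · rw [level_eq_neg_one_of_interp_vanishAtPoles_eq_zero hA hA' hface h, neg_one_sq]
  · exact absurd ((interp_vanishAtPoles_of_ne hA hA').symm.trans h) (hne hA hA')

end VanishAtPoles

lemma norm_smul_normalize_interp_vanishAtPoles_sub_le {E : Type*} [NormedAddCommGroup E]
    [NormedSpace ℝ E] {Y : F.CornerMap E} {A : F.Height} {ω : Φ} {p : ℝ × ℝ} {u : E} {R δ θ : ℝ}
    (hR : |R - ‖u‖| ≤ δ) (hY : ‖Y.interp ω p - u‖ ≤ θ)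
    (hpolar : A.face ω = 1 ∨ A.vertex ω = -1 → ‖u‖ ≤ δ) :
    ‖R • NormedSpace.normalize ((Y.vanishAtPoles A).interp ω p) - u‖ ≤ 3 * δ + 2 * θ := by
  have hδ := (abs_nonneg _).trans hR
  have hθ := (norm_nonneg _).trans hY
  by_cases hA : A.face ω = 1 ∨ A.vertex ω = -1
  · linarith [norm_smul_normalize_sub_le_of_norm_le (y := (Y.vanishAtPoles A).interp ω p) hR
      (hpolar hA)]
  · rw [not_or] at hA
    rw [interp_vanishAtPoles_of_ne hA.1 hA.2]
    linarith [norm_smul_normalize_sub_le hR hY]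

end FlagSystem

/-- The point of `ℝ³` with horizontal part `w` and height `c`. -/
noncomputable def cylPoint (w : ℂ) (c : ℝ) : EuclideanSpace ℝ (Fin 3) := !₂[w.re, w.im, c]

lemma cylPoint_re_im (x : EuclideanSpace ℝ (Fin 3)) : cylPoint ⟨x 0, x 1⟩ (x 2) = x := by
  ext i
  fin_cases i <;> simp [cylPoint]

lemma cylPoint_two (w : ℂ) (c : ℝ) : cylPoint w c 2 = c := by simp [cylPoint]

lemma cylPoint_sub (w w' : ℂ) (c c' : ℝ) :
    cylPoint w c - cylPoint w' c' = cylPoint (w - w') (c - c') := by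
  ext i
  fin_cases i <;> simp [cylPoint]

lemma norm_sq_cylPoint (w : ℂ) (c : ℝ) : ‖cylPoint w c‖ ^ 2 = ‖w‖ ^ 2 + c ^ 2 := by
  rw [EuclideanSpace.norm_sq_eq, Fin.sum_univ_three, Complex.sq_norm, Complex.normSq_apply]
  simp [cylPoint]
  ring

lemma norm_cylPoint_le (w : ℂ) (c : ℝ) : ‖cylPoint w c‖ ≤ ‖w‖ + |c| := by
  refine le_of_sq_le_sq ?_ (by positivity)
  rw [norm_sq_cylPoint]
  nlinarith [sq_abs c, mul_nonneg (norm_nonneg w) (abs_nonneg c)]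

lemma norm_le_norm_cylPoint (w : ℂ) (c : ℝ) : ‖w‖ ≤ ‖cylPoint w c‖ := by
  refine le_of_sq_le_sq ?_ (norm_nonneg _)
  rw [norm_sq_cylPoint]
  exact le_add_of_nonneg_right (sq_nonneg c)

lemma abs_le_norm_cylPoint (w : ℂ) (c : ℝ) : |c| ≤ ‖cylPoint w c‖ := by
  refine le_of_sq_le_sq ?_ (norm_nonneg _)
  rw [norm_sq_cylPoint, sq_abs]
  exact le_add_of_nonneg_left (sq_nonneg ‖w‖)

lemma continuous_cylPoint : Continuous fun x : ℂ × ℝ => cylPoint x.1 x.2 := by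
  refine (PiLp.continuous_toLp 2 _).comp (continuous_pi fun i => ?_)
  fin_cases i
  exacts [Complex.continuous_re.comp continuous_fst, Complex.continuous_im.comp continuous_fst,
    continuous_snd]

/-- The point of the unit sphere at the height `c` on the meridian of `y`. -/
noncomputable def meridianPoint (y : ℂ) (c : ℝ) : EuclideanSpace ℝ (Fin 3) :=
  cylPoint (√(1 - c ^ 2) • NormedSpace.normalize y) c

lemma norm_meridianPoint {y : ℂ} {c : ℝ} (hc : c ∈ Icc (-1 : ℝ) 1) (h : y = 0 → c ^ 2 = 1) :
    ‖meridianPoint y c‖ = 1 := by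
  have hc2 : c ^ 2 ≤ 1 := (sq_le_one_iff_abs_le_one c).2 (abs_le.2 hc)
  rw [← sq_eq_sq₀ (norm_nonneg _) zero_le_one, meridianPoint, norm_sq_cylPoint, norm_smul, mul_pow,
    Real.norm_eq_abs, sq_abs, Real.sq_sqrt (by linarith)]
  rcases eq_or_ne y 0 with h0 | h0
  · simp [h h0]
  · simp [NormedSpace.norm_normalize h0]

lemma continuousOn_meridianPoint {α : Type*} [TopologicalSpace α] {S : Set α} {y : α → ℂ}
    {c : α → ℝ} (hy : ContinuousOn y S) (hc : ContinuousOn c S)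
    (h : ∀ p ∈ S, y p = 0 → c p ^ 2 = 1) :
    ContinuousOn (fun p => meridianPoint (y p) (c p)) S := by
  refine continuous_cylPoint.comp_continuousOn
    ((continuousOn_smul_normalize (by fun_prop) hy fun p hp h0 => ?_).prodMk hc)
  rw [h p hp h0, sub_self, Real.sqrt_zero]

namespace FlagSystem

namespace IsParametrization

variable {Φ X : Type*} {F : FlagSystem Φ} {q : Φ → ℝ × ℝ → X} [TopologicalSpace X]
  (hq : F.IsParametrization q)

include hq

lemma exists_meridianPoint_near_cylPoint [Finite Φ] {U : X → ℂ} {V : X → ℝ}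
    (hUV : ∀ x, ‖U x‖ ^ 2 + V x ^ 2 = 1) {μ : ℝ} (hμ : 0 < μ) (hμ₁ : μ < 1 / 4)
    (hU : ∀ ω, ∀ p ∈ flagTriangle, ∀ p' ∈ flagTriangle, dist (U (q ω p)) (U (q ω p')) ≤ μ / 4)
    (hV : ∀ ω, ∀ p ∈ flagTriangle, ∀ p' ∈ flagTriangle, |V (q ω p) - V (q ω p')| ≤ μ / 4) :
    ∃ (A : F.Height) (Y : F.CornerMap ℂ), ∀ ω, ∀ p ∈ flagTriangle,
      (Y.interp ω p = 0 → A.level ω p ^ 2 = 1) ∧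
      ‖meridianPoint (Y.interp ω p) (A.level ω p) - cylPoint (U (q ω p)) (V (q ω p))‖ ≤
        3 * √(8 * μ) + 5 * μ := by
  have hV₁ (x) : V x ∈ Icc (-1 : ℝ) 1 :=
    abs_le_of_sq_le_sq' (by nlinarith [hUV x, sq_nonneg ‖U x‖]) zero_le_one
  obtain ⟨A, hA⟩ := hq.exists_height_near hV₁ hμ (by linarith) hV
  obtain ⟨Y, hY⟩ := hq.exists_transverse_cornerMap_near
    (by simp [Complex.finrank_real_complex]) (ν := μ / 4) (by positivity) hU
  refine ⟨A, Y.vanishAtPoles A, fun ω p hp => ?_⟩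
  obtain ⟨hlevel, hface, hvertex, hne⟩ := hA ω p hp
  obtain ⟨hface_edge, hvertex_edge, hYU⟩ := hY ω
  replace hYU := hYU p hp
  rw [dist_eq_norm] at hYU
  constructor
  · refine level_sq_eq_one_of_interp_vanishAtPoles_eq_zero hface_edge hvertex_edge
      (fun h h' => by linarith [hface h, hvertex h']) fun h h' h0 => ?_
    rw [h0, zero_sub, norm_neg] at hYU
    nlinarith [hUV (q ω p), sq_le_sq' (abs_le.1 (hne h h')).1 (abs_le.1 (hne h h')).2,
      norm_nonneg (U (q ω p))]
  · have hR := abs_sqrt_one_sub_sq_sub_le (norm_nonneg _) (hUV (q ω p)) (A.level_mem hp) hlevel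
    have hpolar (h : A.face ω = 1 ∨ A.vertex ω = -1) : ‖U (q ω p)‖ ≤ √(2 * (4 * μ)) := by
      refine Real.le_sqrt_of_sq_le ?_
      rcases h with h | h
      · nlinarith [hface h, hUV (q ω p), (hV₁ (q ω p)).2]
      · nlinarith [hvertex h, hUV (q ω p), (hV₁ (q ω p)).1]
    have hnorm := norm_smul_normalize_interp_vanishAtPoles_sub_le hR hYU hpolar
    rw [show 2 * (4 * μ) = 8 * μ by ring] at hnorm
    rw [meridianPoint, cylPoint_sub]
    linarith [norm_cylPoint_le (√(1 - A.level ω p ^ 2) •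
      NormedSpace.normalize ((Y.vanishAtPoles A).interp ω p) - U (q ω p))
      (A.level ω p - V (q ω p))]

end IsParametrization

end FlagSystem

/-! ### Embedding in a neighbourhood of the sphere -/

section Shell

variable {E : Type*} [NormedAddCommGroup E] [NormedSpace ℝ E] {k k' : E} {h h' : ℂ}

/-- The normal displacement in `E × ℝ`, by the radial component `h.re` and the vertical component
`h.im`, of the point `k` of the unit sphere of `E`. -/
def normalShift (k : E) (h : ℂ) : E × ℝ := ((1 + h.re) • k, h.im)

lemma continuous_normalShift : Continuous fun x : E × ℂ => normalShift x.1 x.2 := by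
  unfold normalShift
  fun_prop

lemma eq_and_eq_of_normalShift_eq (hk : ‖k‖ = 1) (hk' : ‖k'‖ = 1) (hh : ‖h‖ < 1) (hh' : ‖h'‖ < 1)
    (heq : normalShift k h = normalShift k' h') : k = k' ∧ h = h' := by
  have hpos {z : ℂ} (hz : ‖z‖ < 1) : 0 < 1 + z.re := by
    linarith [(abs_lt.1 ((Complex.abs_re_le_norm z).trans_lt hz)).1]
  obtain ⟨hsmul, him⟩ := Prod.ext_iff.1 heq
  replace hsmul : (1 + h.re) • k = (1 + h'.re) • k' := hsmul
  have hre : 1 + h.re = 1 + h'.re := by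
    simpa only [norm_smul, hk, hk', mul_one, Real.norm_of_nonneg (hpos hh).le,
      Real.norm_of_nonneg (hpos hh').le] using congrArg norm hsmul
  rw [hre] at hsmul
  exact ⟨smul_right_injective _ (hpos hh').ne' hsmul, Complex.ext (add_left_cancel hre) him⟩

lemma dist_normalShift_le (hk : ‖k‖ = 1) (v : E) :
    dist (normalShift k h) (v, 0) ≤ dist k v + ‖h‖ := by
  refine max_le ?_ ?_
  · calc dist ((1 + h.re) • k) v = ‖(k - v) + h.re • k‖ := by
          rw [dist_eq_norm, add_smul, one_smul, add_sub_right_comm]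
      _ ≤ ‖k - v‖ + |h.re| := (norm_add_le _ _).trans_eq (by rw [norm_smul, hk, mul_one]; rfl)
      _ ≤ dist k v + ‖h‖ := by
          rw [dist_eq_norm]
          gcongr
          exact Complex.abs_re_le_norm h
  · rw [Real.dist_eq, sub_zero]
    exact (Complex.abs_im_le_norm h).trans (le_add_of_nonneg_left dist_nonneg)

end Shell

lemma isCompact_flagTriangle : IsCompact flagTriangle := by
  refine (isCompact_Icc (a := ((0, 0) : ℝ × ℝ)) (b := (1, 1))).of_isClosed_subset ?_
    fun p hp => ⟨⟨hp.1.trans hp.2.1, hp.1⟩, ⟨hp.2.2, hp.2.1.trans hp.2.2⟩⟩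
  exact (isClosed_le continuous_const continuous_snd).inter
    ((isClosed_le continuous_snd continuous_fst).inter
      (isClosed_le continuous_fst continuous_const))

lemma exists_pos_forall_norm_smul_lt {ι α E : Type*} [Finite ι] [TopologicalSpace α]
    [NormedAddCommGroup E] [NormedSpace ℝ E] {S : Set α} (hS : IsCompact S) {H : ι → α → E}
    (hH : ∀ i, ContinuousOn (H i) S) {ρ : ℝ} (hρ : 0 < ρ) :
    ∃ η : ℝ, 0 < η ∧ ∀ i, ∀ p ∈ S, ‖η • H i p‖ < ρ := by
  choose C hC using fun i => hS.exists_bound_of_continuousOn (hH i)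
  obtain ⟨B, hB⟩ := (finite_range C).bddAbove
  have hη : 0 < ρ / (|B| + 1) := by positivity
  refine ⟨ρ / (|B| + 1), hη, fun i p hp => ?_⟩
  have hle : ‖H i p‖ < |B| + 1 :=
    ((hC i p hp).trans ((hB ⟨i, rfl⟩).trans (le_abs_self B))).trans_lt (lt_add_one _)
  rw [norm_smul, Real.norm_of_nonneg hη.le, div_mul_eq_mul_div, div_lt_iff₀ (by positivity)]
  exact mul_lt_mul_of_pos_left hle hρ

lemma exists_small_scale {ε : ℝ} (hε : 0 < ε) :
    ∃ μ : ℝ, 0 < μ ∧ μ < 1 / 4 ∧ 3 * √(8 * μ) + 5 * μ < ε := by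
  have hc : Continuous fun μ : ℝ => 3 * √(8 * μ) + 5 * μ := by fun_prop
  have hsmall : ∀ᶠ μ in nhdsWithin (0 : ℝ) (Ioi 0), 3 * √(8 * μ) + 5 * μ < ε :=
    ((hc.tendsto' 0 0 (by simp)).eventually_lt_const hε).filter_mono nhdsWithin_le_nhds
  obtain ⟨μ, hμε, hμ, hμ₁⟩ := (hsmall.and (Ioo_mem_nhdsGT (by norm_num : (0 : ℝ) < 1 / 4))).exists
  exact ⟨μ, hμ, hμ₁, hμε⟩

namespace FlagSystem.IsParametrization

variable {Φ X Z : Type*} {F : FlagSystem Φ} {q : Φ → ℝ × ℝ → X} [Finite Φ] [TopologicalSpace X]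
  (hq : F.IsParametrization q)

include hq

lemma compactSpace : CompactSpace X := by
  refine ⟨(isCompact_iUnion fun ω =>
    isCompact_flagTriangle.image_of_continuousOn (hq.continuousOn ω)).of_isClosed_subset
      isClosed_univ fun x _ => ?_⟩
  obtain ⟨ω, p, hp, hx⟩ := hq.exists_eq x
  exact mem_iUnion.2 ⟨ω, p, hp, hx⟩

lemma exists_continuous_injective [T2Space X] [TopologicalSpace Z] {G : Φ → ℝ × ℝ → Z}
    (hG : ∀ ω, ContinuousOn (G ω) flagTriangle)
    (hqG : ∀ ω ω', ∀ p ∈ flagTriangle, ∀ p' ∈ flagTriangle, q ω p = q ω' p' ↔ G ω p = G ω' p') :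
    ∃ g : X → Z, Continuous g ∧ Injective g ∧ ∀ ω, ∀ p ∈ flagTriangle, g (q ω p) = G ω p := by
  let _ : TopologicalSpace Φ := ⊥
  have : DiscreteTopology Φ := ⟨rfl⟩
  have : CompactSpace flagTriangle := isCompact_iff_compactSpace.1 isCompact_flagTriangle
  let Q : Φ × flagTriangle → X := fun x => q x.1 x.2
  have hQc : Continuous Q := continuous_prod_of_discrete_left.2 fun ω =>
    (hq.continuousOn ω).domRestrict
  have hQs : Surjective Q := fun x => by
    obtain ⟨ω, p, hp, h⟩ := hq.exists_eq x
    exact ⟨(ω, ⟨p, hp⟩), h⟩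
  have hQ : Topology.IsQuotientMap Q := hQc.isClosedMap.isQuotientMap hQc hQs
  have hGc : Continuous fun x : Φ × flagTriangle => G x.1 x.2 :=
    continuous_prod_of_discrete_left.2 fun ω => (hG ω).domRestrict
  let g : X → Z := fun x => G (surjInv hQs x).1 (surjInv hQs x).2
  have hg (x) : g (Q x) = G x.1 x.2 :=
    (hqG _ _ _ (Subtype.prop _) _ x.2.2).1 (surjInv_eq hQs (Q x))
  refine ⟨g, hQ.continuous_iff.2 (hGc.congr fun x => (hg x).symm), fun x y h => ?_,
    fun ω p hp => hg (ω, ⟨p, hp⟩)⟩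
  obtain ⟨a, rfl⟩ := hQs x
  obtain ⟨b, rfl⟩ := hQs y
  rw [hg, hg] at h
  exact (hqG _ _ _ a.2.2 _ b.2.2).2 h

variable {f : X → EuclideanSpace ℝ (Fin 3)} {μ : ℝ}

lemma exists_height_lift (hf : ∀ x, ‖f x‖ = 1) (hμ : 0 < μ) (hμ₁ : μ < 1 / 4)
    (hosc : ∀ ω, ∀ p ∈ flagTriangle, ∀ p' ∈ flagTriangle, dist (f (q ω p)) (f (q ω p')) ≤ μ / 4) :
    ∃ (A : F.Height) (K : Φ → ℝ × ℝ → EuclideanSpace ℝ (Fin 3)),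
      (∀ ω, ContinuousOn (K ω) flagTriangle) ∧
      (∀ ω ω' p, F.Step (ω, p) (ω', p) → K ω p = K ω' p) ∧
      ∀ ω, ∀ p ∈ flagTriangle, ‖K ω p‖ = 1 ∧ K ω p 2 = A.level ω p ∧
        dist (K ω p) (f (q ω p)) ≤ 3 * √(8 * μ) + 5 * μ := by
  let U (x : X) : ℂ := ⟨f x 0, f x 1⟩
  let V (x : X) : ℝ := f x 2
  have hUV (x) : cylPoint (U x) (V x) = f x := cylPoint_re_im _
  have hdist : ∀ ω, ∀ p ∈ flagTriangle, ∀ p' ∈ flagTriangle,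
      ‖cylPoint (U (q ω p) - U (q ω p')) (V (q ω p) - V (q ω p'))‖ ≤ μ / 4 :=
    fun ω p hp p' hp' => by
      rw [← cylPoint_sub, hUV, hUV, ← dist_eq_norm]
      exact hosc ω p hp p' hp'
  obtain ⟨A, Y, hAY⟩ := hq.exists_meridianPoint_near_cylPoint (U := U) (V := V)
    (fun x => by rw [← norm_sq_cylPoint, hUV, hf, one_pow]) hμ hμ₁
    (fun ω p hp p' hp' =>
      (dist_eq_norm _ _).trans_le ((norm_le_norm_cylPoint _ _).trans (hdist ω p hp p' hp')))
    (fun ω p hp p' hp' => (abs_le_norm_cylPoint _ _).trans (hdist ω p hp p' hp'))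
  refine ⟨A, fun ω p => meridianPoint (Y.interp ω p) (A.level ω p), fun ω => ?_,
    fun ω ω' p h => ?_, fun ω p hp => ⟨?_, cylPoint_two _ _, ?_⟩⟩
  · exact continuousOn_meridianPoint Y.continuous_interp.continuousOn
      A.continuous_level.continuousOn fun p hp => (hAY ω p hp).1
  · have hlevel : A.level ω' p = A.level ω p := A.level_eq_of_step h
    have hinterp : Y.interp ω' p = Y.interp ω p := CornerMap.interp_eq_of_step h
    simp only [hlevel, hinterp]
  · exact norm_meridianPoint (A.level_mem hp) (hAY ω p hp).1
  · rw [← hUV, dist_eq_norm]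
    exact (hAY ω p hp).2

lemma exists_embedding_near [T2Space X] (hf : ∀ x, ‖f x‖ = 1) (hμ : 0 < μ) (hμ₁ : μ < 1 / 4)
    (hosc : ∀ ω, ∀ p ∈ flagTriangle, ∀ p' ∈ flagTriangle, dist (f (q ω p)) (f (q ω p')) ≤ μ / 4)
    {ρ : ℝ} (hρ : 0 < ρ) :
    ∃ g : X → EuclideanSpace ℝ (Fin 3) × ℝ, Continuous g ∧ Injective g ∧
      ∀ x, dist (g x) (f x, 0) < 3 * √(8 * μ) + 5 * μ + ρ := by
  obtain ⟨A, K, hKc, hKstep, hK⟩ := hq.exists_height_lift hf hμ hμ₁ hosc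
  obtain ⟨H, hHc, hHstep, hHker⟩ := A.exists_levelwise_embedding
  obtain ⟨η, hη, hηH⟩ := exists_pos_forall_norm_smul_lt isCompact_flagTriangle hHc
    (lt_min one_pos hρ)
  let G (ω : Φ) (p : ℝ × ℝ) := normalShift (K ω p) (η • H ω p)
  have hGc (ω) : ContinuousOn (G ω) flagTriangle :=
    continuous_normalShift.comp_continuousOn ((hKc ω).prodMk ((hHc ω).const_smul η))
  have hGstep (ω ω') (p) (hp : p ∈ flagTriangle) (h : F.Step (ω, p) (ω', p)) : G ω p = G ω' p := by
    simp only [G, hKstep ω ω' p h, hHstep ω ω' p hp h]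
  have hGker (ω ω') (p) (hp : p ∈ flagTriangle) (p') (hp' : p' ∈ flagTriangle)
      (h : G ω p = G ω' p') : EqvGen F.Step (ω, p) (ω', p') := by
    obtain ⟨hKeq, hHeq⟩ := eq_and_eq_of_normalShift_eq (hK ω p hp).1 (hK ω' p' hp').1
      ((hηH ω p hp).trans_le (min_le_left _ _)) ((hηH ω' p' hp').trans_le (min_le_left _ _)) h
    refine hHker ω ω' p hp p' hp' ?_ (smul_right_injective _ hη.ne' hHeq)
    rw [← (hK ω p hp).2.1, ← (hK ω' p' hp').2.1, hKeq]
  obtain ⟨g, hg, hginj, hgG⟩ := hq.exists_continuous_injective hGc fun ω ω' p hp p' hp' =>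
    (hq.eq_iff ω ω' p hp p' hp').trans
      ⟨fun h => eq_of_eqvGen_step hGstep h hp, hGker ω ω' p hp p' hp'⟩
  refine ⟨g, hg, hginj, fun x => ?_⟩
  obtain ⟨ω, p, hp, rfl⟩ := hq.exists_eq x
  rw [hgG ω p hp]
  exact (dist_normalShift_le (hK ω p hp).1 _).trans_lt
    (add_lt_add_of_le_of_lt (hK ω p hp).2.2 ((hηH ω p hp).trans_le (min_le_right _ _)))

end FlagSystem.IsParametrization

/-- The space `X` is cut into flags of arbitrarily small diameter by finite flag systems, as
is every closed oriented surface. -/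
def HasFineFlagParametrizations (X : Type*) [PseudoMetricSpace X] : Prop :=
  ∀ δ > 0, ∃ (Φ : Type) (_ : Finite Φ) (F : FlagSystem Φ) (q : Φ → ℝ × ℝ → X),
    F.IsParametrization q ∧
      ∀ ω, ∀ p ∈ flagTriangle, ∀ p' ∈ flagTriangle, dist (q ω p) (q ω p') < δ

lemma hasFineFlagParametrizations_sphere :
    HasFineFlagParametrizations (Metric.sphere (0 : EuclideanSpace ℝ (Fin 3)) 1) := by
  intro δ hδ
  obtain ⟨m, hm, hmesh⟩ := exists_dist_gridPoint_lt hδ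
  refine ⟨GridFlag m, inferInstance, gridFlagSystem m, gridPoint,
    FlagSystem.isParametrization_of_step (fun ω => ?_) (exists_gridPoint_eq hm)
      (fun ω ω' p hp h => (gridPoint_eq_of_step hp h).symm)
      fun ω ω' p hp p' hp' h => eqvGen_gridStep_of_gridPoint_eq hp hp' h, hmesh⟩
  exact ((continuous_spherePillow).comp continuous_gridSquare).continuousOn

theorem selfmap_two_sphere_realizable_general {X : Type*} [MetricSpace X]
    (hX : HasFineFlagParametrizations X)
    {f : X → Metric.sphere (0 : EuclideanSpace ℝ (Fin 3)) 1} (hf : Continuous f) {ε : ℝ}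
    (hε : 0 < ε) :
    ∃ g : X → EuclideanSpace ℝ (Fin 3) × ℝ, Continuous g ∧ Injective g ∧
      ∀ x, dist (g x) ((f x : EuclideanSpace ℝ (Fin 3)), (0 : ℝ)) < ε := by
  have : CompactSpace X := by
    obtain ⟨Φ, _, F, q, hq, -⟩ := hX 1 one_pos
    exact hq.compactSpace
  obtain ⟨μ, hμ, hμ₁, hμε⟩ := exists_small_scale (half_pos hε)
  obtain ⟨δ, hδ, hfδ⟩ := Metric.uniformContinuous_iff.1
    (CompactSpace.uniformContinuous_of_continuous hf) (μ / 4) (by positivity)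
  obtain ⟨Φ, _, F, q, hq, hmesh⟩ := hX δ hδ
  obtain ⟨g, hg, hginj, hgf⟩ := hq.exists_embedding_near (f := fun x => (f x : _))
    (fun x => mem_sphere_zero_iff_norm.1 (f x).2) hμ hμ₁
    (fun ω p hp p' hp' => (hfδ (hmesh ω p hp p' hp')).le) (half_pos hε)
  exact ⟨g, hg, hginj, fun x => (hgf x).trans (by linarith)⟩

/-- Yamamoto–Akhmetiev, M = S²: every continuous self-map of S² is realizable
in ℝ⁴: its composition with the standard inclusion S² ⊂ ℝ³ × ℝ is approximable by
(topological) embeddings. -/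
theorem selfmap_two_sphere_realizable
    (f : Metric.sphere (0 : EuclideanSpace ℝ (Fin 3)) 1 →
         Metric.sphere (0 : EuclideanSpace ℝ (Fin 3)) 1)
    (hf : Continuous f) (ε : ℝ) (hε : 0 < ε) :
    ∃ g : Metric.sphere (0 : EuclideanSpace ℝ (Fin 3)) 1 → EuclideanSpace ℝ (Fin 3) × ℝ,
      Continuous g ∧ Function.Injective g ∧
      ∀ x, dist (g x) (((f x : EuclideanSpace ℝ (Fin 3)), (0 : ℝ))) < ε :=
  selfmap_two_sphere_realizable_general hasFineFlagParametrizations_sphere hf hε
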